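/- arXiv:1106.4714 — 3 statements merged into one kernel-verified Lean document; each statement's English description precedes it below -/
import Mathlib

section
/- Suppose c > (q−1)² and β > −ln(1 − q/(1+√c)). Then the quenched pressure is strictly less than the annealed pressure in the thermodynamic limit: p(β,c) = lim_{N→∞} p_N(β,c) < 𝒫(β,c). -/
open MeasureTheory Filter

/-- Poisson probability mass function with parameter `lam`. -/
noncomputable def poissonPMF (lam : ℝ) (k : ℕ) : ℝ :=
  Real.exp (-lam) * lam ^ k / (Nat.factorial k)

/-- Potts Hamiltonian `H_N(σ, J) = Σ_{i,j} J_{ij} δ(σ_i, σ_j)`. -/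
noncomputable def potts.H (q N : ℕ) (σ : Fin N → Fin q) (J : Fin N → Fin N → ℝ) : ℝ :=
  ∑ i, ∑ j, J i j * (if σ i = σ j then (1 : ℝ) else 0)

/-- Partition function `Z_N(J)`. -/
noncomputable def potts.Z (q N : ℕ) (J : Fin N → Fin N → ℝ) : ℝ :=
  ∑ σ : Fin N → Fin q, Real.exp (- potts.H q N σ J)

/-- Expectation over the Poissonian disorder: the entries `J_{ij}` are independent
Poisson random variables with means `c_{ij} / (2N)`. -/
noncomputable def potts.E (N : ℕ) (c : Fin N → Fin N → ℝ)
    (g : (Fin N → Fin N → ℕ) → ℝ) : ℝ :=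
  ∑' J : Fin N → Fin N → ℕ,
    (∏ i, ∏ j, poissonPMF (c i j / (2 * N)) (J i j)) * g J

/-- Quenched pressure for a general nonnegative connectivity matrix `c`. -/
noncomputable def potts.pmat (q N : ℕ) (β : ℝ) (c : Fin N → Fin N → ℝ) : ℝ :=
  potts.E N c (fun J => (1 / N) * Real.log (potts.Z q N (fun i j => β * (J i j : ℝ))))

/-- Quenched pressure for the constant connectivity matrix `c_{ij} ≡ c`. -/
noncomputable def potts.p (q N : ℕ) (β c : ℝ) : ℝ :=
  potts.pmat q N β (fun _ _ => c)

/-- Annealed pressure `𝒫(β, c) = ln q + (c/2) ln(1 - (1 - e^{-β})/q)`. -/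
noncomputable def potts.annealed (q : ℕ) (β c : ℝ) : ℝ :=
  Real.log q + (c / 2) * Real.log (1 - (1 - Real.exp (-β)) / q)

/-!
Let `x = exp (-β)`. Raising the mean of one Poisson multiplicity changes the expected logarithm of
the partition function at the rate `𝔼 log ⟨ψ⟩`, where `⟨ψ⟩` is the Gibbs average of the weight of
the added edge. In the Potts model `⟨ψ⟩ = 1 - (1 - x) R`, with `R` the probability that the two
ends have equal colours, an inner product of the colour laws of the ends. Expanding the logarithm
and applying the Schur product theorem to the powers of `R`, the kernel `log (1 - (1 - x) R)` is
negative semidefinite. Testing it against charges on the vertices has two consequences: the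
unnormalized pressure is superadditive in `N`, so the limit exists; and it is at most `N` times a
replica-symmetric functional, in which the neighbours of a vertex are replaced by independent
colours with the laws `(1 ± g) / q`, for any `g` with `∑ s, g s = 0` and `|g s| ≤ 1`.

At `g = 0` the functional is the annealed pressure. At `ε • g` it differs from it by a term of order
`ε ^ 4` with the sign of `1 - c * κ ^ 2`, where `κ = (1 - x) / (q - (1 - x))`. The threshold on `β`
is exactly the condition `c * κ ^ 2 > 1`.
-/

namespace DilutePotts

open ProbabilityTheory (poissonMeasure)
open scoped NNReal Nat

section PoissonField

variable {E E' : Type*} [Fintype E] [Fintype E']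

/-- The law of a family of independent Poisson variables with means `l e`. It models the random
multiplicities of the edges `e : E` of a dilute interaction. -/
noncomputable def poissonField (l : E → ℝ≥0) : Measure (E → ℕ) :=
  Measure.pi fun e => poissonMeasure (l e)

instance (l : E → ℝ≥0) : IsProbabilityMeasure (poissonField l) := by
  unfold poissonField; infer_instance

lemma poissonField_real_singleton (l : E → ℝ≥0) (J : E → ℕ) :
    (poissonField l).real {J} = ∏ e, Real.exp (-l e) * (l e : ℝ) ^ J e / (J e)! := by
  rw [poissonField, measureReal_def, Measure.pi_singleton, ENNReal.toReal_prod]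
  exact Finset.prod_congr rfl fun e _ => ProbabilityTheory.poissonMeasure_real_singleton _ _

lemma hasSum_integral_poissonField {l : E → ℝ≥0} {g : (E → ℕ) → ℝ}
    (hg : Integrable g (poissonField l)) :
    HasSum (fun J => (poissonField l).real {J} * g J) (∫ J, g J ∂poissonField l) := by
  have hdirac := Measure.sum_smul_dirac (poissonField l)
  rw [← hdirac] at hg
  have hsum := hasSum_integral_measure hg
  rw [hdirac] at hsum
  simpa [measureReal_def] using hsum

lemma measurePreserving_eval_poissonField (l : E → ℝ≥0) (e : E) :
    MeasurePreserving (Function.eval e) (poissonField l) (poissonMeasure (l e)) :=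
  measurePreserving_eval (fun e => poissonMeasure (l e)) e

lemma measurePreserving_comp_poissonField (l : E → ℝ≥0) {f : E' → E} (hf : f.Injective) :
    MeasurePreserving (fun J => J ∘ f) (poissonField l) (poissonField (l ∘ f)) := by
  refine ⟨.of_discrete, ?_⟩
  have hindep : ProbabilityTheory.iIndepFun (fun (e : E) (J : E → ℕ) => J e) (poissonField l) :=
    ProbabilityTheory.iIndepFun_pi (X := fun _ => id) fun _ => aemeasurable_id
  have hmap := (hindep.precomp hf).map_fun_eq_pi_map fun _ => (measurable_pi_apply _).aemeasurable
  exact hmap.trans <| congrArg Measure.pi <| funext fun e =>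
    (measurePreserving_eval_poissonField l (f e)).map_eq

lemma integral_comp_poissonField (l : E → ℝ≥0) {f : E' → E} (hf : f.Injective)
    (g : (E' → ℕ) → ℝ) :
    ∫ J, g (J ∘ f) ∂poissonField l = ∫ J, g J ∂poissonField (l ∘ f) := by
  rw [← (measurePreserving_comp_poissonField l hf).map_eq,
    integral_map Measurable.of_discrete.aemeasurable Measurable.of_discrete.aestronglyMeasurable]

lemma integrable_comp_poissonField {l : E → ℝ≥0} {f : E' → E} (hf : f.Injective)
    {g : (E' → ℕ) → ℝ} (hg : Integrable g (poissonField (l ∘ f))) :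
    Integrable (fun J => g (J ∘ f)) (poissonField l) :=
  (measurePreserving_comp_poissonField l hf).integrable_comp_of_integrable hg

lemma ae_poissonField_eq_zero {l : E → ℝ≥0} {e : E} (he : l e = 0) :
    ∀ᵐ J ∂poissonField l, J e = 0 := by
  have hzero : ∀ᵐ n ∂poissonMeasure (l e), n = 0 := by
    rw [he, ae_iff_of_countable]
    intro n hn
    by_contra h0
    simp [ProbabilityTheory.poissonMeasure_singleton, h0] at hn
  exact (measurePreserving_eval_poissonField l e).quasiMeasurePreserving.ae hzero

lemma hasSum_poisson_mul_pow (r a : ℝ) :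
    HasSum (fun n : ℕ => Real.exp (-r) * r ^ n / n ! * a ^ n) (Real.exp (r * (a - 1))) := by
  have hexp := (NormedSpace.expSeries_div_hasSum_exp (r * a)).mul_left (Real.exp (-r))
  rw [← Real.exp_eq_exp_ℝ, ← Real.exp_add, show -r + r * a = r * (a - 1) by ring] at hexp
  exact hexp.congr_fun fun n => by rw [mul_pow]; ring

lemma integrable_pow_poissonMeasure (r : ℝ≥0) (a : ℝ) :
    Integrable (fun n => a ^ n) (poissonMeasure r) := by
  rw [ProbabilityTheory.integrable_poissonMeasure_iff]
  exact (hasSum_poisson_mul_pow r |a|).summable.congr fun n => by rw [norm_pow, Real.norm_eq_abs]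

lemma integrable_prod_pow_poissonField (l : E → ℝ≥0) (a : E → ℝ) :
    Integrable (fun J => ∏ e, a e ^ J e) (poissonField l) :=
  Integrable.fintype_prod_dep fun e => integrable_pow_poissonMeasure (l e) (a e)

lemma integral_prod_pow_poissonField (l : E → ℝ≥0) (a : E → ℝ) :
    ∫ J, ∏ e, a e ^ J e ∂poissonField l = Real.exp (∑ e, l e * (a e - 1)) := by
  rw [poissonField, integral_fintype_prod_eq_prod (fun e n => a e ^ n), Real.exp_sum]
  refine Finset.prod_congr rfl fun e _ => ?_
  rw [ProbabilityTheory.integral_poissonMeasure]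
  exact (hasSum_poisson_mul_pow (l e) (a e)).tsum_eq

end PoissonField

section Comparison

variable {E : Type*}

lemma hasSum_poisson_natCast_mul_pow_pred (L : ℝ) :
    HasSum (fun K : ℕ => Real.exp (-L) / K ! * (K * L ^ (K - 1))) 1 := by
  have hexp := hasSum_poisson_mul_pow L 1
  rw [sub_self, mul_zero, Real.exp_zero] at hexp
  rw [← hasSum_nat_add_iff' 1]
  simp only [Finset.range_one, Finset.sum_singleton, Nat.cast_zero, zero_mul, mul_zero, sub_zero]
  refine hexp.congr_fun fun n => ?_
  rw [Nat.factorial_succ, Nat.add_sub_cancel, one_pow, mul_one]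
  push_cast
  field_simp

lemma add_single_some_comp_some [DecidableEq E] (J : Option E → ℕ) (e : E) :
    (J + Pi.single (some e) 1) ∘ some = J ∘ some + Pi.single e 1 := by
  funext e'
  simp [Pi.single_apply]

lemma add_single_none_comp_some [DecidableEq E] (J : Option E → ℕ) :
    (J + Pi.single none 1) ∘ some = J ∘ some := by
  funext e'
  simp

/-- The linear functional on polynomials sending the monomial `∏ e, X e ^ J e` to `g J`. It turns
`arrival l` into multiplication by the linear form `∑ e, l e * X e`. -/
noncomputable def umbral (g : (E → ℕ) → ℝ) : MvPolynomial E ℝ →ₗ[ℝ] ℝ :=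
  (MvPolynomial.basisMonomials E ℝ).constr ℝ fun m => g m

lemma umbral_monomial (g : (E → ℕ) → ℝ) (m : E →₀ ℕ) (a : ℝ) :
    umbral g (MvPolynomial.monomial m a) = a * g m := by
  have hbasis : umbral g (MvPolynomial.monomial m 1) = g m := by
    simpa only [umbral, MvPolynomial.coe_basisMonomials] using
      (MvPolynomial.basisMonomials E ℝ).constr_basis ℝ (fun m => g m) m
  rw [← mul_one a, ← smul_eq_mul, ← MvPolynomial.smul_monomial, map_smul, hbasis, smul_eq_mul,
    smul_eq_mul, mul_one]

variable [Fintype E]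

lemma poissonField_real_singleton_eq_multinomial (l : E → ℝ≥0) (J : E → ℕ) :
    (poissonField l).real {J} = Real.exp (-∑ e, l e) / (∑ e, J e)! *
      (Nat.multinomial Finset.univ J * ∏ e, (l e : ℝ) ^ J e) := by
  have hspec : (∏ e, ((J e)! : ℝ)) * Nat.multinomial Finset.univ J = (∑ e, J e)! := by
    exact_mod_cast Nat.multinomial_spec Finset.univ J
  have hmul : (Nat.multinomial Finset.univ J : ℝ) ≠ 0 := by
    exact_mod_cast (Nat.multinomial_pos _ _).ne'
  rw [poissonField_real_singleton, Finset.prod_div_distrib, Finset.prod_mul_distrib,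
    ← Real.exp_sum, Finset.sum_neg_distrib, ← hspec]
  push_cast
  field_simp

variable [DecidableEq E]

/-- The operator adding one random point to `J`: a point arrives at `e` with rate `l e`. Its
exponential series, evaluated at `0` and divided by `exp (∑ e, l e)`, is the expectation under
`poissonField l`. -/
noncomputable def arrival (l : E → ℝ) (g : (E → ℕ) → ℝ) (J : E → ℕ) : ℝ :=
  ∑ e, l e * g (J + Pi.single e 1)

lemma umbral_linear_mul (l : E → ℝ) (g : (E → ℕ) → ℝ) (p : MvPolynomial E ℝ) :
    umbral g ((∑ e, MvPolynomial.C (l e) * MvPolynomial.X e) * p) = umbral (arrival l g) p := by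
  induction p using MvPolynomial.induction_on' with
  | monomial m a =>
    rw [Finset.sum_mul, map_sum, umbral_monomial, arrival, Finset.mul_sum]
    refine Finset.sum_congr rfl fun e _ => ?_
    rw [MvPolynomial.X, MvPolynomial.C_mul_monomial, MvPolynomial.monomial_mul, umbral_monomial,
      Finsupp.coe_add, Finsupp.single_eq_pi_single, add_comm]
    ring
  | add p p' ihp ihp' => rw [mul_add, map_add, ihp, ihp', map_add]

lemma umbral_linear_pow (l : E → ℝ) (g : (E → ℕ) → ℝ) (K : ℕ) :
    umbral g ((∑ e, MvPolynomial.C (l e) * MvPolynomial.X e) ^ K) = (arrival l)^[K] g 0 := by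
  induction K generalizing g with
  | zero =>
    rw [pow_zero, ← MvPolynomial.C_1, ← MvPolynomial.monomial_zero', umbral_monomial, one_mul]
    rfl
  | succ K ih => rw [pow_succ', umbral_linear_mul, ih, Function.iterate_succ_apply]

lemma iterate_arrival_apply_zero (l : E → ℝ) (g : (E → ℕ) → ℝ) (K : ℕ) :
    (arrival l)^[K] g 0 = ∑ J ∈ Finset.piAntidiag Finset.univ K,
      (Nat.multinomial Finset.univ J : ℝ) * (∏ e, l e ^ J e) * g J := by
  rw [← umbral_linear_pow, Finset.sum_pow_eq_sum_piAntidiag, map_sum]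
  refine Finset.sum_congr rfl fun J _ => ?_
  have hmonomial : (Nat.multinomial Finset.univ J : MvPolynomial E ℝ) *
      ∏ e, (MvPolynomial.C (l e) * MvPolynomial.X e) ^ J e =
      MvPolynomial.monomial (Finsupp.equivFunOnFinite.symm J)
        ((Nat.multinomial Finset.univ J : ℝ) * ∏ e, l e ^ J e) := by
    rw [MvPolynomial.monomial_eq, map_mul, map_prod, map_natCast,
      Finsupp.prod_fintype _ _ fun _ => pow_zero _]
    simp only [mul_pow, Finset.prod_mul_distrib, map_pow, mul_assoc,
      Finsupp.coe_equivFunOnFinite_symm]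
  rw [hmonomial, umbral_monomial, Finsupp.coe_equivFunOnFinite_symm]

lemma hasSum_iterate_arrival {l : E → ℝ≥0} {g : (E → ℕ) → ℝ}
    (hg : Integrable g (poissonField l)) :
    HasSum (fun K : ℕ => Real.exp (-∑ e, l e) / K ! * (arrival (fun e => l e))^[K] g 0)
      (∫ J, g J ∂poissonField l) := by
  have hfiber := (hasSum_integral_poissonField hg).tsum_fiberwise fun J : E → ℕ => ∑ e, J e
  refine hfiber.congr_fun fun K => ?_
  have hset : (fun J : E → ℕ => ∑ e, J e) ⁻¹' {K} =
      (Finset.piAntidiag (Finset.univ : Finset E) K : Set (E → ℕ)) := by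
    ext J; simp
  rw [hset, Finset.tsum_subtype' (Finset.piAntidiag (Finset.univ : Finset E) K)
    (fun J => (poissonField l).real {J} * g J), iterate_arrival_apply_zero, Finset.mul_sum]
  refine Finset.sum_congr rfl fun J hJ => ?_
  obtain rfl : ∑ e, J e = K := (Finset.mem_piAntidiag.1 hJ).1
  rw [poissonField_real_singleton_eq_multinomial]
  ring

lemma arrival_le_add {l : E → ℝ} (hl : 0 ≤ l) {g h : (E → ℕ) → ℝ} {C : ℝ}
    (hgh : ∀ J, g J ≤ h J + C) (J : E → ℕ) : arrival l g J ≤ arrival l h J + C * ∑ e, l e := by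
  unfold arrival
  rw [Finset.mul_sum, ← Finset.sum_add_distrib]
  refine Finset.sum_le_sum fun e _ => ?_
  linarith [mul_le_mul_of_nonneg_left (hgh (J + Pi.single e 1)) (hl e)]

lemma iterate_arrival_le_add {l : E → ℝ} (hl : 0 ≤ l) {g h : (E → ℕ) → ℝ} {C : ℝ}
    (hgh : ∀ J, g J ≤ h J + C) (K : ℕ) (J : E → ℕ) :
    (arrival l)^[K] g J ≤ (arrival l)^[K] h J + C * (∑ e, l e) ^ K := by
  induction K generalizing J with
  | zero => simpa using hgh J
  | succ K ih =>
    rw [Function.iterate_succ_apply', Function.iterate_succ_apply', pow_succ, ← mul_assoc]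
    exact arrival_le_add hl ih J

lemma arrival_commute (l l' : E → ℝ) : Function.Commute (arrival l) (arrival l') := by
  intro g
  funext J
  simp only [arrival, Finset.mul_sum]
  rw [Finset.sum_comm]
  refine Finset.sum_congr rfl fun e _ => Finset.sum_congr rfl fun e' _ => ?_
  rw [add_right_comm, mul_left_comm]

lemma iterate_arrival_compare {l l' : E → ℝ} (hl : 0 ≤ l) (hl' : 0 ≤ l')
    (hsum : ∑ e, l' e = ∑ e, l e) {g : (E → ℕ) → ℝ} {C : ℝ}
    (hg : ∀ J, arrival l' g J ≤ arrival l g J + C) (K : ℕ) (J : E → ℕ) :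
    (arrival l')^[K] g J ≤ (arrival l)^[K] g J + C * (K * (∑ e, l e) ^ (K - 1)) := by
  induction K generalizing J with
  | zero => simp
  | succ K ih =>
    have hlast := arrival_le_add hl' ih J
    have hswap := iterate_arrival_le_add hl hg K J
    rw [(arrival_commute l l').iterate_left K g, ← Function.iterate_succ_apply (arrival l)] at hswap
    have hpow : (K : ℝ) * (∑ e, l e) ^ (K - 1) * (∑ e, l e) = K * (∑ e, l e) ^ K := by
      cases K with
      | zero => simp
      | succ K => rw [Nat.add_sub_cancel, mul_assoc, ← pow_succ]
    rw [hsum, mul_assoc C, hpow] at hlast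
    rw [Function.iterate_succ_apply', Nat.add_sub_cancel]
    push_cast
    linarith

lemma integral_poissonField_le_of_arrival_le {l l' : E → ℝ≥0}
    (hsum : ∑ e, l' e = ∑ e, l e) {g : (E → ℕ) → ℝ}
    (hg : Integrable g (poissonField l)) (hg' : Integrable g (poissonField l')) {C : ℝ}
    (harrival : ∀ J, arrival (fun e => l' e) g J ≤ arrival (fun e => l e) g J + C) :
    ∫ J, g J ∂poissonField l' ≤ ∫ J, g J ∂poissonField l + C := by
  have hseries := (hasSum_poisson_natCast_mul_pow_pred (∑ e, l e : ℝ≥0)).mul_left C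
  rw [mul_one] at hseries
  have hseries' := hasSum_iterate_arrival hg'
  rw [hsum] at hseries'
  refine hasSum_le (fun K => ?_) hseries' ((hasSum_iterate_arrival hg).add hseries)
  have hK := iterate_arrival_compare (fun e => (l e).coe_nonneg) (fun e => (l' e).coe_nonneg)
    (by exact_mod_cast hsum) harrival K 0
  push_cast at hK ⊢
  calc _ ≤ _ := mul_le_mul_of_nonneg_left hK (by positivity)
    _ = _ := by ring

/-- Padding both intensities by an inert edge `none` equalizes the total rates. -/
theorem integral_poissonField_le_add {l l' : E → ℝ≥0} {g : (E → ℕ) → ℝ}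
    (hg : Integrable g (poissonField l)) (hg' : Integrable g (poissonField l')) {C : ℝ}
    (hdiff : ∀ J, ∑ e, ((l' e : ℝ) - l e) * (g (J + Pi.single e 1) - g J) ≤ C) :
    ∫ J, g J ∂poissonField l' ≤ ∫ J, g J ∂poissonField l + C := by
  let m : Option E → ℝ≥0 := fun o => o.elim (∑ e, l' e) l
  let m' : Option E → ℝ≥0 := fun o => o.elim (∑ e, l e) l'
  have hinj := Option.some_injective E
  have hm : ∫ J, g (J ∘ some) ∂poissonField m = ∫ J, g J ∂poissonField l :=
    integral_comp_poissonField m hinj g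
  have hm' : ∫ J, g (J ∘ some) ∂poissonField m' = ∫ J, g J ∂poissonField l' :=
    integral_comp_poissonField m' hinj g
  rw [← hm, ← hm']
  refine integral_poissonField_le_of_arrival_le (by simp [m, m', Fintype.sum_option, add_comm])
    (integrable_comp_poissonField (l := m) hinj hg)
    (integrable_comp_poissonField (l := m') hinj hg') fun J => ?_
  have hJ := hdiff (J ∘ some)
  simp only [sub_mul, mul_sub, Finset.sum_sub_distrib, ← Finset.sum_mul] at hJ
  simp only [arrival, Fintype.sum_option, add_single_none_comp_some, add_single_some_comp_some,
    m, m', Option.elim]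
  push_cast
  linarith

end Comparison

section GibbsModel

variable {E E' Ω Ω' : Type*} [Fintype E] [Fintype Ω]

/-- The partition function of a model with states `Ω` in which every occurrence of the edge `e`
contributes the factor `ψ e σ` to the weight of the state `σ`, and `J e` counts the occurrences. -/
noncomputable def partitionFn (ψ : E → Ω → ℝ) (J : E → ℕ) : ℝ :=
  ∑ σ, ∏ e, ψ e σ ^ J e

/-- The expected logarithm of the partition function under Poisson multiplicities with means `l`.
It is not divided by the volume, which makes it additive over independent models. -/
noncomputable def pressure (ψ : E → Ω → ℝ) (l : E → ℝ≥0) : ℝ :=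
  ∫ J, Real.log (partitionFn ψ J) ∂poissonField l

lemma partitionFn_pos [Nonempty Ω] {ψ : E → Ω → ℝ} (hψ : ∀ e σ, 0 < ψ e σ) (J : E → ℕ) :
    0 < partitionFn ψ J :=
  Finset.sum_pos (fun σ _ => Finset.prod_pos fun e _ => pow_pos (hψ e σ) _) Finset.univ_nonempty

lemma integrable_partitionFn (ψ : E → Ω → ℝ) (l : E → ℝ≥0) :
    Integrable (partitionFn ψ) (poissonField l) :=
  integrable_finsetSum _ fun σ _ => integrable_prod_pow_poissonField l fun e => ψ e σ

lemma abs_log_le_add_inv {z : ℝ} (hz : 0 < z) : |Real.log z| ≤ z + z⁻¹ := by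
  have hlog := Real.log_le_self hz.le
  have hlog_inv := Real.log_le_self (inv_pos.2 hz).le
  rw [Real.log_inv] at hlog_inv
  exact abs_le.2 ⟨by linarith, by linarith [inv_pos.2 hz]⟩

lemma inv_partitionFn_le {ψ : E → Ω → ℝ} (hψ : ∀ e σ, 0 < ψ e σ) (σ : Ω) (J : E → ℕ) :
    (partitionFn ψ J)⁻¹ ≤ ∏ e, (ψ e σ)⁻¹ ^ J e := by
  have hpos : ∀ σ, 0 < ∏ e, ψ e σ ^ J e := fun σ => Finset.prod_pos fun e _ => pow_pos (hψ e σ) _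
  simp only [inv_pow, Finset.prod_inv_distrib]
  exact inv_anti₀ (hpos σ) (Finset.single_le_sum (fun σ _ => (hpos σ).le) (Finset.mem_univ σ))

lemma integrable_log_partitionFn [Nonempty Ω] {ψ : E → Ω → ℝ} (hψ : ∀ e σ, 0 < ψ e σ)
    (l : E → ℝ≥0) : Integrable (fun J => Real.log (partitionFn ψ J)) (poissonField l) := by
  obtain ⟨σ⟩ := ‹Nonempty Ω›
  refine ((integrable_partitionFn ψ l).add
    (integrable_prod_pow_poissonField l fun e => (ψ e σ)⁻¹)).mono'
    Measurable.of_discrete.aestronglyMeasurable (ae_of_all _ fun J => ?_)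
  have : Nonempty Ω := ⟨σ⟩
  exact (abs_log_le_add_inv (partitionFn_pos hψ J)).trans
    (add_le_add_right (inv_partitionFn_le hψ σ J) _)

lemma pressure_comp_equiv [Fintype Ω'] (f : Ω' ≃ Ω) (ψ : E → Ω → ℝ) (l : E → ℝ≥0) :
    pressure (fun e σ => ψ e (f σ)) l = pressure ψ l := by
  simp only [pressure, partitionFn]
  congr! 3 with J
  exact f.sum_comp fun σ => ∏ e, ψ e σ ^ J e

lemma pressure_comp_of_injective [Fintype E'] {f : E' → E} (hf : f.Injective) (ψ : E → Ω → ℝ)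
    {l : E → ℝ≥0} (hl : ∀ e ∉ Set.range f, l e = 0) :
    pressure (fun e => ψ (f e)) (l ∘ f) = pressure ψ l := by
  rw [pressure, ← integral_comp_poissonField l hf]
  refine integral_congr_ae ?_
  have hzero : ∀ᵐ J ∂poissonField l, ∀ e ∉ Set.range f, J e = 0 :=
    ae_all_iff.2 fun e => eventually_imp_distrib_left.2 fun he => ae_poissonField_eq_zero (hl e he)
  filter_upwards [hzero] with J hJ
  simp only [partitionFn]
  congr! 2 with σ
  exact Fintype.prod_of_injective f hf _ _ (fun e he => by rw [hJ e he, pow_zero]) fun e => rfl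

lemma pressure_prod [Fintype E'] [Fintype Ω'] [Nonempty Ω] [Nonempty Ω'] {ψ : E → Ω → ℝ}
    (hψ : ∀ e σ, 0 < ψ e σ) {ψ' : E' → Ω' → ℝ} (hψ' : ∀ e σ, 0 < ψ' e σ)
    (l : E → ℝ≥0) (l' : E' → ℝ≥0) :
    pressure (Sum.elim (fun e (σ : Ω × Ω') => ψ e σ.1) (fun e σ => ψ' e σ.2)) (Sum.elim l l') =
      pressure ψ l + pressure ψ' l' := by
  have hpressure : pressure ψ l =
      ∫ J, Real.log (partitionFn ψ (J ∘ Sum.inl)) ∂poissonField (Sum.elim l l') :=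
    (integral_comp_poissonField (Sum.elim l l') Sum.inl_injective _).symm
  have hpressure' : pressure ψ' l' =
      ∫ J, Real.log (partitionFn ψ' (J ∘ Sum.inr)) ∂poissonField (Sum.elim l l') :=
    (integral_comp_poissonField (Sum.elim l l') Sum.inr_injective _).symm
  rw [hpressure, hpressure', ← integral_add
    (integrable_comp_poissonField Sum.inl_injective (integrable_log_partitionFn hψ _))
    (integrable_comp_poissonField Sum.inr_injective (integrable_log_partitionFn hψ' _)), pressure]
  congr! 2 with J
  rw [← Real.log_mul (partitionFn_pos hψ _).ne' (partitionFn_pos hψ' _).ne']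
  simp only [partitionFn, Fintype.sum_mul_sum, Fintype.sum_prod_type, Fintype.prod_sum_type,
    Sum.elim_inl, Sum.elim_inr, Function.comp_apply]

lemma pressure_pi {ι : Type*} [Fintype ι] [DecidableEq ι] [Nonempty Ω] {ψ : E → Ω → ℝ}
    (hψ : ∀ e σ, 0 < ψ e σ) (l : E → ℝ≥0) :
    pressure (fun (e : ι × E) (σ : ι → Ω) => ψ e.2 (σ e.1)) (fun e => l e.2) =
      Fintype.card ι * pressure ψ l := by
  have hpressure (i : ι) : pressure ψ l =
      ∫ J, Real.log (partitionFn ψ (J ∘ Prod.mk i)) ∂poissonField (fun e : ι × E => l e.2) :=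
    (integral_comp_poissonField (fun e : ι × E => l e.2) (Prod.mk_right_injective i) _).symm
  calc _ = ∫ J, ∑ i, Real.log (partitionFn ψ (J ∘ Prod.mk i))
        ∂poissonField (fun e : ι × E => l e.2) := by
        rw [pressure]
        congr! 2 with J
        rw [← Real.log_prod fun i _ => (partitionFn_pos hψ _).ne']
        simp only [partitionFn, Finset.prod_univ_sum, Fintype.piFinset_univ,
          Fintype.prod_prod_type, Function.comp_apply]
    _ = ∑ _i : ι, pressure ψ l := by
        rw [integral_finsetSum _ fun i _ => integrable_comp_poissonField
          (Prod.mk_right_injective i) (integrable_log_partitionFn hψ _)]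
        exact Finset.sum_congr rfl fun i _ => (hpressure i).symm
    _ = _ := by rw [Finset.sum_const, Finset.card_univ, nsmul_eq_mul]

lemma partitionFn_add_single [DecidableEq E] (ψ : E → Ω → ℝ) (J : E → ℕ) (e : E) :
    partitionFn ψ (J + Pi.single e 1) = ∑ σ, (∏ e, ψ e σ ^ J e) * ψ e σ := by
  refine Finset.sum_congr rfl fun σ _ => ?_
  simp only [Pi.add_apply, pow_add, Finset.prod_mul_distrib, Pi.single_apply, pow_ite, pow_one,
    pow_zero, Finset.prod_ite_eq', Finset.mem_univ, if_true]

/-- Adding one edge multiplies the partition function by the Gibbs average of that edge. -/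
theorem pressure_le_add_of_forall_stdSimplex [Nonempty Ω] {ψ : E → Ω → ℝ}
    (hψ : ∀ e σ, 0 < ψ e σ) {l l' : E → ℝ≥0} {C : ℝ}
    (hC : ∀ w ∈ stdSimplex ℝ Ω, ∑ e, ((l' e : ℝ) - l e) * Real.log (∑ σ, w σ * ψ e σ) ≤ C) :
    pressure ψ l' ≤ pressure ψ l + C := by
  classical
  refine integral_poissonField_le_add (integrable_log_partitionFn hψ l)
    (integrable_log_partitionFn hψ l') fun J => ?_
  have hZ := partitionFn_pos hψ J
  have hgibbs : (fun σ => (∏ e, ψ e σ ^ J e) / partitionFn ψ J) ∈ stdSimplex ℝ Ω :=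
    ⟨fun σ => div_nonneg (Finset.prod_nonneg fun e _ => (pow_pos (hψ e σ) _).le) hZ.le, by
      rw [← Finset.sum_div]; exact div_self hZ.ne'⟩
  refine le_of_eq_of_le (Finset.sum_congr rfl fun e _ => ?_) (hC _ hgibbs)
  rw [← Real.log_div (partitionFn_pos hψ _).ne' hZ.ne', partitionFn_add_single, Finset.sum_div]
  simp only [div_mul_eq_mul_div]

end GibbsModel

section LogKernel

variable {A Ω S : Type*}

lemma posSemidef_map_pow_succ {T : Matrix A A ℝ} (hT : T.PosSemidef) (n : ℕ) :
    (T.map (· ^ (n + 1))).PosSemidef := by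
  induction n with
  | zero => simpa using hT
  | succ n ih =>
    have hsucc : T.map (· ^ (n + 1 + 1)) = (T.map (· ^ (n + 1))).hadamard T := by
      ext a b
      exact pow_succ (T a b) (n + 1)
    exact hsucc ▸ ih.hadamard hT

lemma sum_sum_mul_nonneg [Fintype A] {T : Matrix A A ℝ} (hT : T.PosSemidef) (θ : A → ℝ) :
    0 ≤ ∑ a, ∑ b, θ a * θ b * T a b := by
  refine (hT.dotProduct_mulVec_nonneg θ).trans_eq ?_
  simp only [dotProduct, Matrix.mulVec, star_trivial, Finset.mul_sum, mul_assoc, mul_comm (T _ _)]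

theorem sum_sum_mul_log_one_sub_nonpos [Fintype A] {T : Matrix A A ℝ} (hT : T.PosSemidef)
    (hlt : ∀ a b, |T a b| < 1) (θ : A → ℝ) :
    ∑ a, ∑ b, θ a * θ b * Real.log (1 - T a b) ≤ 0 := by
  have hseries : HasSum (fun n : ℕ => ∑ a, ∑ b, θ a * θ b * (T a b ^ (n + 1) / ((n : ℝ) + 1)))
      (∑ a, ∑ b, θ a * θ b * -Real.log (1 - T a b)) :=
    hasSum_sum fun a _ => hasSum_sum fun b _ =>
      (Real.hasSum_pow_div_log_of_abs_lt_one (hlt a b)).mul_left _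
  have hnonneg := hseries.nonneg fun n => by
    simp only [← mul_div_assoc, ← Finset.sum_div]
    exact div_nonneg (sum_sum_mul_nonneg (posSemidef_map_pow_succ hT n) θ) (by positivity)
  simpa only [mul_neg, Finset.sum_neg_distrib, Left.nonneg_neg_iff] using hnonneg

variable [Fintype Ω] [Fintype S]

/-- The probability, averaged over states `σ` with weights `w`, that independent colours with laws
`P σ` and `Q σ` coincide. -/
noncomputable def overlap (w : Ω → ℝ) (P Q : Ω → S → ℝ) : ℝ :=
  ∑ σ, w σ * ∑ s, P σ s * Q σ s

lemma overlap_comm (w : Ω → ℝ) (P Q : Ω → S → ℝ) : overlap w P Q = overlap w Q P := by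
  simp only [overlap, mul_comm (P _ _)]

lemma overlap_single_left [DecidableEq S] (w : Ω → ℝ) (f : Ω → S) (Q : Ω → S → ℝ) :
    overlap w (fun σ => Pi.single (f σ) 1) Q = ∑ σ, w σ * Q σ (f σ) := by
  simp only [overlap, Pi.single_apply, ite_mul, one_mul, zero_mul, Finset.sum_ite_eq',
    Finset.mem_univ, if_true]

variable {w : Ω → ℝ}

lemma overlap_nonneg (hw : ∀ σ, 0 ≤ w σ) {P Q : Ω → S → ℝ} (hP : ∀ σ s, 0 ≤ P σ s)
    (hQ : ∀ σ s, 0 ≤ Q σ s) : 0 ≤ overlap w P Q :=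
  Finset.sum_nonneg fun σ _ => mul_nonneg (hw σ) <|
    Finset.sum_nonneg fun s _ => mul_nonneg (hP σ s) (hQ σ s)

lemma overlap_le_one (hw : w ∈ stdSimplex ℝ Ω) {P Q : Ω → S → ℝ}
    (hP : ∀ σ, P σ ∈ stdSimplex ℝ S) (hQ : ∀ σ, Q σ ∈ stdSimplex ℝ S) : overlap w P Q ≤ 1 := by
  have hcoincide (σ : Ω) : ∑ s, P σ s * Q σ s ≤ 1 :=
    (hP σ).2 ▸ Finset.sum_le_sum fun s _ =>
      mul_le_of_le_one_right ((hP σ).1 s) ((mem_Icc_of_mem_stdSimplex (hQ σ) s).2)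
  exact hw.2 ▸ Finset.sum_le_sum fun σ _ => mul_le_of_le_one_right (hw.1 σ) (hcoincide σ)

lemma posSemidef_overlap [Finite A] (hw : ∀ σ, 0 ≤ w σ) (P : A → Ω → S → ℝ) :
    (Matrix.of fun a b => overlap w (P a) (P b)).PosSemidef := by
  have hsum : (Matrix.of fun a b => overlap w (P a) (P b)) =
      ∑ σ, w σ • ∑ s, Matrix.vecMulVec (fun a => P a σ s) (star fun a => P a σ s) := by
    ext a b
    simp only [overlap, Matrix.of_apply, Matrix.sum_apply, Matrix.smul_apply,
      Matrix.vecMulVec_apply, star_trivial, smul_eq_mul]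
  rw [hsum]
  exact Matrix.posSemidef_sum _ fun σ _ => (Matrix.posSemidef_sum _ fun s _ =>
    Matrix.posSemidef_vecMulVec_self_star _).smul (hw σ)

lemma one_sub_mul_overlap_pos (hw : w ∈ stdSimplex ℝ Ω) {y : ℝ} (hy₀ : 0 ≤ y) (hy₁ : y < 1)
    {P Q : Ω → S → ℝ} (hP : ∀ σ, P σ ∈ stdSimplex ℝ S) (hQ : ∀ σ, Q σ ∈ stdSimplex ℝ S) :
    0 < 1 - y * overlap w P Q :=
  sub_pos.2 <| (mul_le_of_le_one_right hy₀ (overlap_le_one hw hP hQ)).trans_lt hy₁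

theorem sum_sum_mul_log_one_sub_mul_overlap_nonpos [Fintype A]
    (hw : w ∈ stdSimplex ℝ Ω) {y : ℝ} (hy₀ : 0 ≤ y) (hy₁ : y < 1) {P : A → Ω → S → ℝ}
    (hP : ∀ a σ, P a σ ∈ stdSimplex ℝ S) (θ : A → ℝ) :
    ∑ a, ∑ b, θ a * θ b * Real.log (1 - y * overlap w (P a) (P b)) ≤ 0 := by
  refine sum_sum_mul_log_one_sub_nonpos ((posSemidef_overlap hw.1 P).smul hy₀) (fun a b => ?_) θ
  have hnonneg : 0 ≤ overlap w (P a) (P b) :=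
    overlap_nonneg hw.1 (fun σ => (hP a σ).1) (fun σ => (hP b σ).1)
  exact (abs_of_nonneg (mul_nonneg hy₀ hnonneg)).trans_lt
    (sub_pos.1 (one_sub_mul_overlap_pos hw hy₀ hy₁ (hP a) (hP b)))

end LogKernel

section Potts

variable {V W S : Type*}

/-- The weight of an edge of the Potts antiferromagnet, `x = exp (-β)` being the cost of a
monochromatic edge. Edges are ordered pairs, loops included. -/
noncomputable def pottsWeight [DecidableEq S] (x : ℝ) (e : V × V) (σ : V → S) : ℝ :=
  if σ e.1 = σ e.2 then x else 1

/-- The law of the colour of the vertex `i` given the configuration, a point mass. -/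
noncomputable def vertexProfile [DecidableEq S] (i : V) (σ : V → S) : S → ℝ :=
  Pi.single (σ i) 1

/-- The expected logarithm of the partition function of the dilute Potts model with colours `S` on
the vertices `V`, each ordered pair carrying a Poisson number of edges with mean
`c / (2 * card V)`. -/
noncomputable def pottsPressure (V S : Type*) [Fintype V] [DecidableEq V] [Fintype S]
    [DecidableEq S] (x : ℝ) (c : ℝ≥0) : ℝ :=
  pressure (pottsWeight x : V × V → (V → S) → ℝ) fun _ => c / (2 * Fintype.card V)

lemma pottsWeight_pos [DecidableEq S] {x : ℝ} (hx : 0 < x) (e : V × V) (σ : V → S) :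
    0 < pottsWeight x e σ := by
  unfold pottsWeight
  split_ifs <;> linarith

lemma vertexProfile_mem_stdSimplex [Fintype S] [DecidableEq S] (i : V) (σ : V → S) :
    vertexProfile i σ ∈ stdSimplex ℝ S :=
  single_mem_stdSimplex ℝ (σ i)

variable [Fintype V] [Fintype W]

/-- The edge intensities of two non-interacting dilute graphs on `V` and `W`. -/
noncomputable def blockIntensity (V W : Type*) [Fintype V] [Fintype W] (c : ℝ≥0) :
    (V ⊕ W) × (V ⊕ W) → ℝ≥0
  | (.inl _, .inl _) => c / (2 * Fintype.card V)
  | (.inr _, .inr _) => c / (2 * Fintype.card W)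
  | _ => 0

/-- The charge of a vertex: the difference of the uniform laws on `V` and on `W`. -/
noncomputable def blockCharge (V W : Type*) [Fintype V] [Fintype W] : V ⊕ W → ℝ :=
  Sum.elim (fun _ => (Fintype.card V : ℝ)⁻¹) fun _ => -(Fintype.card W : ℝ)⁻¹

lemma blockIntensity_sub (c : ℝ≥0) (i j : V ⊕ W) :
    (blockIntensity V W c (i, j) : ℝ) - (c / (2 * Fintype.card (V ⊕ W)) : ℝ≥0) =
      c * Fintype.card V * Fintype.card W / (2 * Fintype.card (V ⊕ W)) *
        (blockCharge V W i * blockCharge V W j) := by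
  have hV (v : V) : (0 : ℝ) < Fintype.card V := by exact_mod_cast Fintype.card_pos_iff.2 ⟨v⟩
  have hW (v : W) : (0 : ℝ) < Fintype.card W := by exact_mod_cast Fintype.card_pos_iff.2 ⟨v⟩
  rcases i with i | i <;> rcases j with j | j <;>
    simp only [blockIntensity, blockCharge, Sum.elim_inl, Sum.elim_inr, Fintype.card_sum] <;>
    push_cast
  · have := hV i
    field_simp
    ring
  · have := hV i
    have := hW j
    field_simp
    ring
  · have := hW i
    have := hV j
    field_simp
    ring
  · have := hW i
    field_simp
    ring

variable [DecidableEq V] [DecidableEq W] [Fintype S] [DecidableEq S]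

lemma overlap_vertexProfile_left (w : (V → S) → ℝ) (i : V) (Q : (V → S) → S → ℝ) :
    overlap w (vertexProfile i) Q = ∑ σ, w σ * Q σ (σ i) :=
  overlap_single_left w (fun σ => σ i) Q

lemma sum_mul_pottsWeight {w : (V → S) → ℝ} (hw : ∑ σ, w σ = 1) (x : ℝ) (i j : V) :
    ∑ σ, w σ * pottsWeight x (i, j) σ =
      1 - (1 - x) * overlap w (vertexProfile i) (vertexProfile j) := by
  rw [overlap_vertexProfile_left, eq_sub_iff_add_eq, Finset.mul_sum, ← Finset.sum_add_distrib]
  refine (Finset.sum_congr rfl fun σ _ => ?_).trans hw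
  simp only [pottsWeight, vertexProfile, Pi.single_apply]
  split_ifs <;> ring

lemma pottsPressure_congr (f : V ≃ W) (x : ℝ) (c : ℝ≥0) :
    pottsPressure V S x c = pottsPressure W S x c := by
  rw [pottsPressure, Fintype.card_congr f, pottsPressure, ← pressure_comp_equiv
    (f.arrowCongr (Equiv.refl S)), ← pressure_comp_of_injective (f.prodCongr f).injective _
    fun e he => absurd ((f.prodCongr f).surjective e) he]
  congr! 3 with e σ
  simp [pottsWeight]

lemma pressure_blockIntensity [Nonempty S] {x : ℝ} (hx : 0 < x) (c : ℝ≥0) :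
    pressure (pottsWeight x : _ → (V ⊕ W → S) → ℝ) (blockIntensity V W c) =
      pottsPressure V S x c + pottsPressure W S x c := by
  let f : V × V ⊕ W × W → (V ⊕ W) × (V ⊕ W) :=
    Sum.elim (Prod.map Sum.inl Sum.inl) (Prod.map Sum.inr Sum.inr)
  have hf : f.Injective := by
    rintro (⟨i, j⟩ | ⟨i, j⟩) (⟨i', j'⟩ | ⟨i', j'⟩) h <;> simp_all [f]
  have hrange : ∀ e ∉ Set.range f, blockIntensity V W c e = 0 := by
    rintro ⟨i | i, j | j⟩ he
    · exact absurd ⟨.inl (i, j), rfl⟩ he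
    · rfl
    · rfl
    · exact absurd ⟨.inr (i, j), rfl⟩ he
  rw [pottsPressure, pottsPressure, ← pressure_prod (pottsWeight_pos hx) (pottsWeight_pos hx),
    ← pressure_comp_of_injective hf _ hrange,
    ← pressure_comp_equiv (Equiv.sumArrowEquivProdArrow V W S)]
  congr 1
  · funext e σ
    rcases e with e | e <;> rfl
  · funext e
    rcases e with e | e <;> rfl

theorem pottsPressure_add_le_sum [Nonempty S] {x : ℝ} (hx₀ : 0 < x) (hx₁ : x ≤ 1) (c : ℝ≥0) :
    pottsPressure V S x c + pottsPressure W S x c ≤ pottsPressure (V ⊕ W) S x c := by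
  rw [← pressure_blockIntensity hx₀, ← add_zero (pottsPressure (V ⊕ W) S x c)]
  refine pressure_le_add_of_forall_stdSimplex (pottsWeight_pos hx₀) fun w hw => ?_
  have hkernel := sum_sum_mul_log_one_sub_mul_overlap_nonpos hw (sub_nonneg.2 hx₁)
    (sub_lt_self 1 hx₀) vertexProfile_mem_stdSimplex (blockCharge V W)
  simp only [Fintype.sum_prod_type, blockIntensity_sub, sum_mul_pottsWeight hw.2, mul_assoc,
    ← Finset.mul_sum] at hkernel ⊢
  exact mul_nonpos_of_nonneg_of_nonpos (by positivity) hkernel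

end Potts

section TrialField

variable {V S : Type*}

/-- The sign `±1` attached to a Boolean. -/
def spin (b : Bool) : ℝ := if b then 1 else -1

/-- The weight on one colour exerted by an external field `± h`, the sign being `spin b`. -/
def fieldWeight (h : S → ℝ) (b : Bool) (s : S) : ℝ := 1 - spin b * h s

lemma abs_spin_mul (b : Bool) (r : ℝ) : |spin b * r| = |r| := by
  cases b <;> simp [spin]

lemma fieldWeight_pos {h : S → ℝ} (hh : ∀ s, |h s| < 1) (b : Bool) (s : S) :
    0 < fieldWeight h b s := by
  have habs := abs_spin_mul b (h s) ▸ hh s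
  exact sub_pos.2 (abs_lt.1 habs).2

variable [Fintype S]

/-- The law on colours that perturbs the uniform one in the direction `± g`. It replaces the law of
a vertex in the trial model, and does not depend on the configuration. -/
noncomputable def trialProfile (g : S → ℝ) (b : Bool) (_ : V → S) (s : S) : ℝ :=
  (1 + spin b * g s) / Fintype.card S

/-- The absolute value of the nontrivial eigenvalue of the transition matrix along an edge, whose
entries are proportional to `x` on the diagonal and to `1` off it. -/
noncomputable def edgeEigenvalue (S : Type*) [Fintype S] (x : ℝ) : ℝ :=
  (1 - x) / (Fintype.card S - (1 - x))

lemma trialProfile_mem_stdSimplex [Nonempty S] {g : S → ℝ} (hg : ∑ s, g s = 0)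
    (hg₁ : ∀ s, |g s| ≤ 1) (b : Bool) (σ : V → S) : trialProfile g b σ ∈ stdSimplex ℝ S := by
  refine ⟨fun s => div_nonneg ?_ (Nat.cast_nonneg _), ?_⟩
  · linarith [(abs_le.1 ((abs_spin_mul b (g s)).trans_le (hg₁ s))).1]
  · simp only [trialProfile, ← Finset.sum_div, Finset.sum_add_distrib, ← Finset.mul_sum, hg,
      Finset.sum_const, Finset.card_univ, nsmul_eq_mul, mul_one, mul_zero, add_zero]
    exact div_self (Nat.cast_ne_zero.2 Fintype.card_ne_zero)

lemma edgeEigenvalue_nonneg [Nonempty S] {x : ℝ} (hx₀ : 0 < x) (hx₁ : x ≤ 1) :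
    0 ≤ edgeEigenvalue S x := by
  have hcard : (1 : ℝ) ≤ Fintype.card S := by exact_mod_cast Fintype.card_pos
  exact div_nonneg (by linarith) (by linarith)

lemma edgeEigenvalue_lt_one [Nontrivial S] {x : ℝ} (hx₀ : 0 < x) : edgeEigenvalue S x < 1 := by
  have hcard : (2 : ℝ) ≤ Fintype.card S := by exact_mod_cast Fintype.one_lt_card
  rw [edgeEigenvalue, div_lt_one (by linarith)]
  linarith

lemma abs_edgeEigenvalue_smul_lt_one [Nontrivial S] {x : ℝ} (hx₀ : 0 < x) (hx₁ : x ≤ 1)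
    {g : S → ℝ} (hg₁ : ∀ s, |g s| ≤ 1) (s : S) : |(edgeEigenvalue S x • g) s| < 1 := by
  have hκ := edgeEigenvalue_nonneg (S := S) hx₀ hx₁
  rw [Pi.smul_apply, smul_eq_mul, abs_mul, abs_of_nonneg hκ]
  exact (mul_le_of_le_one_right hκ (hg₁ s)).trans_lt (edgeEigenvalue_lt_one hx₀)

lemma mul_edgeEigenvalue [Nonempty S] {x : ℝ} (hx₀ : 0 < x) :
    (1 - (1 - x) / Fintype.card S) * edgeEigenvalue S x = (1 - x) / Fintype.card S := by
  have hcard : (1 : ℝ) ≤ Fintype.card S := by exact_mod_cast Fintype.card_pos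
  have hdenom : (0 : ℝ) < Fintype.card S - (1 - x) := by linarith
  rw [edgeEigenvalue]
  field_simp

variable [Fintype V] [DecidableEq V]

lemma one_sub_mul_overlap_vertexProfile_trialProfile [Nonempty S] [DecidableEq S]
    {w : (V → S) → ℝ} (hw : ∑ σ, w σ = 1) {x : ℝ} (hx₀ : 0 < x) (g : S → ℝ) (i : V) (b : Bool) :
    1 - (1 - x) * overlap w (vertexProfile i) (trialProfile g b) =
      (1 - (1 - x) / Fintype.card S) *
        ∑ σ, w σ * fieldWeight (edgeEigenvalue S x • g) b (σ i) := by
  rw [overlap_vertexProfile_left, sub_eq_iff_eq_add, Finset.mul_sum, Finset.mul_sum,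
    ← Finset.sum_add_distrib]
  refine hw.symm.trans (Finset.sum_congr rfl fun σ _ => ?_)
  simp only [fieldWeight, trialProfile, Pi.smul_apply, smul_eq_mul]
  linear_combination w σ * spin b * g (σ i) * mul_edgeEigenvalue (S := S) hx₀

lemma one_sub_mul_overlap_trialProfile [Nonempty S] {w : (V → S) → ℝ} (hw : ∑ σ, w σ = 1) {x : ℝ}
    (hx₀ : 0 < x) {g : S → ℝ} (hg : ∑ s, g s = 0) (b b' : Bool) :
    1 - (1 - x) * overlap w (trialProfile g b) (trialProfile g b') =
      (1 - (1 - x) / Fintype.card S) *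
        (1 - spin b * spin b' * (edgeEigenvalue S x * (∑ s, g s ^ 2) / Fintype.card S)) := by
  have hcoincide (σ : V → S) : ∑ s, trialProfile g b σ s * trialProfile g b' σ s =
      (Fintype.card S + spin b * spin b' * ∑ s, g s ^ 2) / Fintype.card S ^ 2 := by
    calc ∑ s, trialProfile g b σ s * trialProfile g b' σ s
        = ∑ s, (1 + (spin b + spin b') * g s + spin b * spin b' * g s ^ 2) /
            (Fintype.card S : ℝ) ^ 2 :=
          Finset.sum_congr rfl fun s _ => by unfold trialProfile; ring
      _ = _ := by
          simp only [← Finset.sum_div, Finset.sum_add_distrib, ← Finset.mul_sum, hg,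
            Finset.sum_const, Finset.card_univ, nsmul_eq_mul, mul_one, mul_zero, add_zero]
  have hcard : (Fintype.card S : ℝ) ≠ 0 := Nat.cast_ne_zero.2 Fintype.card_ne_zero
  simp only [overlap, hcoincide, ← Finset.sum_mul, hw, one_mul]
  rw [add_div, sq, div_mul_cancel_right₀ hcard, ← div_div]
  linear_combination
    (spin b * spin b' * (∑ s, g s ^ 2) / Fintype.card S) * mul_edgeEigenvalue (S := S) hx₀

lemma log_one_sub_mul_overlap_vertexProfile_trialProfile [Nonempty S] [DecidableEq S]
    {w : (V → S) → ℝ} (hw : w ∈ stdSimplex ℝ (V → S)) {x : ℝ} (hx₀ : 0 < x) (hx₁ : x ≤ 1)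
    {g : S → ℝ} (hg : ∑ s, g s = 0) (hg₁ : ∀ s, |g s| ≤ 1) (i : V) (b : Bool) :
    Real.log (1 - (1 - x) * overlap w (vertexProfile i) (trialProfile g b)) =
      Real.log (1 - (1 - x) / Fintype.card S) +
        Real.log (∑ σ, w σ * fieldWeight (edgeEigenvalue S x • g) b (σ i)) := by
  have hpos := one_sub_mul_overlap_pos hw (sub_nonneg.2 hx₁) (sub_lt_self 1 hx₀)
    (vertexProfile_mem_stdSimplex i) (trialProfile_mem_stdSimplex hg hg₁ b)
  rw [one_sub_mul_overlap_vertexProfile_trialProfile hw.2 hx₀] at hpos ⊢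
  rw [Real.log_mul (left_ne_zero_of_mul hpos.ne') (right_ne_zero_of_mul hpos.ne')]

lemma sum_sum_log_one_sub_mul_overlap_trialProfile [Nonempty S] {w : (V → S) → ℝ}
    (hw : w ∈ stdSimplex ℝ (V → S)) {x : ℝ} (hx₀ : 0 < x) (hx₁ : x ≤ 1) {g : S → ℝ}
    (hg : ∑ s, g s = 0) (hg₁ : ∀ s, |g s| ≤ 1) :
    ∑ b, ∑ b', Real.log (1 - (1 - x) * overlap w (trialProfile g b) (trialProfile g b')) =
      4 * Real.log (1 - (1 - x) / Fintype.card S) +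
        2 * Real.log (1 - (edgeEigenvalue S x * (∑ s, g s ^ 2) / Fintype.card S) ^ 2) := by
  set u := edgeEigenvalue S x * (∑ s, g s ^ 2) / Fintype.card S with hu
  have hpos (b b' : Bool) : 0 < (1 - (1 - x) / Fintype.card S) * (1 - spin b * spin b' * u) := by
    rw [hu, ← one_sub_mul_overlap_trialProfile hw.2 hx₀ hg]
    exact one_sub_mul_overlap_pos hw (sub_nonneg.2 hx₁) (sub_lt_self 1 hx₀)
      (trialProfile_mem_stdSimplex hg hg₁ b) (trialProfile_mem_stdSimplex hg hg₁ b')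
  have hsum (b b' : Bool) := Real.log_mul (left_ne_zero_of_mul (hpos b b').ne')
    (right_ne_zero_of_mul (hpos b b').ne')
  have hsquare : Real.log (1 - u ^ 2) = Real.log (1 - u) + Real.log (1 + u) := by
    have hne (b b' : Bool) := right_ne_zero_of_mul (hpos b b').ne'
    rw [← Real.log_mul (by simpa [spin] using hne true true)
      (by simpa [spin] using hne true false)]
    ring_nf
  simp only [one_sub_mul_overlap_trialProfile hw.2 hx₀ hg, ← hu, hsum, Fintype.sum_bool, hsquare]
  simp only [spin, if_true, Bool.false_eq_true, if_false, one_mul, mul_one, neg_mul, mul_neg,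
    neg_neg, sub_neg_eq_add]
  ring

/-- The log kernel is tested against the charge `1` on vertices and `-(card V / 2)` on each of the
two trial profiles. -/
lemma sum_log_pottsWeight_le [Nonempty S] [DecidableEq S] {w : (V → S) → ℝ}
    (hw : w ∈ stdSimplex ℝ (V → S)) {x : ℝ} (hx₀ : 0 < x) (hx₁ : x ≤ 1) {g : S → ℝ}
    (hg : ∑ s, g s = 0) (hg₁ : ∀ s, |g s| ≤ 1) :
    ∑ i, ∑ j, Real.log (∑ σ, w σ * pottsWeight x (i, j) σ) ≤
      Fintype.card V *
        ∑ i, ∑ b, Real.log (∑ σ, w σ * fieldWeight (edgeEigenvalue S x • g) b (σ i)) +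
      Fintype.card V ^ 2 * (Real.log (1 - (1 - x) / Fintype.card S) -
        Real.log (1 - (edgeEigenvalue S x * (∑ s, g s ^ 2) / Fintype.card S) ^ 2) / 2) := by
  let profile : V ⊕ Bool → (V → S) → S → ℝ := Sum.elim vertexProfile (trialProfile g)
  let charge : V ⊕ Bool → ℝ := Sum.elim (fun _ => 1) fun _ => -(Fintype.card V / 2)
  have hprofile (a : V ⊕ Bool) (σ : V → S) : profile a σ ∈ stdSimplex ℝ S := by
    rcases a with i | b
    · exact vertexProfile_mem_stdSimplex i σ
    · exact trialProfile_mem_stdSimplex hg hg₁ b σ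
  have hkernel := sum_sum_mul_log_one_sub_mul_overlap_nonpos hw (sub_nonneg.2 hx₁)
    (sub_lt_self 1 hx₀) hprofile charge
  have htrial := sum_sum_log_one_sub_mul_overlap_trialProfile hw hx₀ hx₁ hg hg₁
  simp only [profile, charge, Fintype.sum_sum_type, Sum.elim_inl, Sum.elim_inr,
    overlap_comm w (trialProfile g _) (vertexProfile _), ← sum_mul_pottsWeight hw.2,
    log_one_sub_mul_overlap_vertexProfile_trialProfile hw hx₀ hx₁ hg hg₁, ← Finset.mul_sum, htrial,
    one_mul, mul_one, Finset.sum_add_distrib, Finset.sum_const, Finset.card_univ,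
    Fintype.card_bool, nsmul_eq_mul] at hkernel
  rw [Finset.sum_comm (γ := Bool)] at hkernel
  push_cast at hkernel
  linarith

end TrialField

section ReplicaSymmetricBound

variable {V S : Type*}

/-- The replica-symmetric free energy per vertex, with the trial field `κ • g`, `κ` being
`edgeEigenvalue S x`: a term for a single site in the field, and the correction for the edges. -/
noncomputable def trialPressure [Fintype S] (g : S → ℝ) (x : ℝ) (c : ℝ≥0) : ℝ :=
  pressure (fieldWeight (edgeEigenvalue S x • g)) (fun _ => c / 2) +
    c / 2 * Real.log (1 - (1 - x) / Fintype.card S) -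
    c / 4 * Real.log (1 - (edgeEigenvalue S x * (∑ s, g s ^ 2) / Fintype.card S) ^ 2)

/-- The dilute Potts model and the model of independent sites in the field `h`, living on the same
configurations; which of the two is present is decided by the intensities. -/
noncomputable def decoupledWeight [DecidableEq S] (h : S → ℝ) (x : ℝ) :
    V × V ⊕ V × Bool → (V → S) → ℝ :=
  Sum.elim (pottsWeight x) fun e σ => fieldWeight h e.2 (σ e.1)

lemma decoupledWeight_pos [DecidableEq S] {h : S → ℝ} (hh : ∀ s, |h s| < 1) {x : ℝ}
    (hx : 0 < x) (e : V × V ⊕ V × Bool) (σ : V → S) : 0 < decoupledWeight h x e σ := by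
  rcases e with e | e
  · exact pottsWeight_pos hx e σ
  · exact fieldWeight_pos hh e.2 (σ e.1)

variable [Fintype V] [DecidableEq V] [Fintype S] [DecidableEq S]

lemma pressure_decoupledWeight_left (h : S → ℝ) (x : ℝ) (c : ℝ≥0) :
    pressure (decoupledWeight h x : V × V ⊕ V × Bool → (V → S) → ℝ)
      (Sum.elim (fun _ => c / (2 * Fintype.card V)) 0) = pottsPressure V S x c := by
  refine (pressure_comp_of_injective Sum.inl_injective _ ?_).symm
  rintro (e | e) he
  · exact absurd ⟨e, rfl⟩ he
  · rfl

lemma pressure_decoupledWeight_right [Nonempty S] {h : S → ℝ} (hh : ∀ s, |h s| < 1) (x : ℝ)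
    (l : ℝ≥0) :
    pressure (decoupledWeight h x : V × V ⊕ V × Bool → (V → S) → ℝ)
      (Sum.elim 0 fun _ => l) = Fintype.card V * pressure (fieldWeight h) fun _ => l := by
  refine (pressure_comp_of_injective Sum.inr_injective _ ?_).symm.trans
    (pressure_pi (fieldWeight_pos hh) fun _ => l)
  rintro (e | e) he
  · rfl
  · exact absurd ⟨e, rfl⟩ he

theorem pottsPressure_le_card_mul_trialPressure [Nonempty V] [Nontrivial S] {x : ℝ} (hx₀ : 0 < x)
    (hx₁ : x ≤ 1) (c : ℝ≥0) {g : S → ℝ} (hg : ∑ s, g s = 0) (hg₁ : ∀ s, |g s| ≤ 1) :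
    pottsPressure V S x c ≤ Fintype.card V * trialPressure g x c := by
  have hfield := abs_edgeEigenvalue_smul_lt_one hx₀ hx₁ hg₁
  have hcard : (Fintype.card V : ℝ) ≠ 0 := Nat.cast_ne_zero.2 Fintype.card_ne_zero
  rw [trialPressure, add_sub_assoc, mul_add, ← pressure_decoupledWeight_right hfield x,
    ← pressure_decoupledWeight_left (edgeEigenvalue S x • g)]
  refine pressure_le_add_of_forall_stdSimplex (decoupledWeight_pos hfield hx₀) fun w hw => ?_
  have hpairs := mul_le_mul_of_nonneg_left (sum_log_pottsWeight_le hw hx₀ hx₁ hg hg₁)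
    (by positivity : (0 : ℝ) ≤ c / (2 * Fintype.card V))
  simp only [decoupledWeight, Fintype.sum_sum_type, Fintype.sum_prod_type, Sum.elim_inl,
    Sum.elim_inr, Pi.zero_apply, NNReal.coe_zero, NNReal.coe_div, NNReal.coe_mul, NNReal.coe_ofNat,
    NNReal.coe_natCast, sub_zero, zero_sub, neg_mul, Finset.sum_neg_distrib, ← Finset.mul_sum]
  refine (add_le_add_left hpairs _).trans_eq ?_
  field_simp
  ring

end ReplicaSymmetricBound

section Moments

variable {E Ω : Type*} [Fintype E] [Fintype Ω]

lemma integral_partitionFn (ψ : E → Ω → ℝ) (l : E → ℝ≥0) :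
    ∫ J, partitionFn ψ J ∂poissonField l = ∑ σ, Real.exp (∑ e, l e * (ψ e σ - 1)) := by
  unfold partitionFn
  rw [integral_finsetSum _ fun σ _ => integrable_prod_pow_poissonField l fun e => ψ e σ]
  exact Finset.sum_congr rfl fun σ _ => integral_prod_pow_poissonField l fun e => ψ e σ

lemma partitionFn_pow (ψ : E → Ω → ℝ) (J : E → ℕ) (n : ℕ) :
    partitionFn ψ J ^ n = partitionFn (fun e (σ : Fin n → Ω) => ∏ k, ψ e (σ k)) J := by
  simp only [partitionFn, Fintype.sum_pow, ← Finset.prod_pow]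
  exact Finset.sum_congr rfl fun σ _ => Finset.prod_comm

lemma integrable_partitionFn_pow (ψ : E → Ω → ℝ) (l : E → ℝ≥0) (n : ℕ) :
    Integrable (fun J => partitionFn ψ J ^ n) (poissonField l) := by
  simp only [partitionFn_pow]
  exact integrable_partitionFn _ l

lemma integral_partitionFn_pow (ψ : E → Ω → ℝ) (l : E → ℝ≥0) (n : ℕ) :
    ∫ J, partitionFn ψ J ^ n ∂poissonField l =
      ∑ σ : Fin n → Ω, Real.exp (∑ e, l e * (∏ k, ψ e (σ k) - 1)) := by
  simp only [partitionFn_pow]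
  exact integral_partitionFn _ l

/-- The cubic Taylor polynomial of `log` at `1`: the difference has derivative `(y - 1) ^ 3 / y`. -/
lemma log_le_cubic {y : ℝ} (hy : 0 < y) :
    Real.log y ≤ y ^ 3 / 3 - 3 / 2 * y ^ 2 + 3 * y - 11 / 6 := by
  let gap : ℝ → ℝ := fun y => y ^ 3 / 3 - 3 / 2 * y ^ 2 + 3 * y - 11 / 6 - Real.log y
  have hderiv {y : ℝ} (hy : 0 < y) : HasDerivAt gap ((y - 1) ^ 3 / y) y := by
    refine ((((((hasDerivAt_pow 3 y).div_const 3).sub ((hasDerivAt_pow 2 y).const_mul (3 / 2))).add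
      ((hasDerivAt_id y).const_mul 3)).sub_const (11 / 6)).sub
      (Real.hasDerivAt_log hy.ne')).congr_deriv ?_
    field_simp
    ring
  suffices hgap : gap 1 ≤ gap y by
    norm_num [gap] at hgap
    linarith
  have hcont {s : Set ℝ} (hs : s ⊆ Set.Ioi 0) : ContinuousOn gap s := fun z hz =>
    (hderiv (hs hz)).continuousAt.continuousWithinAt
  rcases le_total y 1 with hy₁ | hy₁
  · refine antitoneOn_of_hasDerivWithinAt_nonpos (convex_Icc y 1)
      (hcont fun z hz => hy.trans_le hz.1)
      (fun z hz => (hderiv (hy.trans_le (interior_subset hz).1)).hasDerivWithinAt)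
      (fun z hz => ?_) (Set.left_mem_Icc.2 hy₁) (Set.right_mem_Icc.2 hy₁) hy₁
    obtain ⟨hyz, hz₁⟩ := interior_subset hz
    exact div_nonpos_of_nonpos_of_nonneg (Odd.pow_nonpos (by decide) (sub_nonpos.2 hz₁))
      (hy.trans_le hyz).le
  · refine monotoneOn_of_hasDerivWithinAt_nonneg (convex_Icc 1 y)
      (hcont fun z hz => one_pos.trans_le hz.1)
      (fun z hz => (hderiv (one_pos.trans_le (interior_subset hz).1)).hasDerivWithinAt)
      (fun z hz => ?_) (Set.left_mem_Icc.2 hy₁) (Set.right_mem_Icc.2 hy₁) hy₁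
    obtain ⟨hz₁, -⟩ := interior_subset hz
    exact div_nonneg (pow_nonneg (sub_nonneg.2 hz₁) 3) (one_pos.trans_le hz₁).le

lemma pressure_le_moments [Nonempty Ω] {ψ : E → Ω → ℝ} (hψ : ∀ e σ, 0 < ψ e σ) (l : E → ℝ≥0)
    {a : ℝ} (ha : 0 < a) :
    pressure ψ l ≤ Real.log a + (∫ J, partitionFn ψ J ^ 3 ∂poissonField l) / (3 * a ^ 3) -
      3 * (∫ J, partitionFn ψ J ^ 2 ∂poissonField l) / (2 * a ^ 2) +
      3 * (∫ J, partitionFn ψ J ^ 1 ∂poissonField l) / a - 11 / 6 := by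
  have hpow (n : ℕ) (r : ℝ) :
      Integrable (fun J => r * partitionFn ψ J ^ n) (poissonField l) :=
    (integrable_partitionFn_pow ψ l n).const_mul r
  have hcubic (J : E → ℕ) : Real.log (partitionFn ψ J) ≤
      (3 * a ^ 3)⁻¹ * partitionFn ψ J ^ 3 - 3 * (2 * a ^ 2)⁻¹ * partitionFn ψ J ^ 2 +
        3 * a⁻¹ * partitionFn ψ J ^ 1 + (Real.log a - 11 / 6) := by
    have hZ := partitionFn_pos hψ J
    have hlog := log_le_cubic (div_pos hZ ha)
    rw [Real.log_div hZ.ne' ha.ne', sub_le_iff_le_add] at hlog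
    refine hlog.trans_eq ?_
    field_simp
    ring
  refine (integral_mono (integrable_log_partitionFn hψ l) (((hpow 3 _).sub (hpow 2 _)).add
    (hpow 1 _) |>.add (integrable_const _)) hcubic).trans_eq ?_
  rw [integral_add' (((hpow 3 _).sub (hpow 2 _)).add (hpow 1 _)) (integrable_const _),
    integral_add' ((hpow 3 _).sub (hpow 2 _)) (hpow 1 _), integral_sub' (hpow 3 _) (hpow 2 _)]
  simp only [integral_const_mul, integral_const, probReal_univ, one_smul]
  ring

end Moments

section SingleSite

variable {S : Type*} {h : S → ℝ} {c : ℝ≥0} {δ : ℝ}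

lemma abs_exp_sub_quadratic_le {y : ℝ} (hy : |y| ≤ 1) :
    |Real.exp y - (1 + y + y ^ 2 / 2)| ≤ 2 / 9 * |y| ^ 3 := by
  have hbound := Real.exp_bound hy (n := 3) (by norm_num)
  norm_num [Finset.sum_range_succ, Nat.factorial] at hbound
  linarith

lemma abs_mul_mul_le (hδ : ∀ s, |h s| ≤ δ) (s t : S) : |c * (h s * h t)| ≤ c * δ ^ 2 := by
  rw [abs_mul, abs_mul, NNReal.abs_eq, sq]
  gcongr
  · exact (abs_nonneg _).trans (hδ s)
  · exact hδ s
  · exact hδ t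

variable [Fintype S]

lemma integral_partitionFn_fieldWeight_pow (h : S → ℝ) (c : ℝ≥0) (n : ℕ) :
    ∫ J, partitionFn (fieldWeight h) J ^ n ∂poissonField (fun _ => c / 2) =
      ∑ σ : Fin n → S, Real.exp (c * ((∏ k, (1 - h (σ k)) + ∏ k, (1 + h (σ k))) / 2 - 1)) := by
  rw [integral_partitionFn_pow]
  refine Finset.sum_congr rfl fun σ _ => congrArg Real.exp ?_
  simp only [Fintype.sum_bool, fieldWeight, spin, if_true, Bool.false_eq_true, if_false, one_mul,
    neg_mul, sub_neg_eq_add, NNReal.coe_div, NNReal.coe_ofNat]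
  ring

lemma integral_partitionFn_fieldWeight (h : S → ℝ) (c : ℝ≥0) :
    ∫ J, partitionFn (fieldWeight h) J ^ 1 ∂poissonField (fun _ => c / 2) = Fintype.card S := by
  rw [integral_partitionFn_fieldWeight_pow]
  norm_num

lemma sum_monomial_two (h : S → ℝ) (i j : ℕ) :
    ∑ σ : Fin 2 → S, h (σ 0) ^ i * h (σ 1) ^ j = (∑ s, h s ^ i) * ∑ s, h s ^ j := by
  have hprod := Fintype.prod_sum fun (k : Fin 2) s => h s ^ ![i, j] k
  simpa [Fin.prod_univ_two] using hprod.symm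

lemma sum_monomial_three (h : S → ℝ) (i j k : ℕ) :
    ∑ σ : Fin 3 → S, h (σ 0) ^ i * h (σ 1) ^ j * h (σ 2) ^ k =
      (∑ s, h s ^ i) * (∑ s, h s ^ j) * ∑ s, h s ^ k := by
  have hprod := Fintype.prod_sum fun (m : Fin 3) s => h s ^ ![i, j, k] m
  simpa [Fin.prod_univ_three] using hprod.symm

lemma le_integral_partitionFn_fieldWeight_sq (hh : ∑ s, h s = 0) (hδ : ∀ s, |h s| ≤ δ)
    (hc : c * δ ^ 2 ≤ 1) :
    Fintype.card S ^ 2 * (1 - 2 / 9 * (c * δ ^ 2) ^ 3) + (c * ∑ s, h s ^ 2) ^ 2 / 2 ≤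
      ∫ J, partitionFn (fieldWeight h) J ^ 2 ∂poissonField (fun _ => c / 2) := by
  have htaylor (σ : Fin 2 → S) :
      (1 - 2 / 9 * (c * δ ^ 2) ^ 3) * (h (σ 0) ^ 0 * h (σ 1) ^ 0) +
        c * (h (σ 0) ^ 1 * h (σ 1) ^ 1) + c ^ 2 / 2 * (h (σ 0) ^ 2 * h (σ 1) ^ 2) ≤
        Real.exp (c * ((∏ k, (1 - h (σ k)) + ∏ k, (1 + h (σ k))) / 2 - 1)) := by
    have hsmall := abs_mul_mul_le (c := c) hδ (σ 0) (σ 1)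
    have hexp := (abs_le.1 (abs_exp_sub_quadratic_le (hsmall.trans hc))).1
    have hcube := pow_le_pow_left₀ (abs_nonneg _) hsmall 3
    have hexponent : c * ((∏ k, (1 - h (σ k)) + ∏ k, (1 + h (σ k))) / 2 - 1) =
        c * (h (σ 0) * h (σ 1)) := by
      rw [Fin.prod_univ_two, Fin.prod_univ_two]
      ring
    rw [hexponent]
    linarith
  rw [integral_partitionFn_fieldWeight_pow]
  refine le_of_eq_of_le ?_ (Finset.sum_le_sum fun σ _ => htaylor σ)
  simp only [Finset.sum_add_distrib, ← Finset.mul_sum, sum_monomial_two]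
  simp only [pow_one, hh, pow_zero, Finset.sum_const, Finset.card_univ, nsmul_eq_mul]
  ring

lemma integral_partitionFn_fieldWeight_cube_le (hh : ∑ s, h s = 0) (hδ : ∀ s, |h s| ≤ δ)
    (hc : 3 * (c * δ ^ 2) ≤ 1) :
    ∫ J, partitionFn (fieldWeight h) J ^ 3 ∂poissonField (fun _ => c / 2) ≤
      Fintype.card S ^ 3 * (1 + 6 * (c * δ ^ 2) ^ 3) +
        3 / 2 * Fintype.card S * (c * ∑ s, h s ^ 2) ^ 2 := by
  let monomial (σ : Fin 3 → S) (i j k : ℕ) : ℝ := h (σ 0) ^ i * h (σ 1) ^ j * h (σ 2) ^ k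
  have htaylor (σ : Fin 3 → S) :
      Real.exp (c * ((∏ k, (1 - h (σ k)) + ∏ k, (1 + h (σ k))) / 2 - 1)) ≤
        (1 + 6 * (c * δ ^ 2) ^ 3) * monomial σ 0 0 0 +
        c * (monomial σ 1 1 0 + monomial σ 1 0 1 + monomial σ 0 1 1) +
        c ^ 2 / 2 * (monomial σ 2 2 0 + monomial σ 2 0 2 + monomial σ 0 2 2) +
        c ^ 2 * (monomial σ 2 1 1 + monomial σ 1 2 1 + monomial σ 1 1 2) := by
    have hexponent : c * ((∏ k, (1 - h (σ k)) + ∏ k, (1 + h (σ k))) / 2 - 1) =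
        c * (h (σ 0) * h (σ 1)) + c * (h (σ 0) * h (σ 2)) + c * (h (σ 1) * h (σ 2)) := by
      rw [Fin.prod_univ_three, Fin.prod_univ_three]
      ring
    have hsmall : |c * (h (σ 0) * h (σ 1)) + c * (h (σ 0) * h (σ 2)) + c * (h (σ 1) * h (σ 2))| ≤
        3 * (c * δ ^ 2) :=
      (abs_add_three _ _ _).trans <| by
        linarith [abs_mul_mul_le (c := c) hδ (σ 0) (σ 1), abs_mul_mul_le (c := c) hδ (σ 0) (σ 2),
          abs_mul_mul_le (c := c) hδ (σ 1) (σ 2)]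
    have hexp := (abs_le.1 (abs_exp_sub_quadratic_le (hsmall.trans hc))).2
    have hcube := pow_le_pow_left₀ (abs_nonneg _) hsmall 3
    rw [hexponent]
    simp only [monomial]
    linarith
  rw [integral_partitionFn_fieldWeight_pow]
  refine (Finset.sum_le_sum fun σ _ => htaylor σ).trans_eq ?_
  simp only [monomial, Finset.sum_add_distrib, ← Finset.mul_sum, sum_monomial_three]
  simp only [pow_one, hh, pow_zero, Finset.sum_const, Finset.card_univ, nsmul_eq_mul]
  ring

theorem pressure_fieldWeight_le [Nonempty S] (hh : ∑ s, h s = 0) (hδ : ∀ s, |h s| ≤ δ)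
    (hδ₁ : δ < 1) (hc : 3 * (c * δ ^ 2) ≤ 1) :
    pressure (fieldWeight h) (fun _ => c / 2) ≤
      Real.log (Fintype.card S) - (c * (∑ s, h s ^ 2) / Fintype.card S) ^ 2 / 4 +
        7 / 3 * (c * δ ^ 2) ^ 3 := by
  have hcard : (0 : ℝ) < Fintype.card S := Nat.cast_pos.2 Fintype.card_pos
  have hc₁ : c * δ ^ 2 ≤ 1 := by linarith [mul_nonneg c.coe_nonneg (sq_nonneg δ)]
  have hmoments := pressure_le_moments (fieldWeight_pos fun s => (hδ s).trans_lt hδ₁)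
    (fun _ => c / 2) hcard
  have hsq := div_le_div_of_nonneg_right (le_integral_partitionFn_fieldWeight_sq hh hδ hc₁)
    (by positivity : (0 : ℝ) ≤ 2 * Fintype.card S ^ 2)
  have hcube := div_le_div_of_nonneg_right (integral_partitionFn_fieldWeight_cube_le hh hδ hc)
    (by positivity : (0 : ℝ) ≤ 3 * Fintype.card S ^ 3)
  rw [integral_partitionFn_fieldWeight, mul_div_assoc, mul_div_assoc 3 (Fintype.card S : ℝ),
    div_self hcard.ne'] at hmoments
  have hsum : (Fintype.card S ^ 3 * (1 + 6 * (c * δ ^ 2) ^ 3) +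
      3 / 2 * Fintype.card S * (c * ∑ s, h s ^ 2) ^ 2) / (3 * Fintype.card S ^ 3) -
      3 * ((Fintype.card S ^ 2 * (1 - 2 / 9 * (c * δ ^ 2) ^ 3) + (c * ∑ s, h s ^ 2) ^ 2 / 2) /
        (2 * Fintype.card S ^ 2)) + 7 / 6 =
      7 / 3 * (c * δ ^ 2) ^ 3 - (c * (∑ s, h s ^ 2) / Fintype.card S) ^ 2 / 4 := by
    field_simp
    ring
  linarith

end SingleSite

section SymmetryBreaking

variable {S : Type*} [Fintype S] {g : S → ℝ} {x : ℝ} {c : ℝ≥0}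

/-- A bound for the excess of the trial pressure of the field `ε • g` over the annealed pressure,
divided by `ε ^ 4`. At `ε = 0` it is a positive multiple of `1 - c * κ ^ 2`, with `κ` the
`edgeEigenvalue`, which makes `c * κ ^ 2 = 1` the threshold. -/
noncomputable def trialExcess (g : S → ℝ) (x : ℝ) (c : ℝ≥0) (ε : ℝ) : ℝ :=
  7 / 3 * (c * edgeEigenvalue S x ^ 2) ^ 3 * ε ^ 2 -
    (c * edgeEigenvalue S x ^ 2 * (∑ s, g s ^ 2) / Fintype.card S) ^ 2 / 4 +
    c / 4 * (edgeEigenvalue S x * (∑ s, g s ^ 2) / Fintype.card S) ^ 2 /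
      (1 - (edgeEigenvalue S x * (∑ s, g s ^ 2) / Fintype.card S) ^ 2 * ε ^ 4)

lemma eventually_trialExcess_neg [Nonempty S] (hg : g ≠ 0)
    (hthreshold : 1 < c * edgeEigenvalue S x ^ 2) : ∀ᶠ ε in nhds 0, trialExcess g x c ε < 0 := by
  have hcont : ContinuousAt (trialExcess g x c) 0 := by
    unfold trialExcess
    exact .add (by fun_prop) (.div (by fun_prop) (by fun_prop) (by norm_num))
  refine hcont.eventually_lt continuousAt_const ?_
  obtain ⟨s, hs⟩ := Function.ne_iff.1 hg
  have hnorm : 0 < ∑ s, g s ^ 2 :=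
    Finset.sum_pos' (fun s _ => sq_nonneg _) ⟨s, Finset.mem_univ s, sq_pos_of_ne_zero hs⟩
  have hvalue : trialExcess g x c 0 = c * edgeEigenvalue S x ^ 2 *
      ((∑ s, g s ^ 2) / Fintype.card S) ^ 2 / 4 * (1 - c * edgeEigenvalue S x ^ 2) := by
    unfold trialExcess
    ring
  rw [hvalue]
  exact mul_neg_of_pos_of_neg (by positivity) (sub_neg.2 hthreshold)

lemma neg_log_one_sub_le {w : ℝ} (hw : w < 1) : -Real.log (1 - w) ≤ w / (1 - w) := by
  have hpos : 0 < 1 - w := sub_pos.2 hw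
  have hlog := Real.one_sub_inv_le_log_of_pos hpos
  have hinv : w / (1 - w) = (1 - w)⁻¹ - 1 := by
    field_simp
    ring
  linarith

lemma trialPressure_smul_le [Nontrivial S] (hx₀ : 0 < x) (hx₁ : x ≤ 1) (hg : ∑ s, g s = 0)
    (hg₁ : ∀ s, |g s| ≤ 1) {ε : ℝ} (hε₀ : 0 ≤ ε) (hε₁ : ε ≤ 1)
    (hsmall : 3 * (c * (edgeEigenvalue S x * ε) ^ 2) ≤ 1)
    (hoverlap : (edgeEigenvalue S x * (∑ s, g s ^ 2) / Fintype.card S) ^ 2 * ε ^ 4 < 1) :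
    trialPressure (ε • g) x c ≤ Real.log (Fintype.card S) +
      c / 2 * Real.log (1 - (1 - x) / Fintype.card S) + ε ^ 4 * trialExcess g x c ε := by
  set κ := edgeEigenvalue S x with hκ
  have hκ₀ : 0 ≤ κ := edgeEigenvalue_nonneg hx₀ hx₁
  have hκ₁ : κ < 1 := edgeEigenvalue_lt_one hx₀
  have hfield (s : S) : |(κ • ε • g) s| ≤ κ * ε := by
    simp only [Pi.smul_apply, smul_eq_mul, abs_mul, abs_of_nonneg hκ₀, abs_of_nonneg hε₀]
    gcongr
    exact mul_le_of_le_one_right hε₀ (hg₁ s)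
  have hsum : ∑ s, (κ • ε • g) s = 0 := by
    simp only [Pi.smul_apply, smul_eq_mul, ← Finset.mul_sum, hg, mul_zero]
  have hsite := pressure_fieldWeight_le hsum hfield
    ((mul_le_of_le_one_right hκ₀ hε₁).trans_lt hκ₁) hsmall
  have hedge := mul_le_mul_of_nonneg_left (neg_log_one_sub_le hoverlap)
    (by positivity : (0 : ℝ) ≤ c / 4)
  have hquad (r : ℝ) (f : S → ℝ) : ∑ s, (r • f) s ^ 2 = r ^ 2 * ∑ s, f s ^ 2 := by
    simp only [Pi.smul_apply, smul_eq_mul, mul_pow, Finset.mul_sum]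
  have hpair : (κ * (ε ^ 2 * ∑ s, g s ^ 2) / Fintype.card S) ^ 2 =
      (κ * (∑ s, g s ^ 2) / Fintype.card S) ^ 2 * ε ^ 4 := by ring
  rw [hquad, hquad] at hsite
  rw [trialPressure, trialExcess, ← hκ, hquad, hpair]
  linear_combination hsite + hedge

lemma exists_balanced_ne_zero [Nontrivial S] :
    ∃ g : S → ℝ, ∑ s, g s = 0 ∧ (∀ s, |g s| ≤ 1) ∧ g ≠ 0 := by
  classical
  obtain ⟨a, b, hab⟩ := exists_pair_ne S
  refine ⟨Pi.single a 1 - Pi.single b 1, by simp, fun s => ?_, fun h => ?_⟩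
  · simp only [Pi.sub_apply, Pi.single_apply]
    split_ifs <;> norm_num
  · simpa [hab] using congrFun h a

theorem exists_trialPressure_lt [Nontrivial S] (hx₀ : 0 < x) (hx₁ : x ≤ 1)
    (hthreshold : 1 < c * edgeEigenvalue S x ^ 2) :
    ∃ g : S → ℝ, ∑ s, g s = 0 ∧ (∀ s, |g s| ≤ 1) ∧ trialPressure g x c <
      Real.log (Fintype.card S) + c / 2 * Real.log (1 - (1 - x) / Fintype.card S) := by
  obtain ⟨g, hg, hg₁, hg₀⟩ := exists_balanced_ne_zero (S := S)
  have heventually {f : ℝ → ℝ} (hf : Continuous f) (hf₀ : f 0 = 0) : ∀ᶠ ε in nhds 0, f ε < 1 :=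
    hf.continuousAt.eventually_lt continuousAt_const (hf₀.trans_lt one_pos)
  obtain ⟨ε, ⟨hexcess, hsmall, hoverlap, hε₁⟩, hε₀ : 0 < ε⟩ :=
    (((eventually_trialExcess_neg hg₀ hthreshold).and
      ((heventually (f := fun ε => 3 * (c * (edgeEigenvalue S x * ε) ^ 2)) (by fun_prop)
        (by norm_num)).and
      ((heventually (f := fun ε => (edgeEigenvalue S x * (∑ s, g s ^ 2) / Fintype.card S) ^ 2 *
        ε ^ 4) (by fun_prop) (by norm_num)).and (heventually continuous_id rfl)))).filter_mono
      nhdsWithin_le_nhds |>.and (self_mem_nhdsWithin (s := Set.Ioi (0 : ℝ)))).exists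
  refine ⟨ε • g, ?_, fun s => ?_, ?_⟩
  · simp only [Pi.smul_apply, smul_eq_mul, ← Finset.mul_sum, hg, mul_zero]
  · rw [Pi.smul_apply, smul_eq_mul, abs_mul, abs_of_pos hε₀]
    exact mul_le_one₀ hε₁.le (abs_nonneg _) (hg₁ s)
  · have hbound := trialPressure_smul_le hx₀ hx₁ hg hg₁ hε₀.le hε₁.le hsmall.le hoverlap
    exact hbound.trans_lt (add_lt_of_neg_right _ (mul_neg_of_pos_of_neg (by positivity) hexcess))

end SymmetryBreaking

section ThermodynamicLimit

lemma exists_tendsto_div_of_superadditive {u : ℕ → ℝ} (hu : ∀ m n, u m + u n ≤ u (m + n)) {R : ℝ}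
    (hR : ∀ n ≠ 0, u n ≤ n * R) :
    ∃ P ≤ R, Tendsto (fun n : ℕ => u n / n) atTop (nhds P) := by
  have hsub : Subadditive fun n => -u n := fun m n => by linarith [hu m n]
  have hdiv (n : ℕ) (hn : n ≠ 0) : -R ≤ -u n / n := by
    rw [neg_div, neg_le_neg_iff, div_le_iff₀' (by positivity)]
    exact hR n hn
  have hbdd : BddBelow (Set.range fun n : ℕ => -u n / n) := by
    refine ⟨min 0 (-R), ?_⟩
    rintro _ ⟨n, rfl⟩
    rcases eq_or_ne n 0 with rfl | hn
    · simp
    · exact (min_le_right _ _).trans (hdiv n hn)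
  have hlim := hsub.tendsto_lim hbdd
  refine ⟨-hsub.lim, ?_, by simpa [neg_div] using hlim.neg⟩
  exact neg_le.1 (ge_of_tendsto hlim ((eventually_ne_atTop 0).mono hdiv))

theorem exists_tendsto_pottsPressure_div {S : Type*} [Fintype S] [DecidableEq S] [Nontrivial S]
    {x : ℝ} (hx₀ : 0 < x) (hx₁ : x ≤ 1) (c : ℝ≥0) {g : S → ℝ} (hg : ∑ s, g s = 0)
    (hg₁ : ∀ s, |g s| ≤ 1) :
    ∃ P ≤ trialPressure g x c,
      Tendsto (fun N : ℕ => pottsPressure (Fin N) S x c / N) atTop (nhds P) := by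
  refine exists_tendsto_div_of_superadditive (fun m n => ?_) fun N hN => ?_
  · rw [← pottsPressure_congr finSumFinEquiv]
    exact pottsPressure_add_le_sum hx₀ hx₁ c
  · have : NeZero N := ⟨hN⟩
    simpa using pottsPressure_le_card_mul_trialPressure (V := Fin N) hx₀ hx₁ c hg hg₁

variable {q N : ℕ} {β : ℝ}

lemma pottsZ_eq_partitionFn (J : Fin N → Fin N → ℕ) :
    potts.Z q N (fun i j => β * (J i j : ℝ)) =
      partitionFn (pottsWeight (Real.exp (-β)) : Fin N × Fin N → (Fin N → Fin q) → ℝ)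
        (Function.uncurry J) := by
  refine Finset.sum_congr rfl fun σ _ => ?_
  simp only [potts.H, ← Finset.sum_neg_distrib, Real.exp_sum, Fintype.prod_prod_type]
  refine Finset.prod_congr rfl fun i _ => Finset.prod_congr rfl fun j _ => ?_
  simp only [pottsWeight, Function.uncurry]
  split_ifs
  · rw [← Real.exp_nat_mul]
    ring_nf
  · simp

lemma potts_p_eq_pottsPressure_div [NeZero q] (c : ℝ≥0) :
    potts.p q N β c = pottsPressure (Fin N) (Fin q) (Real.exp (-β)) c / N := by
  have hsum := hasSum_integral_poissonField (integrable_log_partitionFn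
    (pottsWeight_pos (V := Fin N) (S := Fin q) (Real.exp_pos (-β)))
    fun _ => c / (2 * Fintype.card (Fin N)))
  rw [pottsPressure, pressure, ← hsum.tsum_eq, potts.p, potts.pmat, potts.E, ← tsum_div_const,
    ← (Equiv.curry (Fin N) (Fin N) ℕ).symm.tsum_eq]
  refine tsum_congr fun J => ?_
  rw [poissonField_real_singleton, pottsZ_eq_partitionFn, Fintype.prod_prod_type,
    one_div_mul_eq_div, mul_div_assoc]
  simp [poissonPMF, Function.uncurry]

lemma one_lt_mul_sq_edgeEigenvalue (hq : 2 ≤ q) {c x : ℝ} (hc : ((q : ℝ) - 1) ^ 2 < c)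
    (hx₀ : 0 < x) (hx : x < 1 - q / (1 + Real.sqrt c)) :
    1 < c * edgeEigenvalue (Fin q) x ^ 2 := by
  have hq₂ : (2 : ℝ) ≤ q := by exact_mod_cast hq
  have hdenom : 0 < (q : ℝ) - (1 - x) := by linarith
  rw [lt_sub_comm, div_lt_iff₀ (by positivity)] at hx
  have hsqrt : 1 < Real.sqrt c * edgeEigenvalue (Fin q) x := by
    rw [edgeEigenvalue, Fintype.card_fin, ← mul_div_assoc, lt_div_iff₀ hdenom]
    linarith
  calc (1 : ℝ) < (Real.sqrt c * edgeEigenvalue (Fin q) x) ^ 2 := one_lt_pow₀ hsqrt two_ne_zero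
    _ = c * edgeEigenvalue (Fin q) x ^ 2 := by
        rw [mul_pow, Real.sq_sqrt ((sq_nonneg _).trans hc.le)]

lemma exp_neg_lt_of_neg_log_lt {y : ℝ} (hy : 0 < y) (hβ : -Real.log y < β) :
    Real.exp (-β) < y := by
  rw [← Real.lt_log_iff_exp_lt hy]
  linarith

end ThermodynamicLimit

end DilutePotts

/-- for `c > (q-1)²` and `β > -ln(1 - q/(1+√c))`, the limiting
quenched pressure is strictly below the annealed pressure. -/
theorem statement9 (q : ℕ) (hq : 2 ≤ q) (β c : ℝ)
    (hc : ((q : ℝ) - 1) ^ 2 < c)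
    (hβ : -Real.log (1 - (q : ℝ) / (1 + Real.sqrt c)) < β) :
    ∃ P : ℝ, Filter.Tendsto (fun N => potts.p q N β c) Filter.atTop (nhds P) ∧
      P < potts.annealed q β c := by
  have : NeZero q := ⟨by omega⟩
  have : Nontrivial (Fin q) := Fin.nontrivial_iff_two_le.2 hq
  lift c to NNReal using (sq_nonneg _).trans hc.le
  have hsqrt : (q : ℝ) - 1 < Real.sqrt c := Real.lt_sqrt_of_sq_lt hc
  have hratio : (q : ℝ) / (1 + Real.sqrt c) < 1 := by
    rw [div_lt_one (by positivity)]
    linarith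
  have hx₀ : 0 < Real.exp (-β) := Real.exp_pos _
  have hx : Real.exp (-β) < 1 - q / (1 + Real.sqrt c) :=
    DilutePotts.exp_neg_lt_of_neg_log_lt (sub_pos.2 hratio) hβ
  have hx₁ : Real.exp (-β) ≤ 1 := hx.le.trans (sub_le_self 1 (by positivity))
  obtain ⟨g, hg, hg₁, hlt⟩ := DilutePotts.exists_trialPressure_lt hx₀ hx₁
    (DilutePotts.one_lt_mul_sq_edgeEigenvalue hq hc hx₀ hx)
  obtain ⟨P, hP, hlim⟩ := DilutePotts.exists_tendsto_pottsPressure_div hx₀ hx₁ c hg hg₁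
  refine ⟨P, by simpa only [DilutePotts.potts_p_eq_pottsPressure_div] using hlim, ?_⟩
  simpa only [potts.annealed, Fintype.card_fin] using hP.trans_lt hlt
end

section
/- Let β, c > 0, let x = (1−e^{−β})/(q−1+e^{−β}), and define g^(1)(β,c,q,t) = Σ_{k=0}^∞ π_c(k) Σ_{τ₁,…,τ_k ∈ [q]} q^{−k} ln( Σ_{s∈[q]} q^{−1} Π_{i=1}^k (1 − x t (q δ(τ_i,s) − 1)) ). Then as t → 0, g^(1)(β,c,q,t) = −(1/4)(q−1) c² x⁴ t⁴ + O(t⁶); that is, there exist constants C > 0 and δ₀ > 0 such that |g^(1)(β,c,q,t) + (1/4)(q−1) c² x⁴ t⁴| ≤ C t⁶ for all |t| ≤ δ₀. -/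
/-- The replica symmetric functional
`g⁽¹⁾(β,c,q,t) = Σ_k π_c(k) Σ_{τ₁,…,τ_k} q^{-k}
  ln(Σ_s q⁻¹ ∏_i (1 - x t (q δ(τ_i,s) - 1)))`, where
`x = (1-e^{-β})/(q-1+e^{-β})`. -/
noncomputable def g1 (q : ℕ) (β c t : ℝ) : ℝ :=
  ∑' k : ℕ, poissonPMF c k *
    ∑ τ : Fin k → Fin q, ((q : ℝ) ^ k)⁻¹ *
      Real.log (∑ s : Fin q, (q : ℝ)⁻¹ *
        ∏ i : Fin k,
          (1 - ((1 - Real.exp (-β)) / ((q : ℝ) - 1 + Real.exp (-β))) * t *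
            ((q : ℝ) * (if τ i = s then (1 : ℝ) else 0) - 1)))


/-!
Write `u = x t` and let `Z_k(τ)` be the argument of the logarithm, an average over `s` of products
of `1 - u w(τ_i, s)`, where `w(j, s) = q δ(j, s) - 1` has mean zero in either variable. The mean
zero in `s` cancels the linear term of `Z_k - 1`, so `Z_k - 1 = O(u²)` and
`ln Z_k = (Z_k - 1) - (Z_k - 1)² / 2 + O(u⁶)`. The mean zero in `j` gives `𝔼 Z_k = 1`, and
`𝔼 Z_k² = 𝔼_{s,s'} (1 + u² K(s, s'))^k` with the covariance `K(s, s') = 𝔼_j w(j, s) w(j, s')`.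
Poisson averaging turns the `k`-th powers into exponentials, so that
`g⁽¹⁾ = -(𝔼_{s,s'} exp (c u² K(s, s')) - 1) / 2 + O(u⁶) = -(c² u⁴ / 4) 𝔼_{s,s'} K(s, s')² + O(u⁶)`.
The errors in `k` grow at most like `16^k`, which the Poisson weights absorb. For the kernel at hand
`K = w` and `𝔼 K² = q - 1`.
-/

open Asymptotics Filter Topology
open scoped BigOperators

section Products

variable {ι R : Type*} [NormedCommRing R] {s : Finset ι} {f : ι → R} {v : ℝ}

lemma norm_prod_one_add_sub_one_le_of_norm_le (hv : v ≤ 1) (hf : ∀ i ∈ s, ‖f i‖ ≤ v) :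
    ‖∏ i ∈ s, (1 + f i) - 1‖ ≤ v * (2 ^ s.card - 1) := by
  induction s using Finset.cons_induction with
  | empty => simp
  | cons a s ha ih =>
    rw [Finset.forall_mem_cons] at hf
    obtain ⟨hfa, hfs⟩ := hf
    rw [Finset.prod_cons, Finset.card_cons]
    set P := ∏ i ∈ s, (1 + f i)
    calc ‖(1 + f a) * P - 1‖ = ‖(P - 1) + f a * (P - 1) + f a‖ := by ring_nf
      _ ≤ ‖P - 1‖ + ‖f a‖ * ‖P - 1‖ + ‖f a‖ :=
        norm_add₃_le.trans (by gcongr; exact norm_mul_le _ _)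
      _ ≤ v * (2 ^ s.card - 1) + 1 * (v * (2 ^ s.card - 1)) + v := by
        gcongr
        exacts [ih hfs, hfa.trans hv, ih hfs]
      _ = v * (2 ^ (s.card + 1) - 1) := by ring

lemma norm_prod_one_add_sub_one_sub_sum_le_of_norm_le (hv : v ≤ 1) (hf : ∀ i ∈ s, ‖f i‖ ≤ v) :
    ‖∏ i ∈ s, (1 + f i) - 1 - ∑ i ∈ s, f i‖ ≤ v ^ 2 * 2 ^ s.card := by
  induction s using Finset.cons_induction with
  | empty => simpa using sq_nonneg v
  | cons a s ha ih =>
    rw [Finset.forall_mem_cons] at hf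
    obtain ⟨hfa, hfs⟩ := hf
    have v_nonneg : 0 ≤ v := (norm_nonneg _).trans hfa
    rw [Finset.prod_cons, Finset.sum_cons, Finset.card_cons]
    set P := ∏ i ∈ s, (1 + f i)
    set S := ∑ i ∈ s, f i
    calc ‖(1 + f a) * P - 1 - (f a + S)‖ = ‖(P - 1 - S) + f a * (P - 1)‖ := by ring_nf
      _ ≤ ‖P - 1 - S‖ + ‖f a‖ * ‖P - 1‖ :=
        (norm_add_le _ _).trans (by gcongr; exact norm_mul_le _ _)
      _ ≤ v ^ 2 * 2 ^ s.card + v * (v * (2 ^ s.card - 1)) := by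
        gcongr
        exacts [ih hfs, norm_prod_one_add_sub_one_le_of_norm_le hv hfs]
      _ ≤ v ^ 2 * 2 ^ (s.card + 1) := by
        rw [pow_succ 2]
        linarith [sq_nonneg v]

end Products

section Expectations

variable {ι : Type*} [Fintype ι]

lemma expect_prod_comp_eq_expect_pow {R : Type*} [CommSemiring R] [Module ℚ≥0 R]
    [IsScalarTower ℚ≥0 R R] [SMulCommClass ℚ≥0 R R] (f : ι → R) (k : ℕ) :
    𝔼 τ : Fin k → ι, ∏ i, f (τ i) = (𝔼 j, f j) ^ k := by
  simpa only [Fintype.piFinset_univ] using (Finset.expect_pow Finset.univ f k).symm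

lemma abs_expect_le_of_forall_abs_le [Nonempty ι] {f : ι → ℝ} {B : ℝ} (hf : ∀ i, |f i| ≤ B) :
    |𝔼 i, f i| ≤ B :=
  (Finset.abs_expect_le _ _).trans (Finset.expect_le Finset.univ_nonempty fun i _ ↦ hf i)

lemma hasSum_expect {α : Type*} {f : ι → α → ℝ} {a : ι → ℝ} (hf : ∀ i, HasSum (f i) (a i)) :
    HasSum (fun k ↦ 𝔼 i, f i k) (𝔼 i, a i) := by
  simp only [Fintype.expect_eq_sum_div_card]
  exact (hasSum_sum fun i _ ↦ hf i).div_const _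

lemma isBigO_expect {α : Type*} {l : Filter α} {f : ι → α → ℝ} {g : α → ℝ}
    (hf : ∀ i, f i =O[l] g) : (fun u ↦ 𝔼 i, f i u) =O[l] g := by
  simp only [Fintype.expect_eq_sum_div_card, div_eq_inv_mul]
  exact (IsBigO.fun_sum fun i _ ↦ hf i).const_mul_left _

end Expectations

section LogTaylor

/-- The error of the second-order Taylor polynomial of the logarithm at `1`. -/
noncomputable def logTaylorRemainder (z : ℝ) : ℝ :=
  Real.log z - (z - 1) + (z - 1) ^ 2 / 2

lemma hasDerivAt_logTaylorRemainder {z : ℝ} (hz : z ≠ 0) :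
    HasDerivAt logTaylorRemainder ((z - 1) ^ 2 / z) z := by
  have hsub : HasDerivAt (fun z : ℝ ↦ z - 1) 1 z := (hasDerivAt_id z).sub_const 1
  refine (((Real.hasDerivAt_log hz).sub hsub).add ((hsub.pow 2).div_const 2)).congr_deriv ?_
  field_simp
  ring

lemma abs_logTaylorRemainder_le {z : ℝ} (hz : 0 < z) :
    |logTaylorRemainder z| ≤ |z - 1| ^ 3 * (1 + z⁻¹) := by
  have segment_pos : ∀ y ∈ Set.uIcc 1 z, 0 < y := fun y hy ↦ (lt_min one_pos hz).trans_le hy.1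
  have deriv_bound : ∀ y ∈ Set.uIcc 1 z, ‖(y - 1) ^ 2 / y‖ ≤ |z - 1| ^ 2 * (1 + z⁻¹) := by
    intro y hy
    have y_pos := segment_pos y hy
    have inv_le : y⁻¹ ≤ 1 + z⁻¹ := by
      rcases le_total 1 z with h | h
      · rw [Set.uIcc_of_le h] at hy
        linarith [inv_le_one_of_one_le₀ hy.1, inv_pos.2 hz]
      · rw [Set.uIcc_of_ge h] at hy
        linarith [inv_anti₀ hz hy.1]
    rw [Real.norm_of_nonneg (by positivity), div_eq_mul_inv, ← sq_abs (y - 1)]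
    gcongr ?_ ^ 2 * ?_
    exact Set.abs_sub_left_of_mem_uIcc hy
  have mean_value := (convex_uIcc (1 : ℝ) z).norm_image_sub_le_of_norm_hasDerivWithin_le
    (fun y hy ↦ (hasDerivAt_logTaylorRemainder (segment_pos y hy).ne').hasDerivWithinAt)
    deriv_bound Set.left_mem_uIcc Set.right_mem_uIcc
  have at_one : logTaylorRemainder 1 = 0 := by simp [logTaylorRemainder]
  rw [at_one, sub_zero, Real.norm_eq_abs, Real.norm_eq_abs] at mean_value
  linarith

end LogTaylor

section PoissonSeries

lemma hasSum_poissonPMF_mul_pow (c a : ℝ) :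
    HasSum (fun k ↦ poissonPMF c k * a ^ k) (Real.exp (c * (a - 1))) := by
  have exp_series := (NormedSpace.expSeries_div_hasSum_exp (c * a)).mul_left (Real.exp (-c))
  rw [← Real.exp_eq_exp_ℝ, ← Real.exp_add] at exp_series
  have terms_eq : (fun k ↦ poissonPMF c k * a ^ k) =
      fun k : ℕ ↦ Real.exp (-c) * ((c * a) ^ k / k.factorial) := by
    ext k
    rw [poissonPMF, mul_pow]
    ring
  rwa [terms_eq, show c * (a - 1) = -c + c * a by ring]

variable {f : ℕ → ℝ} {a B : ℝ}

lemma norm_poissonPMF_mul_le (c : ℝ) (hf : ∀ k, |f k| ≤ B * a ^ k) (k : ℕ) :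
    ‖poissonPMF c k * f k‖ ≤ B * (|poissonPMF c k| * a ^ k) := by
  rw [norm_mul, Real.norm_eq_abs, Real.norm_eq_abs, mul_left_comm]
  gcongr
  exact hf k

lemma summable_abs_poissonPMF_mul_pow (c : ℝ) (ha : 0 ≤ a) :
    Summable fun k ↦ |poissonPMF c k| * a ^ k := by
  simpa only [abs_mul, abs_pow, abs_of_nonneg ha] using (hasSum_poissonPMF_mul_pow c a).summable.abs

lemma summable_poissonPMF_mul (c : ℝ) (ha : 0 ≤ a) (hf : ∀ k, |f k| ≤ B * a ^ k) :
    Summable fun k ↦ poissonPMF c k * f k :=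
  .of_norm_bounded ((summable_abs_poissonPMF_mul_pow c ha).mul_left B) (norm_poissonPMF_mul_le c hf)

lemma abs_tsum_poissonPMF_mul_le (c : ℝ) (ha : 0 ≤ a) (hf : ∀ k, |f k| ≤ B * a ^ k) :
    |∑' k, poissonPMF c k * f k| ≤ B * ∑' k, |poissonPMF c k| * a ^ k :=
  tsum_of_norm_bounded ((summable_abs_poissonPMF_mul_pow c ha).hasSum.mul_left B)
    (norm_poissonPMF_mul_le c hf)

end PoissonSeries

section SmallParameter

lemma eventually_abs_mul_le_half (M : ℝ) : ∀ᶠ u : ℝ in 𝓝 0, |u| * M ≤ 1 / 2 := by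
  have : Tendsto (fun u : ℝ ↦ |u| * M) (𝓝 0) (𝓝 0) :=
    Continuous.tendsto' (by fun_prop) _ _ (by simp)
  exact this.eventually_le_const (by norm_num)

lemma isBigO_exp_mul_sq_sub (a : ℝ) :
    (fun u : ℝ ↦ Real.exp (a * u ^ 2) - (1 + a * u ^ 2 + a ^ 2 * u ^ 4 / 2)) =O[𝓝 0] (· ^ 6) := by
  have tendsto_zero : Tendsto (fun u : ℝ ↦ a * u ^ 2) (𝓝 0) (𝓝 0) :=
    Continuous.tendsto' (by fun_prop) _ _ (by simp)
  refine (((Real.exp_sub_sum_range_isBigO_pow 3).comp_tendsto tendsto_zero).congr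
    (g₂ := fun u ↦ a ^ 3 * u ^ 6) (fun u ↦ ?_) fun u ↦ ?_).trans
    (isBigO_const_mul_self _ _ _)
  · simp only [Function.comp_apply, Finset.sum_range_succ, Finset.sum_range_zero, Nat.factorial]
    push_cast
    ring
  · simp only [Function.comp_apply]
    ring

end SmallParameter

section LocalPartition

variable {ι σ : Type*} [Fintype σ] {k : ℕ}

/-- The partition function of a spin in `σ` receiving the messages `τ` through the
interaction kernel `w` at strength `u`, normalised by averaging over the spin. -/
noncomputable def localPartition (w : ι → σ → ℝ) (u : ℝ) (τ : Fin k → ι) : ℝ :=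
  𝔼 s, ∏ i, (1 - u * w (τ i) s)

variable {w : ι → σ → ℝ} {u M : ℝ}

section Bounds

variable [Nonempty σ]

lemma half_pow_le_localPartition (hw : ∀ j s, |w j s| ≤ M) (hu : |u| * M ≤ 1 / 2)
    (τ : Fin k → ι) : (1 / 2) ^ k ≤ localPartition w u τ := by
  have factor_ge (j : ι) (s : σ) : 1 / 2 ≤ 1 - u * w j s := by
    have : |u * w j s| ≤ |u| * M := by
      rw [abs_mul]
      gcongr
      exact hw j s
    linarith [le_abs_self (u * w j s)]
  refine Finset.le_expect Finset.univ_nonempty fun s _ ↦ ?_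
  calc (1 / 2 : ℝ) ^ k = ∏ _i : Fin k, (1 / 2 : ℝ) := by simp
    _ ≤ ∏ i, (1 - u * w (τ i) s) :=
      Finset.prod_le_prod (fun _ _ ↦ by norm_num) fun i _ ↦ factor_ge (τ i) s

lemma abs_localPartition_sub_one_le (hrow : ∀ j, 𝔼 s, w j s = 0) (hw : ∀ j s, |w j s| ≤ M)
    (hu : |u| * M ≤ 1) (τ : Fin k → ι) :
    |localPartition w u τ - 1| ≤ (|u| * M) ^ 2 * 2 ^ k := by
  have linear_term : 𝔼 s, ∑ i, -(u * w (τ i) s) = 0 := by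
    simp only [Finset.expect_sum_comm, Finset.expect_neg_distrib, ← Finset.mul_expect, hrow,
      mul_zero, neg_zero, Finset.sum_const_zero]
  have centred : localPartition w u τ - 1 =
      𝔼 s, (∏ i, (1 + -(u * w (τ i) s)) - 1 - ∑ i, -(u * w (τ i) s)) := by
    rw [Finset.expect_sub_distrib, Finset.expect_sub_distrib, linear_term, Fintype.expect_one,
      sub_zero]
    simp only [localPartition, sub_eq_add_neg]
  rw [centred]
  refine abs_expect_le_of_forall_abs_le fun s ↦ ?_
  have term_le : ∀ i ∈ Finset.univ, ‖-(u * w (τ i) s)‖ ≤ |u| * M := fun i _ ↦ by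
    rw [norm_neg, norm_mul, Real.norm_eq_abs, Real.norm_eq_abs]
    gcongr
    exact hw _ _
  simpa only [Finset.card_fin, Real.norm_eq_abs] using
    norm_prod_one_add_sub_one_sub_sum_le_of_norm_le hu term_le

lemma abs_logTaylorRemainder_localPartition_le (hrow : ∀ j, 𝔼 s, w j s = 0)
    (hw : ∀ j s, |w j s| ≤ M) (hu : |u| * M ≤ 1 / 2) (τ : Fin k → ι) :
    |logTaylorRemainder (localPartition w u τ)| ≤ 2 * (|u| * M) ^ 6 * 16 ^ k := by
  have Z_ge := half_pow_le_localPartition hw hu τ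
  have Z_pos : 0 < localPartition w u τ := lt_of_lt_of_le (by positivity) Z_ge
  have Z_near_one := abs_localPartition_sub_one_le hrow hw (by linarith) τ
  set Z := localPartition w u τ
  have Z_inv_le : Z⁻¹ ≤ 2 ^ k := by
    simpa using inv_anti₀ (by positivity) Z_ge
  calc |logTaylorRemainder Z| ≤ |Z - 1| ^ 3 * (1 + Z⁻¹) := abs_logTaylorRemainder_le Z_pos
    _ ≤ ((|u| * M) ^ 2 * 2 ^ k) ^ 3 * (2 ^ k + 2 ^ k) := by
      gcongr
      exact one_le_pow₀ one_le_two
    _ = 2 * (|u| * M) ^ 6 * (2 ^ 4) ^ k := by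
      rw [pow_right_comm]
      ring
    _ = 2 * (|u| * M) ^ 6 * 16 ^ k := by norm_num

end Bounds

section Moments

variable [Fintype ι]

/-- The covariance of the columns `s` and `s'` of a kernel `w` with centred columns, under the
uniform distribution of the row. -/
noncomputable def columnCovariance {σ : Type*} (w : ι → σ → ℝ) (s s' : σ) : ℝ :=
  𝔼 j, w j s * w j s'

lemma expect_localPartition [Nonempty ι] [Nonempty σ] (hcol : ∀ s, 𝔼 j, w j s = 0) (u : ℝ)
    (k : ℕ) : 𝔼 τ : Fin k → ι, localPartition w u τ = 1 := by
  have column_mean (s : σ) : 𝔼 j, (1 - u * w j s) = 1 := by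
    rw [Finset.expect_sub_distrib, ← Finset.mul_expect, hcol, Fintype.expect_one, mul_zero,
      sub_zero]
  calc 𝔼 τ : Fin k → ι, localPartition w u τ
      = 𝔼 s, 𝔼 τ : Fin k → ι, ∏ i, (1 - u * w (τ i) s) := Finset.expect_comm _ _ _
    _ = 𝔼 _s : σ, 1 := by
      congr! with s
      rw [expect_prod_comp_eq_expect_pow fun j ↦ 1 - u * w j s, column_mean, one_pow]
    _ = 1 := Fintype.expect_one

lemma expect_localPartition_sq [Nonempty ι] (hcol : ∀ s, 𝔼 j, w j s = 0) (u : ℝ) (k : ℕ) :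
    𝔼 τ : Fin k → ι, localPartition w u τ ^ 2 =
      𝔼 s, 𝔼 s', (1 + u ^ 2 * columnCovariance w s s') ^ k := by
  have pair_mean (s s' : σ) :
      𝔼 j, (1 - u * w j s) * (1 - u * w j s') = 1 + u ^ 2 * columnCovariance w s s' := by
    calc 𝔼 j, (1 - u * w j s) * (1 - u * w j s')
        = 𝔼 j, (1 - u * w j s - u * w j s' + u ^ 2 * (w j s * w j s')) := by
          refine Finset.expect_congr rfl fun j _ ↦ ?_
          ring
      _ = 1 + u ^ 2 * columnCovariance w s s' := by
          simp only [Finset.expect_add_distrib, Finset.expect_sub_distrib, ← Finset.mul_expect,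
            hcol, Fintype.expect_one, columnCovariance, mul_zero, sub_zero]
  calc 𝔼 τ : Fin k → ι, localPartition w u τ ^ 2
      = 𝔼 τ : Fin k → ι, 𝔼 s, 𝔼 s', ∏ i, (1 - u * w (τ i) s) * (1 - u * w (τ i) s') := by
        simp only [localPartition, sq, Finset.expect_mul_expect, Finset.prod_mul_distrib]
    _ = 𝔼 s, 𝔼 s', 𝔼 τ : Fin k → ι, ∏ i, (1 - u * w (τ i) s) * (1 - u * w (τ i) s') := by
        rw [Finset.expect_comm]
        exact Finset.expect_congr rfl fun s _ ↦ Finset.expect_comm _ _ _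
    _ = 𝔼 s, 𝔼 s', (1 + u ^ 2 * columnCovariance w s s') ^ k := by
        congr! with s _ s'
        rw [expect_prod_comp_eq_expect_pow fun j ↦ (1 - u * w j s) * (1 - u * w j s'), pair_mean]

lemma expect_columnCovariance (hrow : ∀ j, 𝔼 s, w j s = 0) (s : σ) :
    𝔼 s', columnCovariance w s s' = 0 := by
  unfold columnCovariance
  rw [Finset.expect_comm]
  simp only [← Finset.mul_expect, hrow, mul_zero, Finset.expect_const_zero]

end Moments

section Expansion

variable [Fintype ι]

lemma abs_kernel_le_norm (w : ι → σ → ℝ) (j : ι) (s : σ) : |w j s| ≤ ‖w‖ :=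
  (norm_le_pi_norm (w j) s).trans (norm_le_pi_norm w j)

lemma isBigO_expect_exp_columnCovariance [Nonempty σ] (hrow : ∀ j, 𝔼 s, w j s = 0) (c : ℝ) :
    (fun u : ℝ ↦ 𝔼 s, 𝔼 s', Real.exp (c * u ^ 2 * columnCovariance w s s') -
      (1 + c ^ 2 / 2 * (𝔼 s, 𝔼 s', columnCovariance w s s' ^ 2) * u ^ 4)) =O[𝓝 0] (· ^ 6) := by
  refine (isBigO_expect fun s ↦ isBigO_expect fun s' ↦
    isBigO_exp_mul_sq_sub (c * columnCovariance w s s')).congr_left fun u ↦ ?_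
  have expand (s s' : σ) : Real.exp (c * columnCovariance w s s' * u ^ 2) -
      (1 + c * columnCovariance w s s' * u ^ 2 + (c * columnCovariance w s s') ^ 2 * u ^ 4 / 2) =
      Real.exp (c * u ^ 2 * columnCovariance w s s') - 1 - c * u ^ 2 * columnCovariance w s s' -
        c ^ 2 / 2 * u ^ 4 * columnCovariance w s s' ^ 2 := by
    ring_nf
  simp only [expand, Finset.expect_sub_distrib, ← Finset.mul_expect, Fintype.expect_one,
    expect_columnCovariance hrow, Finset.expect_const_zero]
  ring

/-- The logarithm of `localPartition w u τ`, averaged over a Poisson number `k` of independent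
uniform messages. -/
noncomputable def poissonLogPartition (w : ι → σ → ℝ) (c u : ℝ) : ℝ :=
  ∑' k : ℕ, poissonPMF c k * 𝔼 τ : Fin k → ι, Real.log (localPartition w u τ)

/-- The contribution to `poissonLogPartition` of the Taylor remainder of the logarithm. -/
noncomputable def poissonLogRemainder (w : ι → σ → ℝ) (c u : ℝ) : ℝ :=
  ∑' k : ℕ, poissonPMF c k * 𝔼 τ : Fin k → ι, logTaylorRemainder (localPartition w u τ)

variable [Nonempty ι] [Nonempty σ]

lemma expect_log_localPartition (hcol : ∀ s, 𝔼 j, w j s = 0) (u : ℝ) (k : ℕ) :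
    𝔼 τ : Fin k → ι, Real.log (localPartition w u τ) =
      𝔼 τ : Fin k → ι, logTaylorRemainder (localPartition w u τ) -
        (𝔼 s, 𝔼 s', (1 + u ^ 2 * columnCovariance w s s') ^ k - 1) / 2 := by
  have log_eq (z : ℝ) :
      Real.log z = logTaylorRemainder z + 2 * z - 1 / 2 * z ^ 2 - 3 / 2 * 1 := by
    unfold logTaylorRemainder
    ring
  simp only [log_eq, Finset.expect_sub_distrib, Finset.expect_add_distrib, ← Finset.mul_expect,
    expect_localPartition hcol, expect_localPartition_sq hcol, Fintype.expect_one]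
  ring

lemma abs_expect_logTaylorRemainder_le (hrow : ∀ j, 𝔼 s, w j s = 0) (hw : ∀ j s, |w j s| ≤ M)
    (hu : |u| * M ≤ 1 / 2) (k : ℕ) :
    |𝔼 τ : Fin k → ι, logTaylorRemainder (localPartition w u τ)| ≤
      2 * (|u| * M) ^ 6 * 16 ^ k :=
  abs_expect_le_of_forall_abs_le (abs_logTaylorRemainder_localPartition_le hrow hw hu)

lemma poissonLogPartition_eq (hrow : ∀ j, 𝔼 s, w j s = 0) (hcol : ∀ s, 𝔼 j, w j s = 0)
    (hw : ∀ j s, |w j s| ≤ M) (hu : |u| * M ≤ 1 / 2) (c : ℝ) :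
    poissonLogPartition w c u = poissonLogRemainder w c u -
      (𝔼 s, 𝔼 s', Real.exp (c * u ^ 2 * columnCovariance w s s') - 1) / 2 := by
  have remainder_sum := (summable_poissonPMF_mul c (by norm_num)
    (abs_expect_logTaylorRemainder_le hrow hw hu)).hasSum
  have second_moment_sum := hasSum_expect fun s ↦ hasSum_expect fun s' ↦
    hasSum_poissonPMF_mul_pow c (1 + u ^ 2 * columnCovariance w s s')
  have mass_sum := hasSum_poissonPMF_mul_pow c 1
  convert (remainder_sum.sub ((second_moment_sum.sub mass_sum).div_const 2)).tsum_eq using 1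
  · refine tsum_congr fun k ↦ ?_
    simp only [expect_log_localPartition hcol, ← Finset.mul_expect]
    ring
  · simp only [poissonLogRemainder, add_sub_cancel_left, sub_self, mul_zero, Real.exp_zero,
      mul_assoc]

lemma isBigO_poissonLogRemainder (hrow : ∀ j, 𝔼 s, w j s = 0) (c : ℝ) :
    poissonLogRemainder w c =O[𝓝 0] (· ^ 6) := by
  refine IsBigO.of_bound (2 * ‖w‖ ^ 6 * ∑' k, |poissonPMF c k| * 16 ^ k) ?_
  filter_upwards [eventually_abs_mul_le_half ‖w‖] with u hu
  refine (abs_tsum_poissonPMF_mul_le c (by norm_num)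
    (abs_expect_logTaylorRemainder_le hrow (abs_kernel_le_norm w) hu)).trans_eq ?_
  rw [norm_pow, Real.norm_eq_abs]
  ring

theorem isBigO_poissonLogPartition (hrow : ∀ j, 𝔼 s, w j s = 0) (hcol : ∀ s, 𝔼 j, w j s = 0)
    (c : ℝ) :
    (fun u ↦ poissonLogPartition w c u +
      c ^ 2 / 4 * (𝔼 s, 𝔼 s', columnCovariance w s s' ^ 2) * u ^ 4) =O[𝓝 0] (· ^ 6) := by
  refine ((isBigO_poissonLogRemainder hrow c).sub
    ((isBigO_expect_exp_columnCovariance hrow c).const_mul_left (1 / 2))).congr' ?_ .rfl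
  filter_upwards [eventually_abs_mul_le_half ‖w‖] with u hu
  rw [poissonLogPartition_eq hrow hcol (abs_kernel_le_norm w) hu]
  ring

end Expansion

end LocalPartition

section PottsKernel

variable {ι : Type*} [Fintype ι] [DecidableEq ι]

/-- The interaction kernel `q δ(j, s) - 1` of the Potts model, where `q` is the number of spins. -/
noncomputable def pottsKernel (j s : ι) : ℝ :=
  Fintype.card ι * (if j = s then 1 else 0) - 1

lemma pottsKernel_comm (j s : ι) : pottsKernel j s = pottsKernel s j := by
  simp only [pottsKernel, eq_comm]

variable [Nonempty ι]

lemma expect_pottsKernel_mul (f : ι → ℝ) (s : ι) :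
    𝔼 j, pottsKernel j s * f j = f s - 𝔼 j, f j := by
  have split (j : ι) : pottsKernel j s * f j =
      (if j = s then (Fintype.card ι : ℝ) else 0) * f j - f j := by
    rw [pottsKernel]
    split_ifs <;> ring
  simp only [split, Finset.expect_sub_distrib, Finset.expect_boole_mul']

lemma expect_pottsKernel_left (s : ι) : 𝔼 j, pottsKernel j s = 0 := by
  simpa using expect_pottsKernel_mul (fun _ ↦ 1) s

lemma expect_pottsKernel_right (j : ι) : 𝔼 s, pottsKernel j s = 0 := by
  simpa only [pottsKernel_comm j] using expect_pottsKernel_left j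

lemma columnCovariance_pottsKernel : columnCovariance (pottsKernel (ι := ι)) = pottsKernel := by
  ext s s'
  rw [columnCovariance, expect_pottsKernel_mul, expect_pottsKernel_left, sub_zero]

lemma expect_pottsKernel_sq :
    𝔼 s : ι, 𝔼 s', pottsKernel s s' ^ 2 = (Fintype.card ι : ℝ) - 1 := by
  have row (s : ι) : 𝔼 s', pottsKernel s s' ^ 2 = (Fintype.card ι : ℝ) - 1 := by
    simp only [pottsKernel_comm s, sq]
    rw [expect_pottsKernel_mul, expect_pottsKernel_left]
    simp [pottsKernel]
  simp only [row, Fintype.expect_const]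

end PottsKernel

lemma g1_eq_poissonLogPartition (q : ℕ) (β c t : ℝ) :
    g1 q β c t = poissonLogPartition (pottsKernel (ι := Fin q)) c
      ((1 - Real.exp (-β)) / ((q : ℝ) - 1 + Real.exp (-β)) * t) := by
  simp only [g1, poissonLogPartition, localPartition, pottsKernel, Fintype.expect_eq_sum_div_card,
    Fintype.card_fin, Fintype.card_fun, Nat.cast_pow, div_eq_inv_mul _ (_ ^ _),
    div_eq_inv_mul _ (q : ℝ), Finset.mul_sum]

lemma isBigO_g1 (q : ℕ) [NeZero q] (β c : ℝ) :
    (fun t ↦ g1 q β c t + (1 / 4) * ((q : ℝ) - 1) * c ^ 2 *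
      ((1 - Real.exp (-β)) / ((q : ℝ) - 1 + Real.exp (-β))) ^ 4 * t ^ 4) =O[𝓝 0] (· ^ 6) := by
  simp only [g1_eq_poissonLogPartition]
  set x := (1 - Real.exp (-β)) / ((q : ℝ) - 1 + Real.exp (-β))
  have tendsto_zero : Tendsto (fun t : ℝ ↦ x * t) (𝓝 0) (𝓝 0) :=
    Continuous.tendsto' (by fun_prop) _ _ (by simp)
  have expansion := isBigO_poissonLogPartition (ι := Fin q) expect_pottsKernel_right
    expect_pottsKernel_left c
  rw [columnCovariance_pottsKernel, expect_pottsKernel_sq, Fintype.card_fin] at expansion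
  refine ((expansion.comp_tendsto tendsto_zero).congr (g₂ := fun t ↦ x ^ 6 * t ^ 6)
    (fun t ↦ ?_) fun t ↦ mul_pow x t 6).trans (isBigO_const_mul_self _ _ _)
  simp only [Function.comp_apply]
  ring

theorem statement10_general (q : ℕ) [NeZero q] (β c : ℝ) :
    ∃ C > (0 : ℝ), ∃ δ₀ > (0 : ℝ), ∀ t : ℝ, |t| ≤ δ₀ →
      |g1 q β c t + (1 / 4) * ((q : ℝ) - 1) * c ^ 2 *
          ((1 - Real.exp (-β)) / ((q : ℝ) - 1 + Real.exp (-β))) ^ 4 * t ^ 4|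
        ≤ C * t ^ 6 := by
  obtain ⟨C, C_pos, hC⟩ := (isBigO_g1 q β c).exists_pos
  obtain ⟨δ₀, δ₀_pos, hδ₀⟩ := Metric.nhds_basis_closedBall.eventually_iff.1 hC.bound
  refine ⟨C, C_pos, δ₀, δ₀_pos, fun t ht ↦ ?_⟩
  have bound := hδ₀ (mem_closedBall_zero_iff.2 ht)
  rwa [Real.norm_eq_abs, Real.norm_of_nonneg (Even.pow_nonneg (by decide) t)] at bound

/-- as `t → 0`,
`g⁽¹⁾(β,c,q,t) = -(1/4)(q-1) c² x⁴ t⁴ + O(t⁶)`. -/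
theorem statement10 (q : ℕ) (hq : 2 ≤ q) (β c : ℝ) (hβ : 0 < β) (hc : 0 < c) :
    ∃ C > (0 : ℝ), ∃ δ₀ > (0 : ℝ), ∀ t : ℝ, |t| ≤ δ₀ →
      |g1 q β c t + (1 / 4) * ((q : ℝ) - 1) * c ^ 2 *
          ((1 - Real.exp (-β)) / ((q : ℝ) - 1 + Real.exp (-β))) ^ 4 * t ^ 4|
        ≤ C * t ^ 6 := by
  have : NeZero q := ⟨by lia⟩
  exact statement10_general q β c
end

section
/- Let q = 2. If either c ≤ 1, or c > 1 and 0 ≤ β ≤ −ln(1 − 2/(1+√c)), then the quenched pressure equals the annealed pressure in the thermodynamic limit: p(β,c,2) = lim_{N→∞} p_N(β,c,2) = 𝒫(β,c,2). -/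
open MeasureTheory Filter

/-!
Write `t = tanh (β / 2)`; the hypothesis on `β` and `c` says that `c * t ^ 2 ≤ 1` (the
Kesten–Stigum bound). Condition on the number `k` of bonds, which are then independent and uniform,
and let `L k` be the mean of the logarithm of the partition function after dividing out the annealed
pressure. Jensen's inequality gives `L k ≤ 0`, so the quenched pressure is at most the annealed one.

Conversely, a further bond `e` changes `L k` by the mean of `log (1 - t * x)`, where `x` is the
Gibbs average of the product of the two spins of `e`. The means of `x` and `x ^ 2` over uniform `e`
are Gibbs averages of the squared magnetisation and of the squared overlap of two replicas. By
Jensen's inequality they are controlled by annealed exponential moments and by `L k` itself. These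
moments are at most `2 * N + 1` as long as `2 * k * t ^ 2 / N` stays below `1`. Hence
`log (2 * N + 1) - L k` satisfies a discrete Grönwall inequality, and `L k ≥ -O(log N)` up to
`k = (1 - ε) * c * N / 2`. The remaining bonds and the Poisson fluctuations of their number cost
`O(ε * N) + O(√N)`, because `L` is Lipschitz.
-/

section MultinomialMean

open Finset Real
open scoped BigOperators

variable {ι : Type*} [Fintype ι] [DecidableEq ι]

/-- The expectation of `g J`, where `J i` counts how often `i` occurs among `k` independent uniform
samples from `ι`. Conditioning independent Poisson couplings on their total number `k` produces
exactly this law. -/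
noncomputable def multinomialMean (k : ℕ) (g : (ι → ℕ) → ℝ) : ℝ :=
  ∑ J ∈ piAntidiag univ k, (Nat.multinomial univ J / Fintype.card ι ^ k : ℝ) * g J

lemma multinomialMean_add (k : ℕ) (f g : (ι → ℕ) → ℝ) :
    multinomialMean k (fun J ↦ f J + g J) = multinomialMean k f + multinomialMean k g := by
  simp only [multinomialMean, mul_add, sum_add_distrib]

lemma multinomialMean_const_mul (k : ℕ) (a : ℝ) (g : (ι → ℕ) → ℝ) :
    multinomialMean k (fun J ↦ a * g J) = a * multinomialMean k g := by
  simp only [multinomialMean, mul_sum, mul_left_comm]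

lemma multinomialMean_sub (k : ℕ) (f g : (ι → ℕ) → ℝ) :
    multinomialMean k (fun J ↦ f J - g J) = multinomialMean k f - multinomialMean k g := by
  simp only [multinomialMean, mul_sub, sum_sub_distrib]

lemma multinomialMean_expect {A : Type*} [Fintype A] (k : ℕ) (g : A → (ι → ℕ) → ℝ) :
    multinomialMean k (fun J ↦ 𝔼 a, g a J) = 𝔼 a, multinomialMean k (g a) := by
  simp only [multinomialMean, mul_expect, expect_sum_comm]

lemma multinomialMean_mono (k : ℕ) {f g : (ι → ℕ) → ℝ} (h : ∀ J, f J ≤ g J) :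
    multinomialMean k f ≤ multinomialMean k g := by
  unfold multinomialMean
  gcongr with J
  exact h J

lemma multinomialMean_zero (g : (ι → ℕ) → ℝ) : multinomialMean 0 g = g 0 := by
  simp [multinomialMean, Nat.multinomial]

lemma multinomialMean_prod_pow (k : ℕ) (φ : ι → ℝ) :
    multinomialMean k (fun J ↦ ∏ i, φ i ^ J i) = (𝔼 i, φ i) ^ k := by
  rw [Fintype.expect_eq_sum_div_card, div_pow, sum_pow_eq_sum_piAntidiag, sum_div]
  exact sum_congr rfl fun J _ ↦ div_mul_eq_mul_div _ _ _

lemma sum_multinomial_div_card_pow [Nonempty ι] (k : ℕ) :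
    ∑ J ∈ piAntidiag (univ : Finset ι) k,
      (Nat.multinomial univ J / Fintype.card ι ^ k : ℝ) = 1 := by
  simpa [multinomialMean] using multinomialMean_prod_pow k (1 : ι → ℝ)

lemma multinomialMean_comp_sum [Nonempty ι] (k : ℕ) (u : ℕ → ℝ) :
    multinomialMean k (fun J : ι → ℕ ↦ u (∑ i, J i)) = u k := by
  rw [← one_mul (u k), ← sum_multinomial_div_card_pow (ι := ι), sum_mul]
  exact sum_congr rfl fun J hJ ↦ by
    have hsum : ∑ i, J i = k := (mem_piAntidiag.1 hJ).1
    simp only [hsum]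

lemma multinomialMean_const [Nonempty ι] (k : ℕ) (a : ℝ) :
    multinomialMean k (fun _ : ι → ℕ ↦ a) = a :=
  multinomialMean_comp_sum k fun _ ↦ a

lemma abs_multinomialMean_le [Nonempty ι] (k : ℕ) {g : (ι → ℕ) → ℝ} {a : ℝ}
    (h : ∀ J, |g J| ≤ a) : |multinomialMean k g| ≤ a := by
  refine abs_le.2 ⟨?_, ?_⟩
  · simpa only [multinomialMean_const] using
      multinomialMean_mono k fun J ↦ (abs_le.1 (h J)).1
  · simpa only [multinomialMean_const] using
      multinomialMean_mono k fun J ↦ (abs_le.1 (h J)).2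

lemma multinomialMean_log_le [Nonempty ι] (k : ℕ) {f : (ι → ℕ) → ℝ} (hf : ∀ J, 0 < f J) :
    multinomialMean k (fun J ↦ log (f J)) ≤ log (multinomialMean k f) :=
  strictConcaveOn_log_Ioi.concaveOn.le_map_sum (fun _ _ ↦ by positivity)
    (sum_multinomial_div_card_pow k) fun J _ ↦ hf J

lemma multinomial_add_single_mul (J : ι → ℕ) (i : ι) :
    Nat.multinomial univ (J + Pi.single i 1) * (J i + 1) =
      (∑ l, J l + 1) * Nat.multinomial univ J := by
  have prod_factorial : ∏ l, ((J + Pi.single i 1 : ι → ℕ) l).factorial =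
      (J i + 1) * ∏ l, (J l).factorial := by
    rw [← mul_prod_erase _ _ (mem_univ i), ← mul_prod_erase _ _ (mem_univ i), ← mul_assoc]
    congr 1
    · simp [Nat.factorial_succ]
    · exact prod_congr rfl fun l hl ↦ by simp [Pi.single_eq_of_ne (ne_of_mem_erase hl)]
  have hJ := Nat.multinomial_spec univ J
  have hJi := Nat.multinomial_spec univ (J + Pi.single i 1)
  rw [prod_factorial, show ∑ l, (J + Pi.single i 1 : ι → ℕ) l = ∑ l, J l + 1 by
    simp [sum_add_distrib], Nat.factorial_succ, ← hJ] at hJi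
  refine Nat.eq_of_mul_eq_mul_left (prod_pos fun l _ ↦ (J l).factorial_pos : 0 < ∏ l, _) ?_
  linarith

lemma sum_piAntidiag_succ_coord_mul (k : ℕ) (i : ι) (F : (ι → ℕ) → ℝ) :
    ∑ J ∈ piAntidiag univ (k + 1), (J i : ℝ) * F J =
      ∑ J ∈ piAntidiag univ k, ((J i : ℝ) + 1) * F (J + Pi.single i 1) := by
  have sub_add_single (J : ι → ℕ) (hJ : J i ≠ 0) : J - Pi.single i 1 + Pi.single i 1 = J :=
    tsub_add_cancel_of_le fun l ↦ by
      obtain rfl | hl := eq_or_ne l i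
      · simpa using Nat.one_le_iff_ne_zero.2 hJ
      · simp [Pi.single_eq_of_ne hl]
  have sum_add_single (J : ι → ℕ) : ∑ l, (J + Pi.single i 1 : ι → ℕ) l = ∑ l, J l + 1 := by
    simp [sum_add_distrib]
  symm
  refine sum_bij_ne_zero (fun J _ _ ↦ J + Pi.single i 1) ?_ ?_ ?_ ?_
  · intro J hJ _
    simp_all [mem_piAntidiag]
  · exact fun _ _ _ _ _ _ h ↦ add_right_cancel h
  · intro J hJ hne
    have hJi : J i ≠ 0 := fun h ↦ hne (by simp [h])
    have hsum := sum_add_single (J - Pi.single i 1)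
    rw [sub_add_single J hJi, (mem_piAntidiag.1 hJ).1] at hsum
    refine ⟨J - Pi.single i 1, mem_piAntidiag.2 ⟨(Nat.succ_injective hsum).symm, by simp⟩, ?_,
      sub_add_single J hJi⟩
    rw [sub_add_single J hJi]
    exact mul_ne_zero (by positivity) (right_ne_zero_of_mul hne)
  · intro J _ _
    simp

lemma multinomialMean_succ (k : ℕ) (g : (ι → ℕ) → ℝ) :
    multinomialMean (k + 1) g = multinomialMean k fun J ↦ 𝔼 i, g (J + Pi.single i 1) := by
  have count_samples : ((k : ℝ) + 1) * ∑ J ∈ piAntidiag univ (k + 1), Nat.multinomial univ J * g J =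
      ∑ i, ∑ J ∈ piAntidiag univ (k + 1), (J i : ℝ) * (Nat.multinomial univ J * g J) := by
    rw [sum_comm, mul_sum]
    refine sum_congr rfl fun J hJ ↦ ?_
    rw [← sum_mul, ← Nat.cast_sum, (mem_piAntidiag.1 hJ).1, Nat.cast_succ]
  have remove_sample (i : ι) :
      ∑ J ∈ piAntidiag univ (k + 1), (J i : ℝ) * (Nat.multinomial univ J * g J) =
        (k + 1) * ∑ J ∈ piAntidiag univ k, Nat.multinomial univ J * g (J + Pi.single i 1) := by
    rw [sum_piAntidiag_succ_coord_mul, mul_sum]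
    refine sum_congr rfl fun J hJ ↦ ?_
    have h : (Nat.multinomial univ (J + Pi.single i 1) : ℝ) * (J i + 1) =
        (k + 1) * Nat.multinomial univ J := by
      exact_mod_cast (mem_piAntidiag.1 hJ).1 ▸ multinomial_add_single_mul J i
    linear_combination g (J + Pi.single i 1) * h
  simp only [remove_sample, ← mul_sum] at count_samples
  have pascal := mul_left_cancel₀ (by positivity) count_samples
  simp only [multinomialMean, div_mul_eq_mul_div, ← sum_div, pascal,
    Fintype.expect_eq_sum_div_card, mul_div_assoc', mul_sum]
  rw [sum_comm, pow_succ, div_div]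

end MultinomialMean

section Poisson

open Finset Real

lemma poissonPMF_nonneg {μ : ℝ} (hμ : 0 ≤ μ) (k : ℕ) : 0 ≤ poissonPMF μ k := by
  unfold poissonPMF
  positivity

lemma hasSum_poissonPMF (μ : ℝ) : HasSum (poissonPMF μ) 1 := by
  have h := (NormedSpace.expSeries_div_hasSum_exp μ).mul_left (exp (-μ))
  rw [← exp_eq_exp_ℝ, ← exp_add, neg_add_cancel, exp_zero] at h
  exact h.congr_fun fun k ↦ mul_div_assoc _ _ _

lemma poissonPMF_succ_mul (μ : ℝ) (k : ℕ) :
    poissonPMF μ (k + 1) * ((k : ℝ) + 1) = μ * poissonPMF μ k := by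
  unfold poissonPMF
  rw [Nat.factorial_succ, Nat.cast_mul, Nat.cast_succ]
  field_simp
  ring

lemma hasSum_poissonPMF_mul_id (μ : ℝ) : HasSum (fun k : ℕ ↦ poissonPMF μ k * k) μ := by
  rw [← hasSum_nat_add_iff' 1]
  simpa [poissonPMF_succ_mul] using (hasSum_poissonPMF μ).mul_left μ

lemma hasSum_poissonPMF_mul_affine (μ a b : ℝ) :
    HasSum (fun k : ℕ ↦ poissonPMF μ k * (a + b * k)) (a + b * μ) := by
  have h := ((hasSum_poissonPMF μ).mul_left a).add ((hasSum_poissonPMF_mul_id μ).mul_left b)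
  rw [mul_one] at h
  exact h.congr_fun fun k ↦ by ring

lemma hasSum_poissonPMF_mul_sq (μ : ℝ) :
    HasSum (fun k : ℕ ↦ poissonPMF μ k * (k : ℝ) ^ 2) (μ ^ 2 + μ) := by
  rw [← hasSum_nat_add_iff' 1]
  have h := (hasSum_poissonPMF_mul_affine μ 1 1).mul_left μ
  rw [show μ * (1 + 1 * μ) = μ ^ 2 + μ - ∑ k ∈ range 1, poissonPMF μ k * (k : ℝ) ^ 2 by
    simp [sq, mul_add, add_comm]] at h
  refine h.congr_fun fun k ↦ ?_
  push_cast
  linear_combination ((k : ℝ) + 1) * poissonPMF_succ_mul μ k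

lemma hasSum_poissonPMF_mul_sub_sq (μ : ℝ) :
    HasSum (fun k : ℕ ↦ poissonPMF μ k * ((k : ℝ) - μ) ^ 2) μ := by
  have h := (hasSum_poissonPMF_mul_sq μ).add (hasSum_poissonPMF_mul_affine μ (μ ^ 2) (-2 * μ))
  rw [show μ ^ 2 + μ + (μ ^ 2 + -2 * μ * μ) = μ by ring] at h
  exact h.congr_fun fun k ↦ by ring

lemma abs_poisson_mean_sub_le {μ S C : ℝ} (hμ : 0 < μ) {f : ℕ → ℝ}
    (hf : ∀ k l, |f k - f l| ≤ C * |(k : ℝ) - l|)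
    (hS : HasSum (fun k ↦ poissonPMF μ k * f k) S) (m : ℕ) :
    |S - f m| ≤ C * (√μ + |μ - m|) := by
  have hC : 0 ≤ C := by simpa using (abs_nonneg _).trans (hf 1 0)
  have young (x : ℝ) : |x| ≤ √μ / 2 + x ^ 2 / (2 * √μ) := by
    have h : √μ / 2 + x ^ 2 / (2 * √μ) - |x| = (√μ - |x|) ^ 2 / (2 * √μ) := by
      rw [← sq_abs x]
      field_simp
      ring
    linarith [show 0 ≤ (√μ - |x|) ^ 2 / (2 * √μ) by positivity]
  have bound (k : ℕ) :
      |f k - f m| ≤ C * (√μ / 2 + |μ - m|) + C / (2 * √μ) * ((k : ℝ) - μ) ^ 2 := by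
    calc |f k - f m| ≤ C * |(k : ℝ) - m| := hf k m
      _ ≤ C * (√μ / 2 + ((k : ℝ) - μ) ^ 2 / (2 * √μ) + |μ - m|) := by
        gcongr
        linarith [abs_sub_le (k : ℝ) μ m, young (k - μ)]
      _ = _ := by ring
  have hdiff : HasSum (fun k ↦ poissonPMF μ k * (f k - f m)) (S - f m) := by
    simpa [mul_sub, mul_comm] using hS.sub ((hasSum_poissonPMF μ).mul_left (f m))
  have hbound : HasSum (fun k : ℕ ↦ poissonPMF μ k *
      (C * (√μ / 2 + |μ - m|) + C / (2 * √μ) * ((k : ℝ) - μ) ^ 2)) (C * (√μ + |μ - m|)) := by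
    have h := ((hasSum_poissonPMF μ).mul_left (C * (√μ / 2 + |μ - m|))).add
      ((hasSum_poissonPMF_mul_sub_sq μ).mul_left (C / (2 * √μ)))
    have half_sqrt : μ / (2 * √μ) = √μ / 2 := by
      rw [div_mul_eq_div_div_swap, div_sqrt]
    rw [show C * (√μ / 2 + |μ - m|) * 1 + C / (2 * √μ) * μ = C * (√μ + |μ - m|) by
      linear_combination C * half_sqrt] at h
    exact h.congr_fun fun k ↦ by ring
  rw [← hdiff.tsum_eq, ← norm_eq_abs]
  refine tsum_of_norm_bounded hbound fun k ↦ ?_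
  rw [norm_mul, norm_of_nonneg (poissonPMF_nonneg hμ.le k), norm_eq_abs]
  exact mul_le_mul_of_nonneg_left (bound k) (poissonPMF_nonneg hμ.le k)

variable {ι : Type*} [Fintype ι] [DecidableEq ι]

lemma sum_piAntidiag_prod_poissonPMF_mul [Nonempty ι] (μ : ℝ) (g : (ι → ℕ) → ℝ) (k : ℕ) :
    ∑ J ∈ piAntidiag univ k, (∏ i, poissonPMF μ (J i)) * g J =
      poissonPMF (Fintype.card ι * μ) k * multinomialMean k g := by
  rw [multinomialMean, mul_sum]
  refine sum_congr rfl fun J hJ ↦ ?_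
  have hk := (mem_piAntidiag.1 hJ).1
  have hmult : (∏ i, ((J i).factorial : ℝ)) * Nat.multinomial univ J = k.factorial := by
    exact_mod_cast hk ▸ Nat.multinomial_spec univ J
  have hfact : (∏ i, ((J i).factorial : ℝ)) ≠ 0 := by positivity
  have hmult_ne : (Nat.multinomial univ J : ℝ) ≠ 0 := by
    exact_mod_cast (Nat.multinomial_pos univ J).ne'
  simp only [poissonPMF, prod_div_distrib, prod_mul_distrib, prod_const, card_univ,
    prod_pow_eq_pow_sum, hk, ← exp_nat_mul, mul_pow, ← hmult, mul_neg]
  field_simp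

lemma hasSum_fiber_sum_eq (f : (ι → ℕ) → ℝ) (k : ℕ) :
    HasSum (fun J : {J : ι → ℕ // ∑ i, J i = k} ↦ f J) (∑ J ∈ piAntidiag univ k, f J) :=
  (Equiv.subtypeEquivRight fun J ↦ by simp [mem_piAntidiag] :
    {J : ι → ℕ // ∑ i, J i = k} ≃ {J // J ∈ piAntidiag univ k}).hasSum_iff.2
      ((piAntidiag univ k).hasSum f)

lemma summable_prod_poissonPMF_mul {κ : Type*} [Fintype κ] [Nonempty κ] {μ : ℝ} (hμ : 0 ≤ μ)
    {g : (κ → ℕ) → ℝ} {u : ℕ → ℝ} (hu : Summable fun k ↦ poissonPMF (Fintype.card κ * μ) k * u k)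
    (hg : ∀ J, |g J| ≤ u (∑ i, J i)) :
    Summable fun J : κ → ℕ ↦ (∏ i, poissonPMF μ (J i)) * g J := by
  classical
  have abs_term (J : κ → ℕ) :
      |(∏ i, poissonPMF μ (J i)) * g J| = (∏ i, poissonPMF μ (J i)) * |g J| := by
    rw [abs_mul, abs_of_nonneg (prod_nonneg fun i _ ↦ poissonPMF_nonneg hμ _)]
  have hfiber (k : ℕ) := hasSum_fiber_sum_eq (fun J ↦ |(∏ i, poissonPMF μ (J i)) * g J|) k
  simp only [abs_term, sum_piAntidiag_prod_poissonPMF_mul] at hfiber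
  rw [← (Equiv.sigmaFiberEquiv fun J : κ → ℕ ↦ ∑ i, J i).summable_iff, ← summable_abs_iff]
  refine (summable_sigma_of_nonneg fun _ ↦ abs_nonneg _).2 ⟨fun k ↦ ?_, ?_⟩
  · simpa only [Function.comp_apply, Equiv.sigmaFiberEquiv_apply, abs_term] using
      (hfiber k).summable
  · refine hu.of_nonneg_of_le (fun k ↦ tsum_nonneg fun _ ↦ abs_nonneg _) fun k ↦ ?_
    simp only [Function.comp_apply, Equiv.sigmaFiberEquiv_apply, abs_term, (hfiber k).tsum_eq]
    refine mul_le_mul_of_nonneg_left ?_ (poissonPMF_nonneg (by positivity) k)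
    exact (multinomialMean_mono k hg).trans_eq (multinomialMean_comp_sum k u)

lemma hasSum_poissonPMF_mul_multinomialMean [Nonempty ι] {μ : ℝ} {g : (ι → ℕ) → ℝ}
    (hg : Summable fun J : ι → ℕ ↦ (∏ i, poissonPMF μ (J i)) * g J) :
    HasSum (fun k ↦ poissonPMF (Fintype.card ι * μ) k * multinomialMean k g)
      (∑' J : ι → ℕ, (∏ i, poissonPMF μ (J i)) * g J) := by
  refine ((Equiv.sigmaFiberEquiv fun J : ι → ℕ ↦ ∑ i, J i).hasSum_iff.2 hg.hasSum).sigma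
    fun k ↦ ?_
  rw [← sum_piAntidiag_prod_poissonPMF_mul]
  exact hasSum_fiber_sum_eq _ k

end Poisson

section Gibbs

open Finset Real
open scoped BigOperators

variable {A ι : Type*} {φ : A → ι → ℝ}

/-- Two independent copies of a Gibbs system subject to the same disorder `J`. -/
def replica (φ : A → ι → ℝ) (p : A × A) (i : ι) : ℝ :=
  φ p.1 i * φ p.2 i

lemma replica_pos (hφ : ∀ a i, 0 < φ a i) (p : A × A) (i : ι) : 0 < replica φ p i :=
  mul_pos (hφ p.1 i) (hφ p.2 i)

variable [Fintype ι]

/-- The unnormalised Gibbs weight of the state `a`: the factor `φ a i` is included `J i` times. -/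
noncomputable def gibbsWeight (φ : A → ι → ℝ) (J : ι → ℕ) (a : A) : ℝ :=
  ∏ i, φ a i ^ J i

lemma gibbsWeight_pos (hφ : ∀ a i, 0 < φ a i) (J : ι → ℕ) (a : A) : 0 < gibbsWeight φ J a :=
  prod_pos fun i _ ↦ pow_pos (hφ a i) _

lemma gibbsWeight_add_single [DecidableEq ι] (φ : A → ι → ℝ) (J : ι → ℕ) (i : ι) (a : A) :
    gibbsWeight φ (J + Pi.single i 1) a = gibbsWeight φ J a * φ a i := by
  simp only [gibbsWeight, Pi.add_apply, pow_add, prod_mul_distrib]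
  congr 1
  rw [Fintype.prod_eq_single i fun l hl ↦ by simp [hl], Pi.single_eq_same, pow_one]

lemma gibbsWeight_replica (φ : A → ι → ℝ) (J : ι → ℕ) (p : A × A) :
    gibbsWeight (replica φ) J p = gibbsWeight φ J p.1 * gibbsWeight φ J p.2 := by
  simp only [gibbsWeight, replica, mul_pow, prod_mul_distrib]

variable [Fintype A]

/-- The partition function of `gibbsWeight`, relative to the uniform probability on `A`. -/
noncomputable def gibbsPartition (φ : A → ι → ℝ) (J : ι → ℕ) : ℝ :=
  𝔼 a, gibbsWeight φ J a

/-- The Gibbs average of the observable `f`. -/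
noncomputable def gibbsMean (φ : A → ι → ℝ) (J : ι → ℕ) (f : A → ℝ) : ℝ :=
  (𝔼 a, gibbsWeight φ J a * f a) / gibbsPartition φ J

lemma expect_prod_mul {B : Type*} [Fintype B] (f : A → ℝ) (g : B → ℝ) :
    𝔼 p : A × B, f p.1 * g p.2 = (𝔼 a, f a) * 𝔼 b, g b := by
  rw [← univ_product_univ, expect_product, expect_mul_expect]

lemma gibbsPartition_replica (φ : A → ι → ℝ) (J : ι → ℕ) :
    gibbsPartition (replica φ) J = gibbsPartition φ J ^ 2 := by
  simp only [gibbsPartition, gibbsWeight_replica, expect_prod_mul, sq]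

lemma gibbsMean_replica (φ : A → ι → ℝ) (J : ι → ℕ) (f g : A → ℝ) :
    gibbsMean (replica φ) J (fun p ↦ f p.1 * g p.2) = gibbsMean φ J f * gibbsMean φ J g := by
  simp only [gibbsMean, gibbsPartition_replica, gibbsWeight_replica]
  rw [sq, div_mul_div_comm, ← expect_prod_mul]
  simp only [mul_mul_mul_comm]

lemma gibbsMean_add (φ : A → ι → ℝ) (J : ι → ℕ) (f g : A → ℝ) :
    gibbsMean φ J (fun a ↦ f a + g a) = gibbsMean φ J f + gibbsMean φ J g := by
  simp only [gibbsMean, mul_add, expect_add_distrib, add_div]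

lemma gibbsMean_const_mul (φ : A → ι → ℝ) (J : ι → ℕ) (x : ℝ) (f : A → ℝ) :
    gibbsMean φ J (fun a ↦ x * f a) = x * gibbsMean φ J f := by
  simp only [gibbsMean, mul_left_comm _ x, ← mul_expect, mul_div_assoc]

lemma gibbsMean_expect {B : Type*} [Fintype B] (φ : A → ι → ℝ) (J : ι → ℕ) (f : B → A → ℝ) :
    gibbsMean φ J (fun a ↦ 𝔼 b, f b a) = 𝔼 b, gibbsMean φ J (f b) := by
  simp only [gibbsMean, mul_expect, expect_div, expect_comm (s := (univ : Finset A))]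

lemma gibbsMean_mono (hφ : ∀ a i, 0 < φ a i) (J : ι → ℕ) {f g : A → ℝ} (h : ∀ a, f a ≤ g a) :
    gibbsMean φ J f ≤ gibbsMean φ J g :=
  div_le_div_of_nonneg_right
    (expect_le_expect fun a _ ↦ mul_le_mul_of_nonneg_left (h a) (gibbsWeight_pos hφ J a).le)
    (expect_nonneg fun a _ ↦ (gibbsWeight_pos hφ J a).le)

/-- The quenched mean of `log (gibbsPartition φ J)` when `J` records `k` uniform samples. -/
noncomputable def meanLogPartition [DecidableEq ι] (φ : A → ι → ℝ) (k : ℕ) : ℝ :=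
  multinomialMean k fun J ↦ log (gibbsPartition φ J)

lemma meanLogPartition_replica [DecidableEq ι] (φ : A → ι → ℝ) (k : ℕ) :
    meanLogPartition (replica φ) k = 2 * meanLogPartition φ k := by
  simp only [meanLogPartition, gibbsPartition_replica, log_pow, multinomialMean_const_mul,
    Nat.cast_ofNat]

variable [Nonempty A]

lemma gibbsPartition_pos (hφ : ∀ a i, 0 < φ a i) (J : ι → ℕ) : 0 < gibbsPartition φ J :=
  expect_pos (fun a _ ↦ gibbsWeight_pos hφ J a) univ_nonempty

lemma gibbsMean_const (hφ : ∀ a i, 0 < φ a i) (J : ι → ℕ) (x : ℝ) :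
    gibbsMean φ J (fun _ ↦ x) = x := by
  rw [gibbsMean, ← expect_mul]
  exact mul_div_cancel_left₀ _ (gibbsPartition_pos hφ J).ne'

lemma abs_gibbsMean_le (hφ : ∀ a i, 0 < φ a i) (J : ι → ℕ) {f : A → ℝ} {C : ℝ}
    (h : ∀ a, |f a| ≤ C) : |gibbsMean φ J f| ≤ C := by
  rw [abs_le]
  constructor
  · simpa only [gibbsMean_const hφ] using gibbsMean_mono hφ J fun a ↦ (abs_le.1 (h a)).1
  · simpa only [gibbsMean_const hφ] using gibbsMean_mono hφ J fun a ↦ (abs_le.1 (h a)).2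

lemma gibbsMean_pos (hφ : ∀ a i, 0 < φ a i) (J : ι → ℕ) {f : A → ℝ} (hf : ∀ a, 0 < f a) :
    0 < gibbsMean φ J f :=
  div_pos (expect_pos (fun a _ ↦ mul_pos (gibbsWeight_pos hφ J a) (hf a)) univ_nonempty)
    (gibbsPartition_pos hφ J)

lemma exp_gibbsMean_le (hφ : ∀ a i, 0 < φ a i) (J : ι → ℕ) (f : A → ℝ) :
    exp (gibbsMean φ J f) ≤ gibbsMean φ J fun a ↦ exp (f a) := by
  set m := gibbsMean φ J f with hm
  calc exp m = gibbsMean φ J fun a ↦ exp m * (f a + (1 - m)) := by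
        rw [gibbsMean_const_mul, gibbsMean_add, gibbsMean_const hφ, ← hm]
        ring
    _ ≤ gibbsMean φ J fun a ↦ exp (f a) := gibbsMean_mono hφ J fun a ↦ by
        calc exp m * (f a + (1 - m)) ≤ exp m * exp (f a - m) := by
              gcongr
              linarith [add_one_le_exp (f a - m)]
          _ = exp (f a) := by rw [← exp_add, add_sub_cancel]

lemma abs_log_gibbsMean_le (hφ : ∀ a i, 0 < φ a i) (J : ι → ℕ) {f : A → ℝ} {C : ℝ}
    (hf : ∀ a, 0 < f a) (h : ∀ a, |log (f a)| ≤ C) : |log (gibbsMean φ J f)| ≤ C := by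
  have hpos := gibbsMean_pos hφ J hf
  rw [abs_le, le_log_iff_exp_le hpos, log_le_iff_le_exp hpos]
  constructor
  · simpa only [gibbsMean_const hφ] using
      gibbsMean_mono hφ J fun a ↦ (le_log_iff_exp_le (hf a)).1 (abs_le.1 (h a)).1
  · simpa only [gibbsMean_const hφ] using
      gibbsMean_mono hφ J fun a ↦ (log_le_iff_le_exp (hf a)).1 (abs_le.1 (h a)).2

lemma abs_log_gibbsPartition_le (hφ : ∀ a i, 0 < φ a i) {C : ℝ} (h : ∀ a i, |log (φ a i)| ≤ C)
    (J : ι → ℕ) : |log (gibbsPartition φ J)| ≤ C * ∑ i, J i := by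
  have uniform_mean : gibbsPartition φ J = gibbsMean φ 0 (gibbsWeight φ J) := by
    simp [gibbsMean, gibbsPartition, gibbsWeight]
  rw [uniform_mean]
  refine abs_log_gibbsMean_le hφ 0 (gibbsWeight_pos hφ J) fun a ↦ ?_
  rw [gibbsWeight, log_prod fun i _ ↦ (pow_pos (hφ a i) _).ne', Nat.cast_sum, mul_sum]
  refine (abs_sum_le_sum_abs _ _).trans (sum_le_sum fun i _ ↦ ?_)
  rw [log_pow, abs_mul, Nat.abs_cast, mul_comm]
  exact mul_le_mul_of_nonneg_right (h a i) (Nat.cast_nonneg _)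

variable [DecidableEq ι]

lemma gibbsPartition_add_single (hφ : ∀ a i, 0 < φ a i) (J : ι → ℕ) (i : ι) :
    gibbsPartition φ (J + Pi.single i 1) = gibbsPartition φ J * gibbsMean φ J (φ · i) := by
  rw [gibbsMean, mul_div_cancel₀ _ (gibbsPartition_pos hφ J).ne']
  simp only [gibbsPartition, gibbsWeight_add_single]

lemma meanLogPartition_zero (φ : A → ι → ℝ) : meanLogPartition φ 0 = 0 := by
  simp [meanLogPartition, multinomialMean_zero, gibbsPartition, gibbsWeight]

variable [Nonempty ι]

lemma meanLogPartition_succ (hφ : ∀ a i, 0 < φ a i) (k : ℕ) :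
    meanLogPartition φ (k + 1) = meanLogPartition φ k +
      multinomialMean k fun J ↦ 𝔼 i, log (gibbsMean φ J (φ · i)) := by
  have log_add_single (J : ι → ℕ) (i : ι) : log (gibbsPartition φ (J + Pi.single i 1)) =
      log (gibbsPartition φ J) + log (gibbsMean φ J (φ · i)) := by
    rw [gibbsPartition_add_single hφ, log_mul (gibbsPartition_pos hφ J).ne'
      (gibbsMean_pos hφ J (hφ · i)).ne']
  simp only [meanLogPartition, multinomialMean_succ, log_add_single, expect_add_distrib,
    Fintype.expect_const, multinomialMean_add]

lemma abs_meanLogPartition_succ_sub_le (hφ : ∀ a i, 0 < φ a i) {C : ℝ}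
    (h : ∀ a i, |log (φ a i)| ≤ C) (k : ℕ) :
    |meanLogPartition φ (k + 1) - meanLogPartition φ k| ≤ C := by
  rw [meanLogPartition_succ hφ, add_sub_cancel_left]
  refine abs_multinomialMean_le k fun J ↦ (abs_expect_le _ _).trans ?_
  exact expect_le univ_nonempty fun i _ ↦ abs_log_gibbsMean_le hφ J (hφ · i) (h · i)

lemma abs_meanLogPartition_sub_le (hφ : ∀ a i, 0 < φ a i) {C : ℝ}
    (h : ∀ a i, |log (φ a i)| ≤ C) (k l : ℕ) :
    |meanLogPartition φ k - meanLogPartition φ l| ≤ C * |(k : ℝ) - l| := by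
  wlog hlk : l ≤ k generalizing k l
  · simpa only [abs_sub_comm] using this l k (le_of_not_ge hlk)
  rw [abs_of_nonneg (sub_nonneg.2 (Nat.cast_le.2 hlk) : (0 : ℝ) ≤ k - l)]
  induction k, hlk using Nat.le_induction with
  | base => simp
  | succ k _ ih =>
    push_cast
    linarith [abs_sub_le (meanLogPartition φ (k + 1)) (meanLogPartition φ k)
      (meanLogPartition φ l), abs_meanLogPartition_succ_sub_le hφ h k]

/-- The annealed exponential moments of an observable control its quenched Gibbs mean, at the cost
of the gap between the annealed and the quenched free energies. -/
lemma multinomialMean_gibbsMean_le (hφ : ∀ a i, 0 < φ a i) (k : ℕ) (f : A → ℝ) :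
    multinomialMean k (fun J ↦ gibbsMean φ J f) ≤
      log (𝔼 a, exp (f a) * (𝔼 i, φ a i) ^ k) - meanLogPartition φ k := by
  have tilted_pos (J : ι → ℕ) : 0 < 𝔼 a, exp (f a) * gibbsWeight φ J a :=
    expect_pos (fun a _ ↦ mul_pos (exp_pos _) (gibbsWeight_pos hφ J a)) univ_nonempty
  have gibbsMean_le (J : ι → ℕ) : gibbsMean φ J f ≤
      log (𝔼 a, exp (f a) * gibbsWeight φ J a) - log (gibbsPartition φ J) := by
    rw [← log_div (tilted_pos J).ne' (gibbsPartition_pos hφ J).ne',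
      le_log_iff_exp_le (div_pos (tilted_pos J) (gibbsPartition_pos hφ J))]
    simpa only [gibbsMean, mul_comm (gibbsWeight φ J _)] using exp_gibbsMean_le hφ J f
  calc multinomialMean k (fun J ↦ gibbsMean φ J f)
      ≤ multinomialMean k (fun J ↦ log (𝔼 a, exp (f a) * gibbsWeight φ J a)) -
          meanLogPartition φ k := by
        rw [meanLogPartition, ← multinomialMean_sub]
        exact multinomialMean_mono k gibbsMean_le
    _ ≤ log (multinomialMean k fun J ↦ 𝔼 a, exp (f a) * gibbsWeight φ J a) -
          meanLogPartition φ k :=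
        sub_le_sub_right (multinomialMean_log_le k tilted_pos) _
    _ = log (𝔼 a, exp (f a) * (𝔼 i, φ a i) ^ k) - meanLogPartition φ k := by
        simp only [multinomialMean_expect, multinomialMean_const_mul, gibbsWeight,
          multinomialMean_prod_pow]

end Gibbs

section Ising

open Finset Real
open scoped BigOperators

/-- The Ising spin `±1` encoded by a two-valued Potts spin. -/
def spinSign : Fin 2 → ℝ :=
  ![1, -1]

lemma spinSign_mul_spinSign (a b : Fin 2) :
    spinSign a * spinSign b = if a = b then 1 else -1 := by
  fin_cases a <;> fin_cases b <;> simp [spinSign]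

variable {V : Type*}

/-- The product of the two Ising spins at the ends of the bond `e`. -/
def bondSpin (σ : V → Fin 2) (e : V × V) : ℝ :=
  spinSign (σ e.1) * spinSign (σ e.2)

/-- The Boltzmann factor of a bond `e`, normalised so that it averages to `1` over all `σ`
when `e` joins two distinct sites; `t` is `tanh (β / 2)` in terms of the inverse temperature. -/
def bondFactor (t : ℝ) (σ : V → Fin 2) (e : V × V) : ℝ :=
  1 - t * bondSpin σ e

lemma abs_bondSpin (σ : V → Fin 2) (e : V × V) : |bondSpin σ e| = 1 := by
  rw [bondSpin, spinSign_mul_spinSign]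
  split_ifs <;> simp

lemma bondFactor_mem_Icc {t : ℝ} (ht : 0 ≤ t) (σ : V → Fin 2) (e : V × V) :
    bondFactor t σ e ∈ Set.Icc (1 - t) (1 + t) := by
  have h := abs_le.1 (abs_bondSpin σ e).le
  constructor <;> unfold bondFactor <;> nlinarith

lemma bondFactor_pos {t : ℝ} (ht : 0 ≤ t) (ht1 : t < 1) (σ : V → Fin 2) (e : V × V) :
    0 < bondFactor t σ e :=
  (sub_pos.2 ht1).trans_le (bondFactor_mem_Icc ht σ e).1

lemma abs_log_bondFactor_le {t : ℝ} (ht : 0 ≤ t) (ht1 : t < 1) (σ : V → Fin 2) (e : V × V) :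
    |log (bondFactor t σ e)| ≤ -log (1 - t) := by
  obtain ⟨lower, upper⟩ := bondFactor_mem_Icc ht σ e
  have hpos : 0 < 1 - t := sub_pos.2 ht1
  rw [abs_le, neg_neg, ← log_inv]
  refine ⟨log_le_log hpos lower, log_le_log (hpos.trans_le lower) (upper.trans ?_)⟩
  rw [← one_div, le_div_iff₀ hpos]
  nlinarith [sq_nonneg t]

variable [Fintype V]

/-- The normalised overlap of two configurations. As the configuration `0` consists of the spins
`+1` only, `overlap σ 0` is the magnetisation of `σ`. -/
noncomputable def overlap (σ τ : V → Fin 2) : ℝ :=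
  𝔼 i, spinSign (σ i) * spinSign (τ i)

lemma expect_bondSpin_mul_bondSpin (σ τ : V → Fin 2) :
    𝔼 e, bondSpin σ e * bondSpin τ e = overlap σ τ ^ 2 := by
  rw [sq, overlap, ← expect_prod_mul]
  exact expect_congr rfl fun e _ ↦ mul_mul_mul_comm _ _ _ _

lemma expect_bondSpin (σ : V → Fin 2) : 𝔼 e, bondSpin σ e = overlap σ 0 ^ 2 := by
  simp [← expect_bondSpin_mul_bondSpin, bondSpin, spinSign]

lemma card_mul_overlap (σ τ : V → Fin 2) :
    Fintype.card V * overlap σ τ = ∑ i, spinSign (σ i) * spinSign (τ i) := by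
  rw [overlap, ← nsmul_eq_mul, Fintype.card_smul_expect]

lemma exists_card_mul_overlap_eq_intCast (σ τ : V → Fin 2) :
    ∃ v ∈ Icc (-(Fintype.card V : ℤ)) (Fintype.card V),
      Fintype.card V * overlap σ τ = (v : ℝ) := by
  refine ⟨∑ i, if σ i = τ i then 1 else -1, mem_Icc.2 (abs_le.1 ?_), ?_⟩
  · refine (abs_sum_le_sum_abs _ _).trans_eq ?_
    have abs_sign (i : V) : |if σ i = τ i then (1 : ℤ) else -1| = 1 := by split_ifs <;> simp
    simp [abs_sign]
  · simp [card_mul_overlap, spinSign_mul_spinSign]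

lemma expect_prod_pi {B : Type*} [Fintype B] [DecidableEq V] (f : V → B → ℝ) :
    𝔼 σ : V → B, ∏ i, f i (σ i) = ∏ i, 𝔼 b, f i b := by
  simp only [Fintype.expect_eq_sum_div_card, prod_div_distrib, prod_univ_sum, prod_const,
    card_univ, Fintype.card_fun, Fintype.piFinset_univ, Nat.cast_pow]

lemma expect_exp_overlap_le [DecidableEq V] (θ : ℝ) (τ : V → Fin 2) :
    𝔼 σ, exp (θ * (Fintype.card V * overlap σ τ)) ≤ exp (Fintype.card V * θ ^ 2 / 2) := by
  have single_site (b : Fin 2) : 𝔼 a, exp (θ * (spinSign a * spinSign b)) = cosh θ := by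
    fin_cases b <;>
      simp [Fintype.expect_eq_sum_div_card, spinSign, cosh_eq, add_comm]
  simp only [card_mul_overlap, mul_sum, exp_sum,
    expect_prod_pi fun i a ↦ exp (θ * (spinSign a * spinSign (τ i))), single_site, prod_const,
    card_univ, mul_div_assoc, exp_nat_mul]
  gcongr
  exact cosh_le_exp_half_sq θ

variable [Nonempty V]

lemma expect_bondFactor (t : ℝ) (σ : V → Fin 2) :
    𝔼 e, bondFactor t σ e = 1 - t * overlap σ 0 ^ 2 := by
  simp only [bondFactor, expect_sub_distrib, Fintype.expect_const, ← mul_expect, expect_bondSpin]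

lemma expect_bondFactor_mem_Ioc {t : ℝ} (ht : 0 ≤ t) (ht1 : t < 1) (σ : V → Fin 2) :
    𝔼 e, bondFactor t σ e ∈ Set.Ioc 0 1 := by
  refine ⟨expect_pos (fun e _ ↦ bondFactor_pos ht ht1 σ e) univ_nonempty, ?_⟩
  rw [expect_bondFactor]
  exact sub_le_self _ (by positivity)

lemma expect_replica_bondFactor (t : ℝ) (σ τ : V → Fin 2) :
    𝔼 e, replica (bondFactor t) (σ, τ) e =
      1 - t * overlap σ 0 ^ 2 - t * overlap τ 0 ^ 2 + t ^ 2 * overlap σ τ ^ 2 := by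
  have expand (e : V × V) : replica (bondFactor t) (σ, τ) e =
      1 - t * bondSpin σ e - t * bondSpin τ e + t ^ 2 * (bondSpin σ e * bondSpin τ e) := by
    simp only [replica, bondFactor]
    ring
  simp only [expand, expect_add_distrib, expect_sub_distrib, Fintype.expect_const, ← mul_expect,
    expect_bondSpin, expect_bondSpin_mul_bondSpin]

/-- As `overlap σ τ` takes at most `2 * card V + 1` values `θ`, the Gaussian weight is dominated by
the sum over these `θ` of the exponential tilts tangent to it at `θ`. -/
lemma expect_exp_sq_overlap_le [DecidableEq V] (τ : V → Fin 2) :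
    𝔼 σ, exp (Fintype.card V / 2 * overlap σ τ ^ 2) ≤ 2 * Fintype.card V + 1 := by
  set n : ℝ := (Fintype.card V : ℝ) with hn
  have hn0 : n ≠ 0 := by positivity
  let tilt (θ : ℝ) (σ : V → Fin 2) : ℝ := exp (θ * (n * overlap σ τ)) / exp (n * θ ^ 2 / 2)
  let values : Finset ℤ := Icc (-(Fintype.card V : ℤ)) (Fintype.card V)
  have le_sum_tilt (σ : V → Fin 2) :
      exp (n / 2 * overlap σ τ ^ 2) ≤ ∑ v ∈ values, tilt (v / n) σ := by
    obtain ⟨v, hv, hσ⟩ := exists_card_mul_overlap_eq_intCast σ τ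
    have tangent : exp (n / 2 * overlap σ τ ^ 2) = tilt (v / n) σ := by
      rw [← hσ, mul_div_cancel_left₀ _ hn0]
      simp only [tilt, ← exp_sub]
      ring_nf
    rw [tangent]
    exact single_le_sum (f := fun v : ℤ ↦ tilt (v / n) σ) (fun _ _ ↦ by positivity) hv
  have expect_tilt_le (θ : ℝ) : 𝔼 σ, tilt θ σ ≤ 1 := by
    rw [← expect_div]
    exact div_le_one_of_le₀ (expect_exp_overlap_le θ τ) (exp_pos _).le
  calc 𝔼 σ, exp (n / 2 * overlap σ τ ^ 2)
      ≤ 𝔼 σ, ∑ v ∈ values, tilt (v / n) σ := expect_le_expect fun σ _ ↦ le_sum_tilt σ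
    _ = ∑ v ∈ values, 𝔼 σ, tilt (v / n) σ := expect_sum_comm _ _ _
    _ ≤ ∑ _v ∈ values, (1 : ℝ) := sum_le_sum fun _ _ ↦ expect_tilt_le _
    _ = 2 * n + 1 := by
        rw [sum_const, Int.card_Icc, nsmul_one, hn]
        have : ((Fintype.card V : ℤ) + 1 - -(Fintype.card V : ℤ)).toNat =
          2 * Fintype.card V + 1 := by omega
        rw [this]
        push_cast
        ring

variable [DecidableEq V] {t : ℝ}

lemma expect_exp_mul_expect_bondFactor_pow_le (ht : 0 ≤ t) (ht1 : t < 1) (k : ℕ) :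
    𝔼 σ : V → Fin 2, exp (Fintype.card V / 2 * overlap σ 0 ^ 2) * (𝔼 e, bondFactor t σ e) ^ k ≤
      2 * Fintype.card V + 1 := by
  refine le_trans (expect_le_expect fun σ _ ↦ ?_) (expect_exp_sq_overlap_le 0)
  obtain ⟨hpos, hle⟩ := expect_bondFactor_mem_Ioc ht ht1 σ
  exact mul_le_of_le_one_right (exp_pos _).le (pow_le_one₀ hpos.le hle)

lemma expect_exp_mul_expect_replica_pow_le (ht : 0 ≤ t) (ht1 : t < 1) {lam : ℝ} {k : ℕ}
    (hk : lam + 2 * k * t ^ 2 / Fintype.card V ≤ 1) :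
    𝔼 p : (V → Fin 2) × (V → Fin 2), exp (Fintype.card V * lam / 2 * overlap p.1 p.2 ^ 2) *
      (𝔼 e, replica (bondFactor t) p e) ^ k ≤ 2 * Fintype.card V + 1 := by
  set n : ℝ := (Fintype.card V : ℝ)
  have hn : 0 < n := by positivity
  have exponent_le : n * lam / 2 + k * t ^ 2 ≤ n / 2 := by
    have := mul_le_mul_of_nonneg_left hk (by positivity : 0 ≤ n / 2)
    field_simp at this
    linarith
  have term_le (σ τ : V → Fin 2) : exp (n * lam / 2 * overlap σ τ ^ 2) *
      (𝔼 e, replica (bondFactor t) (σ, τ) e) ^ k ≤ exp (n / 2 * overlap σ τ ^ 2) := by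
    have nonneg : 0 ≤ 𝔼 e, replica (bondFactor t) (σ, τ) e := expect_nonneg fun e _ ↦
      (replica_pos (bondFactor_pos ht ht1) (σ, τ) e).le
    have le_exp : 𝔼 e, replica (bondFactor t) (σ, τ) e ≤ exp (t ^ 2 * overlap σ τ ^ 2) := by
      rw [expect_replica_bondFactor]
      nlinarith [add_one_le_exp (t ^ 2 * overlap σ τ ^ 2),
        mul_nonneg ht (sq_nonneg (overlap σ 0)), mul_nonneg ht (sq_nonneg (overlap τ 0))]
    calc _ ≤ exp (n * lam / 2 * overlap σ τ ^ 2) * exp (t ^ 2 * overlap σ τ ^ 2) ^ k := by gcongr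
      _ = exp ((n * lam / 2 + k * t ^ 2) * overlap σ τ ^ 2) := by
        rw [← exp_nat_mul, ← exp_add]
        ring_nf
      _ ≤ exp (n / 2 * overlap σ τ ^ 2) := by gcongr
  rw [← univ_product_univ, expect_product, expect_comm]
  refine expect_le univ_nonempty fun τ _ ↦ ?_
  exact (expect_le_expect fun σ _ ↦ term_le σ τ).trans (expect_exp_sq_overlap_le τ)

lemma meanLogPartition_bondFactor_nonpos (ht : 0 ≤ t) (ht1 : t < 1) (k : ℕ) :
    meanLogPartition (bondFactor (V := V) t) k ≤ 0 := by
  have hφ := bondFactor_pos (V := V) ht ht1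
  have annealed_mem (σ : V → Fin 2) : exp 0 * (𝔼 e, bondFactor t σ e) ^ k ∈ Set.Icc 0 1 := by
    obtain ⟨hpos, hle⟩ := expect_bondFactor_mem_Ioc ht ht1 σ
    rw [exp_zero, one_mul]
    exact ⟨by positivity, pow_le_one₀ hpos.le hle⟩
  have log_annealed_nonpos : log (𝔼 σ : V → Fin 2, exp 0 * (𝔼 e, bondFactor t σ e) ^ k) ≤ 0 :=
    log_nonpos (expect_nonneg fun σ _ ↦ (annealed_mem σ).1)
      (expect_le univ_nonempty fun σ _ ↦ (annealed_mem σ).2)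
  have first_moment := multinomialMean_gibbsMean_le hφ k fun _ ↦ 0
  simp only [gibbsMean_const hφ, multinomialMean_const] at first_moment
  linarith

lemma multinomialMean_expect_gibbsMean_bondSpin_le (ht : 0 ≤ t) (ht1 : t < 1) (k : ℕ) :
    multinomialMean k (fun J ↦ 𝔼 e : V × V, gibbsMean (bondFactor t) J (bondSpin · e)) ≤
      2 / Fintype.card V *
        (log (2 * Fintype.card V + 1) - meanLogPartition (bondFactor (V := V) t) k) := by
  have hφ := bondFactor_pos (V := V) ht ht1
  set n : ℝ := (Fintype.card V : ℝ)
  have hn : 0 < n := by positivity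
  have bound := (multinomialMean_gibbsMean_le hφ k fun σ ↦ n / 2 * overlap σ 0 ^ 2).trans
    (sub_le_sub_right (log_le_log ?_ (expect_exp_mul_expect_bondFactor_pow_le ht ht1 k)) _)
  · simp only [gibbsMean_const_mul, multinomialMean_const_mul, ← expect_bondSpin,
      gibbsMean_expect] at bound
    calc _ = 2 / n * (n / 2 * _) := by field_simp
      _ ≤ _ := by gcongr
  · exact expect_pos (fun σ _ ↦ mul_pos (exp_pos _)
      (pow_pos (expect_pos (fun e _ ↦ hφ σ e) univ_nonempty) k)) univ_nonempty

lemma multinomialMean_expect_sq_gibbsMean_bondSpin_le (ht : 0 ≤ t) (ht1 : t < 1) {lam : ℝ}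
    (hlam : 0 < lam) {k : ℕ} (hk : lam + 2 * k * t ^ 2 / Fintype.card V ≤ 1) :
    multinomialMean k (fun J ↦ 𝔼 e : V × V, gibbsMean (bondFactor t) J (bondSpin · e) ^ 2) ≤
      2 / (Fintype.card V * lam) *
        (log (2 * Fintype.card V + 1) - 2 * meanLogPartition (bondFactor (V := V) t) k) := by
  have hφ := replica_pos (bondFactor_pos (V := V) ht ht1)
  set n : ℝ := (Fintype.card V : ℝ)
  have hn : 0 < n := by positivity
  have bound :=
    (multinomialMean_gibbsMean_le hφ k fun p ↦ n * lam / 2 * overlap p.1 p.2 ^ 2).trans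
      (sub_le_sub_right (log_le_log ?_ (expect_exp_mul_expect_replica_pow_le ht ht1 hk)) _)
  · have replica_pair (J : V × V → ℕ) (e : V × V) : gibbsMean (replica (bondFactor t)) J
        (fun p ↦ bondSpin p.1 e * bondSpin p.2 e) =
          gibbsMean (bondFactor t) J (bondSpin · e) ^ 2 := by
      rw [sq, ← gibbsMean_replica]
    simp only [gibbsMean_const_mul, multinomialMean_const_mul, ← expect_bondSpin_mul_bondSpin,
      gibbsMean_expect, replica_pair, meanLogPartition_replica] at bound
    calc _ = 2 / (n * lam) * (n * lam / 2 * _) := by field_simp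
      _ ≤ _ := by gcongr
  · exact expect_pos (fun p _ ↦ mul_pos (exp_pos _)
      (pow_pos (expect_pos (fun e _ ↦ hφ p e) univ_nonempty) k)) univ_nonempty

lemma neg_sub_sq_div_le_log_one_sub (ht : 0 ≤ t) (ht1 : t < 1) {x : ℝ} (hx : |x| ≤ 1) :
    -(t * x) - x ^ 2 / (1 - t) ≤ log (1 - t * x) := by
  have hy : 1 - t ≤ 1 - t * x := by nlinarith [le_of_abs_le hx]
  have h1t : 0 < 1 - t := sub_pos.2 ht1
  have hpos : 0 < 1 - t * x := h1t.trans_le hy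
  have hsq : (t * x) ^ 2 ≤ x ^ 2 := by
    rw [mul_pow]
    exact mul_le_of_le_one_left (sq_nonneg x) (pow_le_one₀ ht ht1.le)
  calc -(t * x) - x ^ 2 / (1 - t) ≤ -(t * x) - (t * x) ^ 2 / (1 - t * x) :=
        sub_le_sub_left (div_le_div₀ (sq_nonneg x) hsq h1t hy) _
    _ = 1 - (1 - t * x)⁻¹ := by
        field_simp
        ring
    _ ≤ log (1 - t * x) := one_sub_inv_le_log_of_pos hpos

lemma meanLogPartition_bondFactor_succ_ge (ht : 0 ≤ t) (ht1 : t < 1) (k : ℕ) :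
    meanLogPartition (bondFactor (V := V) t) k -
        t * multinomialMean k
          (fun J ↦ 𝔼 e : V × V, gibbsMean (bondFactor t) J (bondSpin · e)) -
        (1 - t)⁻¹ * multinomialMean k
          (fun J ↦ 𝔼 e : V × V, gibbsMean (bondFactor t) J (bondSpin · e) ^ 2) ≤
      meanLogPartition (bondFactor (V := V) t) (k + 1) := by
  have hφ := bondFactor_pos (V := V) ht ht1
  have gibbsMean_factor (J : V × V → ℕ) (e : V × V) : gibbsMean (bondFactor t) J
      (bondFactor t · e) = 1 - t * gibbsMean (bondFactor t) J (bondSpin · e) := by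
    simp only [bondFactor, sub_eq_add_neg, ← neg_mul]
    rw [gibbsMean_add, gibbsMean_const_mul, gibbsMean_const]
    simpa only [bondFactor, sub_eq_add_neg, ← neg_mul] using hφ
  rw [meanLogPartition_succ hφ, sub_sub, ← multinomialMean_const_mul, ← multinomialMean_const_mul,
    ← multinomialMean_add, sub_eq_add_neg, ← neg_one_mul, ← multinomialMean_const_mul]
  gcongr
  refine multinomialMean_mono k fun J ↦ ?_
  rw [mul_expect, mul_expect, ← expect_add_distrib, mul_expect]
  refine expect_le_expect fun e _ ↦ ?_
  rw [gibbsMean_factor]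
  refine le_trans (le_of_eq ?_) (neg_sub_sq_div_le_log_one_sub ht ht1
    (abs_gibbsMean_le hφ J fun σ ↦ (abs_bondSpin σ e).le))
  ring

lemma log_sub_meanLogPartition_succ_le (ht : 0 ≤ t) (ht1 : t < 1) {lam : ℝ} (hlam : 0 < lam)
    {k : ℕ} (hk : lam + 2 * k * t ^ 2 / Fintype.card V ≤ 1) :
    log (2 * Fintype.card V + 1) - meanLogPartition (bondFactor (V := V) t) (k + 1) ≤
      (1 + (2 * t + 4 / ((1 - t) * lam)) / Fintype.card V) *
        (log (2 * Fintype.card V + 1) - meanLogPartition (bondFactor (V := V) t) k) := by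
  have step := meanLogPartition_bondFactor_succ_ge (V := V) ht ht1 k
  have one_replica := mul_le_mul_of_nonneg_left
    (multinomialMean_expect_gibbsMean_bondSpin_le (V := V) ht ht1 k) ht
  have h1t : 0 < 1 - t := sub_pos.2 ht1
  have two_replica := mul_le_mul_of_nonneg_left
    (multinomialMean_expect_sq_gibbsMean_bondSpin_le ht ht1 hlam hk) (inv_nonneg.2 h1t.le)
  set n : ℝ := (Fintype.card V : ℝ)
  have hn : 0 < n := by positivity
  set L := meanLogPartition (bondFactor (V := V) t) k
  have double_gap : (1 - t)⁻¹ * (2 / (n * lam) * (log (2 * n + 1) - 2 * L)) ≤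
      (1 - t)⁻¹ * (2 / (n * lam) * (2 * (log (2 * n + 1) - L))) := by
    gcongr
    linarith [log_nonneg (by linarith : 1 ≤ 2 * n + 1)]
  have collect : (1 + (2 * t + 4 / ((1 - t) * lam)) / n) * (log (2 * n + 1) - L) =
      log (2 * n + 1) - L + t * (2 / n * (log (2 * n + 1) - L)) +
        (1 - t)⁻¹ * (2 / (n * lam) * (2 * (log (2 * n + 1) - L))) := by
    field_simp
    ring
  linarith

lemma log_sub_meanLogPartition_le (ht : 0 ≤ t) (ht1 : t < 1) {lam : ℝ} (hlam : 0 < lam)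
    {k : ℕ} (hk : lam + 2 * k * t ^ 2 / Fintype.card V ≤ 1) :
    log (2 * Fintype.card V + 1) - meanLogPartition (bondFactor (V := V) t) k ≤
      log (2 * Fintype.card V + 1) *
        exp ((2 * t + 4 / ((1 - t) * lam)) * (k / Fintype.card V)) := by
  set n : ℝ := (Fintype.card V : ℝ)
  set K := 2 * t + 4 / ((1 - t) * lam)
  have hK : 0 ≤ K := add_nonneg (by positivity) (div_nonneg (by norm_num)
    (mul_nonneg (sub_nonneg.2 ht1.le) hlam.le))
  have hKn : 0 ≤ 1 + K / n := add_nonneg zero_le_one (div_nonneg hK (Nat.cast_nonneg _))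
  have grow := le_geom (u := fun l ↦ log (2 * n + 1) - meanLogPartition (bondFactor (V := V) t) l)
    hKn k fun l hl ↦ by
      refine log_sub_meanLogPartition_succ_le ht ht1 hlam (le_trans ?_ hk)
      gcongr
  rw [meanLogPartition_zero, sub_zero] at grow
  refine (grow.trans_eq (mul_comm _ _)).trans (mul_le_mul_of_nonneg_left ?_ (log_nonneg ?_))
  · calc (1 + K / n) ^ k ≤ exp (K / n) ^ k :=
          pow_le_pow_left₀ hKn (by linarith [add_one_le_exp (K / n)]) k
      _ = exp (K * (k / n)) := by
          rw [← exp_nat_mul]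
          ring_nf
  · linarith [show 0 ≤ n by positivity]

end Ising

section Potts

open Finset Real
open scoped BigOperators

lemma one_add_exp_neg_mul_tanh_half (β : ℝ) :
    (1 + exp (-β)) * tanh (β / 2) = 1 - exp (-β) := by
  have hβ : exp (-β) = exp (-(β / 2)) * exp (-(β / 2)) := by
    rw [← exp_add]
    ring_nf
  have hinv : exp (β / 2) * exp (-(β / 2)) = 1 := by rw [← exp_add, add_neg_cancel, exp_zero]
  rw [tanh_eq, hβ]
  field_simp
  linear_combination (2 * exp (-(β / 2))) * hinv

lemma tanh_half_nonneg {β : ℝ} (hβ : 0 ≤ β) : 0 ≤ tanh (β / 2) := by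
  rw [tanh_eq_sinh_div_cosh]
  exact div_nonneg (sinh_nonneg_iff.2 (by positivity)) (cosh_pos _).le

lemma exp_neg_mul_delta_eq (β : ℝ) {N : ℕ} (σ : Fin N → Fin 2) (e : Fin N × Fin N) :
    exp (-(β * if σ e.1 = σ e.2 then 1 else 0)) =
      (1 + exp (-β)) / 2 * bondFactor (tanh (β / 2)) σ e := by
  have h := one_add_exp_neg_mul_tanh_half β
  rw [bondFactor, bondSpin, spinSign_mul_spinSign]
  split_ifs
  · rw [mul_one]
    linear_combination h / 2
  · rw [mul_zero, neg_zero, exp_zero]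
    linear_combination -h / 2

lemma potts_Z_curry_eq (β : ℝ) {N : ℕ} (J : Fin N × Fin N → ℕ) :
    potts.Z 2 N (fun i j ↦ β * (J (i, j) : ℝ)) = 2 ^ N * ((1 + exp (-β)) / 2) ^ (∑ e, J e) *
      gibbsPartition (bondFactor (tanh (β / 2))) J := by
  have boltzmann (σ : Fin N → Fin 2) : exp (-potts.H 2 N σ fun i j ↦ β * (J (i, j) : ℝ)) =
      ((1 + exp (-β)) / 2) ^ (∑ e, J e) * gibbsWeight (bondFactor (tanh (β / 2))) J σ := by
    rw [gibbsWeight, ← prod_pow_eq_pow_sum, ← prod_mul_distrib, potts.H, ← Fintype.sum_prod_type',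
      ← sum_neg_distrib, exp_sum]
    refine prod_congr rfl fun e _ ↦ ?_
    rw [← mul_pow, ← exp_neg_mul_delta_eq, ← exp_nat_mul]
    ring_nf
  simp only [potts.Z, boltzmann, ← mul_sum, gibbsPartition, Fintype.expect_eq_sum_div_card,
    Fintype.card_fun, Fintype.card_fin, Nat.cast_pow, Nat.cast_ofNat]
  field_simp

lemma log_potts_Z_curry_eq {β : ℝ} (hβ : 0 ≤ β) {N : ℕ} (J : Fin N × Fin N → ℕ) :
    log (potts.Z 2 N (fun i j ↦ β * (J (i, j) : ℝ))) =
      N * log 2 + (∑ e, J e : ℕ) * log ((1 + exp (-β)) / 2) +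
        log (gibbsPartition (bondFactor (tanh (β / 2))) J) := by
  have hpos := gibbsPartition_pos (bondFactor_pos (V := Fin N) (tanh_half_nonneg hβ)
    (tanh_lt_one _)) J
  rw [potts_Z_curry_eq, log_mul (by positivity) hpos.ne', log_mul (by positivity) (by positivity),
    log_pow, log_pow]

lemma mul_potts_p_eq_tsum (q N : ℕ) [NeZero N] (β c : ℝ) :
    N * potts.p q N β c = ∑' J : Fin N × Fin N → ℕ, (∏ e, poissonPMF (c / (2 * N)) (J e)) *
      log (potts.Z q N fun i j ↦ β * (J (i, j) : ℝ)) := by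
  rw [potts.p, potts.pmat, potts.E, ← (Equiv.curry (Fin N) (Fin N) ℕ).tsum_eq, ← tsum_mul_left]
  refine tsum_congr fun J ↦ ?_
  rw [Fintype.prod_prod_type]
  simp only [Equiv.curry_apply, Function.curry_apply]
  rw [mul_left_comm, ← mul_assoc (N : ℝ), mul_one_div_cancel (NeZero.ne _), one_mul]

variable {β c : ℝ} {N : ℕ} [NeZero N]

lemma hasSum_poissonPMF_mul_multinomialMean_log_Z (hβ : 0 ≤ β) (hc : 0 ≤ c) :
    HasSum (fun k ↦ poissonPMF (N * c / 2) k * multinomialMean k fun J : Fin N × Fin N → ℕ ↦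
      log (potts.Z 2 N fun i j ↦ β * (J (i, j) : ℝ))) (N * potts.p 2 N β c) := by
  have ht := tanh_half_nonneg hβ
  have ht1 := tanh_lt_one (β / 2)
  have hmean : (Fintype.card (Fin N × Fin N) : ℝ) * (c / (2 * N)) = N * c / 2 := by
    simp only [Fintype.card_prod, Fintype.card_fin, Nat.cast_mul]
    field_simp
  rw [mul_potts_p_eq_tsum, ← hmean]
  refine hasSum_poissonPMF_mul_multinomialMean (summable_prod_poissonPMF_mul (by positivity)
    (hasSum_poissonPMF_mul_affine _ (N * log 2)
      (|log ((1 + exp (-β)) / 2)| - log (1 - tanh (β / 2)))).summable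
    fun J ↦ ?_)
  have partition_bound := abs_log_gibbsPartition_le (bondFactor_pos ht ht1)
    (abs_log_bondFactor_le (V := Fin N) ht ht1) J
  rw [log_potts_Z_curry_eq hβ]
  refine (abs_add_three _ _ _).trans ?_
  rw [abs_mul, abs_mul, Nat.abs_cast, Nat.abs_cast, abs_of_nonneg (log_nonneg one_le_two)]
  linarith

lemma hasSum_poissonPMF_mul_meanLogPartition (hβ : 0 ≤ β) (hc : 0 ≤ c) :
    HasSum (fun k ↦ poissonPMF (N * c / 2) k *
        meanLogPartition (bondFactor (V := Fin N) (tanh (β / 2))) k)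
      (N * (potts.p 2 N β c - potts.annealed 2 β c)) := by
  have conditional_mean (k : ℕ) :
      (multinomialMean k fun J : Fin N × Fin N → ℕ ↦
        log (potts.Z 2 N fun i j ↦ β * (J (i, j) : ℝ))) =
      N * log 2 + k * log ((1 + exp (-β)) / 2) +
        meanLogPartition (bondFactor (V := Fin N) (tanh (β / 2))) k := by
    simp only [log_potts_Z_curry_eq hβ, multinomialMean_add, meanLogPartition,
      multinomialMean_comp_sum k fun m ↦ (m : ℝ) * log ((1 + exp (-β)) / 2), multinomialMean_const]
  have hquenched := hasSum_poissonPMF_mul_multinomialMean_log_Z (N := N) hβ hc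
  simp only [conditional_mean] at hquenched
  have h := hquenched.sub
    (hasSum_poissonPMF_mul_affine (N * c / 2) (N * log 2) (log ((1 + exp (-β)) / 2)))
  have hvalue : N * potts.p 2 N β c -
      (N * log 2 + log ((1 + exp (-β)) / 2) * (N * c / 2)) =
        N * (potts.p 2 N β c - potts.annealed 2 β c) := by
    rw [potts.annealed, Nat.cast_ofNat,
      show 1 - (1 - exp (-β)) / 2 = (1 + exp (-β)) / 2 by ring]
    ring
  rw [hvalue] at h
  exact h.congr_fun fun k ↦ by ring

lemma potts_p_le_annealed (hβ : 0 ≤ β) (hc : 0 ≤ c) : potts.p 2 N β c ≤ potts.annealed 2 β c := by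
  have hN : (0 : ℝ) < N := Nat.cast_pos.2 (NeZero.pos N)
  have h : N * (potts.p 2 N β c - potts.annealed 2 β c) ≤ 0 :=
    (hasSum_poissonPMF_mul_meanLogPartition hβ hc).nonpos fun k ↦
      mul_nonpos_of_nonneg_of_nonpos (poissonPMF_nonneg (by positivity) k)
        (meanLogPartition_bondFactor_nonpos (tanh_half_nonneg hβ) (tanh_lt_one _) k)
  exact sub_nonpos.1 (nonpos_of_mul_nonpos_right h hN)

lemma mul_annealed_sub_potts_p_le (hβ : 0 ≤ β) (hc : 0 < c) {ε : ℝ} (hε : 0 < ε) {k : ℕ}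
    (hk : ε + 2 * k * tanh (β / 2) ^ 2 / N ≤ 1) :
    N * (potts.annealed 2 β c - potts.p 2 N β c) ≤
      log (2 * N + 1) * exp ((2 * tanh (β / 2) + 4 / ((1 - tanh (β / 2)) * ε)) * (k / N)) +
        -log (1 - tanh (β / 2)) * (√(N * c / 2) + |N * c / 2 - k|) := by
  have ht := tanh_half_nonneg hβ
  have ht1 := tanh_lt_one (β / 2)
  have hN : (0 : ℝ) < N := Nat.cast_pos.2 (NeZero.pos N)
  have hlog : 0 ≤ log (2 * N + 1) := log_nonneg (by linarith)
  have gronwall := log_sub_meanLogPartition_le (V := Fin N) ht ht1 hε (k := k)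
  rw [Fintype.card_fin] at gronwall
  have fluctuation := neg_le_of_abs_le (abs_poisson_mean_sub_le (by positivity)
    (abs_meanLogPartition_sub_le (bondFactor_pos (V := Fin N) ht ht1)
      (abs_log_bondFactor_le ht ht1))
    (hasSum_poissonPMF_mul_meanLogPartition hβ hc.le) k)
  linarith [gronwall hk]

lemma mul_annealed_sub_potts_p_le_of_mul_tanh_sq_le_one (hβ : 0 ≤ β) (hc : 0 < c)
    (hKS : c * tanh (β / 2) ^ 2 ≤ 1) {ε : ℝ} (hε : 0 < ε) (hε1 : ε < 1) :
    N * (potts.annealed 2 β c - potts.p 2 N β c) ≤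
      log (2 * N + 1) * exp ((2 * tanh (β / 2) + 4 / ((1 - tanh (β / 2)) * ε)) * (c / 2)) +
        -log (1 - tanh (β / 2)) * (√(N * c / 2) + (ε * (N * c / 2) + 1)) := by
  have ht := tanh_half_nonneg hβ
  have h1t : 0 < 1 - tanh (β / 2) := sub_pos.2 (tanh_lt_one _)
  have hN : (0 : ℝ) < N := Nat.cast_pos.2 (NeZero.pos N)
  set t := tanh (β / 2)
  set μ : ℝ := N * c / 2
  have hμ0 : 0 < μ := by positivity
  have hεμ : 0 < ε * μ := mul_pos hε hμ0
  obtain ⟨k, hk, hk_lt⟩ : ∃ k : ℕ, (k : ℝ) ≤ (1 - ε) * μ ∧ (1 - ε) * μ < k + 1 :=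
    ⟨_, Nat.floor_le (mul_nonneg (sub_nonneg.2 hε1.le) hμ0.le), Nat.lt_floor_add_one _⟩
  have hkN : k / N ≤ (1 - ε) * (c / 2) := by
    rw [div_le_iff₀ hN]
    exact hk.trans_eq (by ring)
  have below_threshold : ε + 2 * k * t ^ 2 / N ≤ 1 := by
    calc ε + 2 * k * t ^ 2 / N = ε + 2 * t ^ 2 * (k / N) := by ring
      _ ≤ ε + 2 * t ^ 2 * ((1 - ε) * (c / 2)) := by gcongr
      _ = ε + (1 - ε) * (c * t ^ 2) := by ring
      _ ≤ 1 := by nlinarith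
  have hlog : 0 ≤ log (2 * N + 1) := log_nonneg (by linarith)
  have hlogt : 0 ≤ -log (1 - t) := neg_nonneg.2 (log_nonpos h1t.le (by linarith))
  have hrate : (k : ℝ) / N ≤ c / 2 :=
    hkN.trans (mul_le_of_le_one_left (by positivity) (by linarith))
  have distance : |μ - k| ≤ ε * μ + 1 := by
    rw [abs_of_nonneg (by linarith)]
    linarith
  refine (mul_annealed_sub_potts_p_le hβ hc hε below_threshold).trans ?_
  gcongr

lemma tendsto_log_sqrt_error_div (a b c ε : ℝ) :
    Tendsto (fun N : ℕ ↦ (log (2 * N + 1) * a + b * (√(N * c / 2) + (ε * (N * c / 2) + 1))) / N)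
      atTop (nhds (b * (ε * (c / 2)))) := by
  have log_div : Tendsto (fun N : ℕ ↦ log (2 * N + 1) / (N : ℝ)) atTop (nhds 0) := by
    have h := (tendsto_pow_log_div_mul_add_atTop (1 / 2) (-1 / 2) 1 (by norm_num)).comp
      (tendsto_atTop_add_const_right _ 1
        (tendsto_natCast_atTop_atTop.const_mul_atTop (two_pos : (0 : ℝ) < 2)))
    refine h.congr fun N ↦ ?_
    simp only [Function.comp_apply, pow_one]
    ring_nf
  have inv_sqrt : Tendsto (fun N : ℕ ↦ (√N)⁻¹) atTop (nhds 0) :=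
    (tendsto_sqrt_atTop.comp tendsto_natCast_atTop_atTop).inv_tendsto_atTop
  have inv_nat : Tendsto (fun N : ℕ ↦ (N : ℝ)⁻¹) atTop (nhds 0) :=
    tendsto_inv_atTop_nhds_zero_nat
  have h := (log_div.mul_const a).add
    (((inv_sqrt.const_mul √(c / 2)).add (inv_nat.const_add (ε * (c / 2)))).const_mul b)
  simp only [zero_mul, mul_zero, zero_add, add_zero] at h
  refine h.congr' ((eventually_gt_atTop 0).mono fun N hN ↦ ?_)
  have hN0 : (0 : ℝ) < N := Nat.cast_pos.2 hN
  have sqrt_div_eq : √(N * c / 2) / N = √(c / 2) * (√N)⁻¹ := by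
    rw [mul_div_assoc, sqrt_mul hN0.le, mul_div_right_comm, sqrt_div_self', one_div, mul_comm]
  rw [← sqrt_div_eq]
  field_simp

lemma tendsto_potts_p_of_mul_tanh_sq_le_one (hβ : 0 ≤ β) (hc : 0 < c)
    (hKS : c * tanh (β / 2) ^ 2 ≤ 1) :
    Tendsto (fun N ↦ potts.p 2 N β c) atTop (nhds (potts.annealed 2 β c)) := by
  refine tendsto_order.2 ⟨fun a ha ↦ ?_, fun a ha ↦ ?_⟩
  · have small_error : Tendsto (fun ε ↦ -log (1 - tanh (β / 2)) * (ε * (c / 2)))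
        (nhdsWithin 0 (Set.Ioi 0)) (nhds 0) :=
      (Continuous.tendsto' (by fun_prop) _ _ (by simp)).mono_left nhdsWithin_le_nhds
    obtain ⟨ε, hlt, hε, hε1⟩ := ((small_error.eventually_lt_const (sub_pos.2 ha)).and
      (Ioo_mem_nhdsGT one_pos)).exists
    filter_upwards [(tendsto_log_sqrt_error_div _ _ c ε).eventually_lt_const hlt,
      eventually_gt_atTop 0] with N hN hN0
    have : NeZero N := ⟨hN0.ne'⟩
    rw [div_lt_iff₀ (Nat.cast_pos.2 hN0)] at hN
    have h := (mul_annealed_sub_potts_p_le_of_mul_tanh_sq_le_one hβ hc hKS hε hε1).trans_lt hN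
    nlinarith [(Nat.cast_pos.2 hN0 : (0 : ℝ) < N)]
  · filter_upwards [eventually_gt_atTop 0] with N hN0
    have : NeZero N := ⟨hN0.ne'⟩
    exact (potts_p_le_annealed hβ hc.le).trans_lt ha

lemma mul_tanh_sq_le_one_of_le_one (β : ℝ) (hc : c ≤ 1) : c * tanh (β / 2) ^ 2 ≤ 1 := by
  nlinarith [tanh_sq_lt_one (β / 2), sq_nonneg (tanh (β / 2))]

lemma mul_tanh_sq_le_one_of_one_lt (hβ : 0 ≤ β) (hc : 1 < c)
    (h : β ≤ -log (1 - 2 / (1 + √c))) : c * tanh (β / 2) ^ 2 ≤ 1 := by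
  have hs : 1 < √c := lt_sqrt_of_sq_lt (by simpa using hc)
  have hpos : 0 < 1 - 2 / (1 + √c) := by
    rw [sub_pos, div_lt_one (by positivity)]
    linarith
  have hexp : 1 - 2 / (1 + √c) ≤ exp (-β) := (log_le_iff_le_exp hpos).1 (by linarith)
  have hmul : √c * (1 - exp (-β)) ≤ 1 + exp (-β) := by
    have := mul_le_mul_of_nonneg_right hexp (by positivity : 0 ≤ 1 + √c)
    rw [sub_mul, div_mul_cancel₀ _ (by positivity)] at this
    linarith
  have hle : √c * tanh (β / 2) ≤ 1 := by
    rw [← one_add_exp_neg_mul_tanh_half, mul_left_comm] at hmul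
    exact le_of_mul_le_mul_left (hmul.trans_eq (mul_one _).symm) (by positivity)
  calc c * tanh (β / 2) ^ 2 = (√c * tanh (β / 2)) ^ 2 := by
        rw [mul_pow, sq_sqrt (by linarith)]
    _ ≤ 1 := pow_le_one₀ (mul_nonneg (sqrt_nonneg c) (tanh_half_nonneg hβ)) hle

end Potts

/-- for `q = 2`, if `c ≤ 1`, or `c > 1` and
`0 ≤ β ≤ -ln(1 - 2/(1+√c))`, then the quenched pressure equals the annealed
pressure in the thermodynamic limit. -/
theorem statement12 (β c : ℝ) (hβ : 0 ≤ β) (hc : 0 < c)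
    (h : c ≤ 1 ∨ (1 < c ∧ β ≤ -Real.log (1 - 2 / (1 + Real.sqrt c)))) :
    Filter.Tendsto (fun N => potts.p 2 N β c) Filter.atTop
      (nhds (potts.annealed 2 β c)) := by
  have kesten_stigum : c * Real.tanh (β / 2) ^ 2 ≤ 1 := by
    rcases h with hc1 | ⟨hc1, hβc⟩
    · exact mul_tanh_sq_le_one_of_le_one β hc1
    · exact mul_tanh_sq_le_one_of_one_lt hβ hc1 hβc
  exact tendsto_potts_p_of_mul_tanh_sq_le_one hβ hc kesten_stigum
end
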